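/- Let λ > 1, let α be Diophantine, and let θ ∈ ℝ satisfy δ(α,θ) < ln λ. Let {φ_s}_{s≥1} be an orthonormal basis of ℓ²(ℤ) consisting of eigenfunctions of the almost Mathieu operator H_{λ,α,θ}. Fix K > 0 and for each s choose any m̃_s ∈ ℤ with |φ_s(m̃_s)| ≥ (1/K)·max_{k∈ℤ}|φ_s(k)|. Then limsup_{L→∞} #{s : |m̃_s| ≤ L}/(2L+1) ≤ 1 + δ(α,θ)/(2 ln λ) and liminf_{L→∞} #{s : |m̃_s| ≤ L}/(2L+1) ≥ 1 − δ(α,θ)/ln λ. -/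

import Mathlib

noncomputable section

open Filter Real

def distToInt (x : ℝ) : ℝ := |x - round x|

def IsDiophantine (α : ℝ) : Prop :=
  ∃ κ τ : ℝ, 0 < κ ∧ 0 < τ ∧ ∀ k : ℤ, k ≠ 0 → τ / |(k : ℝ)| ^ κ ≤ distToInt (k * α)

def deltaPhase (α θ : ℝ) : ℝ :=
  limsup (fun n : ℤ => -Real.log (distToInt (2 * θ + n * α)) / |(n : ℝ)|) cofinite

def amoPot (lam α θ : ℝ) : ℤ → ℝ := fun n => 2 * lam * Real.cos (2 * Real.pi * (θ + n * α))

def IsEigenfunction (g : ℤ → ℝ) (E : ℝ) (φ : ℤ → ℝ) : Prop :=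
  ∀ n : ℤ, φ (n + 1) + φ (n - 1) + g n * φ n = E * φ n

def deltaPot (g : ℤ → ℝ) : ℝ :=
  limsup (fun n : ℤ => -Real.log (⨆ m : ℤ, |g (n - m) - g m|) / |(n : ℝ)|) cofinite

def matNorm (M : Matrix (Fin 2) (Fin 2) ℝ) : ℝ := ⨆ p : Fin 2 × Fin 2, |M p.1 p.2|

def transfer (g : ℤ → ℝ) (E : ℝ) : ℕ → ℤ → Matrix (Fin 2) (Fin 2) ℝ
  | 0, _ => 1
  | n + 1, k => !![E - g (k + n), -1; 1, 0] * transfer g E n k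

def LyapSup (g : ℤ → ℝ) (E : ℝ) : ℝ :=
  limsup (fun n : ℕ => ⨆ k : ℤ, Real.log (matNorm (transfer g E n k)) / n) atTop

def HasSULE (g : ℤ → ℝ) : Prop :=
  ∃ (Φ : HilbertBasis ℕ ℝ (lp (fun _ : ℤ => ℝ) 2)) (ns : ℕ → ℤ) (γ : ℝ),
    0 < γ ∧
    (∀ s : ℕ, ∃ E : ℝ, IsEigenfunction g E (fun n => Φ s n)) ∧
    ∀ ε : ℝ, 0 < ε → ∃ C : ℝ,
      ∀ (s : ℕ) (n : ℤ),
        |Φ s n| ≤ C * Real.exp (ε * |(ns s : ℝ)|) * Real.exp (-γ * |(n : ℝ) - (ns s : ℝ)|)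

/-! Part 1 -/
def cont (v : ℤ → ℝ) (E : ℝ) : ℕ → ℤ → ℝ
  | 0, _ => 1
  | 1, x => E - v x
  | (k + 2), x => (E - v (x + k + 1)) * cont v E (k + 1) x - cont v E k x

lemma cont_ss (v : ℤ → ℝ) (E : ℝ) (k : ℕ) (x : ℤ) :
    cont v E (k + 2) x = (E - v (x + k + 1)) * cont v E (k + 1) x - cont v E k x := rfl

lemma cont_succ_left (v : ℤ → ℝ) (E : ℝ) (k : ℕ) : ∀ x : ℤ,
    cont v E (k + 2) x = (E - v x) * cont v E (k + 1) (x + 1) - cont v E k (x + 2) := by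
  induction k using Nat.twoStepInduction with
  | zero => intro x; simp [cont]; ring
  | one => intro x; simp [cont]; ring_nf
  | more k h1 h2 =>
    intro x
    rw [cont_ss v E (k+2), show k + 2 + 1 = (k + 1) + 2 from rfl, h2 x, h1 x, cont_ss v E (k+1) (x+1), cont_ss v E k (x + 2)]
    push_cast
    rw [show x + 1 + ((k:ℤ) + 1) + 1 = x + (k + 1 + 1) + 1 by ring,
      show x + 2 + (k:ℤ) + 1 = x + (k + 1 + 1) + 1 by ring]
    ring

lemma cont_shift (v : ℤ → ℝ) (E : ℝ) (k : ℕ) (x y : ℤ) :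
    cont v E k (x + y) = cont (fun n => v (x + n)) E k y := by
  induction k using Nat.twoStepInduction with
  | zero => simp [cont]
  | one => simp [cont]
  | more k h1 h2 => rw [cont, cont, h1, h2]; simp only [add_assoc]

lemma cont_reverse (v : ℤ → ℝ) (E : ℝ) (k : ℕ) : ∀ x : ℤ,
    cont (fun n => v (-n)) E k x = cont v E k (-x - k + 1) := by
  induction k using Nat.twoStepInduction with
  | zero => intro x; simp [cont]
  | one => intro x; simp [cont]
  | more k h1 h2 =>
    intro x
    rw [cont, cont_succ_left, h1, h2]
    push_cast
    rw [show -(x + (k:ℤ) + 1) = -x - (k + 2) + 1 by ring,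
      show -x - (k + 2 : ℤ) + 1 + 1 = -x - (k + 1) + 1 by ring,
      show -x - (k + 2 : ℤ) + 1 + 2 = -x - (k) + 1 by ring]

lemma cont_mul (v : ℤ → ℝ) (E : ℝ) (j k : ℕ) : ∀ x : ℤ,
    cont v E (j + k + 2) x = cont v E (j + 1) x * cont v E (k + 1) (x + j + 1)
      - cont v E j x * cont v E k (x + j + 2) := by
  induction k using Nat.twoStepInduction with
  | zero => intro x; simp [cont]; ring
  | one =>
    intro x
    rw [cont_ss v E (j+1), show j + 1 + 1 = j + 2 from rfl, cont_ss v E j]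
    simp [cont]
    rw [show x + j + 1 + 1 = x + j + 2 by ring, show x + (j + 1:ℤ) + 1 = x + j + 2 by ring]
    ring
  | more k h1 h2 =>
    intro x
    rw [show j + (k + 2) + 2 = (j + k + 2) + 2 by ring, cont,
      show j + k + 2 + 1 = j + (k + 1) + 2 by ring, h2, h1, show k + 2 + 1 = (k+1)+2 by ring,
      cont_ss v E (k + 1) (x + j + 1), cont_ss v E k (x + j + 2)]
    push_cast
    rw [show x + (j:ℤ) + 1 + (k + 1) + 1 = x + (j + k + 2) + 1 by ring,
      show x + (j:ℤ) + 2 + k + 1 = x + (j + k + 2) + 1 by ring]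
    ring

lemma eig_step {v : ℤ → ℝ} {E : ℝ} {φ : ℤ → ℝ} (h : IsEigenfunction v E φ) (n : ℤ) :
    (E - v n) * φ n = φ (n + 1) + φ (n - 1) := by
  have := h n; linarith

lemma green0 {v : ℤ → ℝ} {E : ℝ} {φ : ℤ → ℝ} (h : IsEigenfunction v E φ) (x : ℤ) (i : ℕ) :
    φ (x + i) * cont v E (i + 1) x = φ (x - 1) + cont v E i x * φ (x + i + 1) := by
  induction i with
  | zero => simp [cont]; have := eig_step h x; linarith
  | succ i ih =>
    rw [show i + 1 + 1 = i + 2 from rfl, cont]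
    have := eig_step h (x + i + 1)
    push_cast
    rw [show x + (i + 1:ℤ) = x + i + 1 by ring]
    rw [show x + (i:ℤ) + 1 - 1 = x + i by ring] at this
    linear_combination cont v E (i + 1) x * this + ih

lemma green {v : ℤ → ℝ} {E : ℝ} {φ : ℤ → ℝ} (h : IsEigenfunction v E φ) (x : ℤ) (i j : ℕ) :
    φ (x + i) * cont v E (i + j + 1) x
      = cont v E j (x + i + 1) * φ (x - 1) + cont v E i x * φ (x + i + j + 1) := by
  induction j using Nat.twoStepInduction with
  | zero => have := green0 h x i; simp [cont]; linarith
  | one =>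
    have h0 := green0 h x i
    have := eig_step h (x + i + 1)
    rw [show x + (i:ℤ) + 1 - 1 = x + i by ring] at this
    rw [cont]
    simp only [cont]
    push_cast
    linear_combination (E - v (x + i + 1)) * h0 + cont v E i x * this
  | more j h1 h2 =>
    have := eig_step h (x + i + j + 2)
    rw [show i + (j + 2) + 1 = (i + j + 1) + 2 by ring, cont_ss, cont_ss v E j]
    rw [show i + (j + 1) + 1 = i + j + 1 + 1 by ring] at h2
    push_cast at *
    rw [show x + (i + j + 1:ℤ) + 1 = x + i + j + 2 by ring,
      show x + i + 1 + (j:ℤ) + 1 = x + i + j + 2 by ring,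
      show x + i + (j+2:ℤ) + 1 = x + i + j + 2 + 1 by ring]
    rw [show x + i + (j+1:ℤ) + 1 = x + i + j + 2 by ring] at h2
    rw [show x + i + j + 2 - 1 = x + i + (j:ℤ) + 1 by ring] at this
    linear_combination (E - v (x + i + j + 2)) * h2 - h1 + cont v E i x * this

/-- propagation from the left -/
lemma prop_right {v : ℤ → ℝ} {E : ℝ} {φ : ℤ → ℝ} (h : IsEigenfunction v E φ) (x : ℤ) (k : ℕ) :
    φ (x + k + 1) = cont v E (k + 1) x * φ x - cont v E k (x + 1) * φ (x - 1) := by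
  have := green h x 0 k
  simp [cont] at this
  linarith

lemma prop_left {v : ℤ → ℝ} {E : ℝ} {φ : ℤ → ℝ} (h : IsEigenfunction v E φ) (x : ℤ) (k : ℕ) :
    φ (x - 1) = cont v E (k + 1) x * φ (x + k) - cont v E k x * φ (x + k + 1) := by
  have := green0 h x k
  linarith

lemma weight_sum (w : ℤ → ℝ) (A : ℝ) (hA : 0 ≤ A)
    (h : ∀ i j : ℤ, i ≠ j → min (w i) (w j) ≤ A * √(|(i:ℝ) - j|)) (a : ℤ) (N : ℕ) (m : ℕ) :
    ∀ F : Finset ℤ, F ⊆ Finset.Ico a (a + N) → F.card = m + 1 →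
      ∃ i ∈ F, ∑ j ∈ F.erase i, w j ≤ 2 * A * (√N * √m) := by
  induction m with
  | zero =>
    intro F _ hc
    obtain ⟨i, rfl⟩ := Finset.card_eq_one.1 hc
    exact ⟨i, by simp⟩
  | succ m ih =>
    intro F hF hc
    have hne : F.Nonempty := Finset.card_pos.1 (by omega)
    obtain ⟨i0, hi0, hmin⟩ := Finset.exists_min_image F w hne
    have hN : (0:ℤ) < N := by
      have := Finset.mem_Ico.1 (hF hi0); omega
    have key : w i0 ≤ A * √(N / ((m:ℝ) + 1)) := by
      obtain ⟨i, hi, j, hj, hij, he⟩ := Finset.exists_ne_map_eq_of_card_lt_of_maps_to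
        (s := F) (t := Finset.Ico (0:ℤ) (m + 1)) (f := fun i => ((i - a) * (m + 1)) / N)
        (by simp; omega) (by
          intro i hi
          have := Finset.mem_Ico.1 (hF hi)
          simp only [Finset.coe_Ico, Set.mem_Ico]
          constructor
          · apply Int.ediv_nonneg <;> nlinarith
          · apply Int.ediv_lt_of_lt_mul hN; nlinarith)
      refine (le_min (hmin i hi) (hmin j hj)).trans ((h i j hij).trans ?_)
      gcongr
      have h1 := Int.emod_add_mul_ediv ((i - a) * (m + 1)) N
      have h2 := Int.emod_add_mul_ediv ((j - a) * (m + 1)) N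
      have h3 := Int.emod_lt_of_pos ((i - a) * (m + 1)) hN
      have h4 := Int.emod_lt_of_pos ((j - a) * (m + 1)) hN
      have h5 := Int.emod_nonneg ((i - a) * (m + 1)) hN.ne'
      have h6 := Int.emod_nonneg ((j - a) * (m + 1)) hN.ne'
      rw [he] at h1
      have h7 : |(i - j) * (m + 1)| ≤ N := by rw [abs_le]; constructor <;> nlinarith
      have h8 : |((i:ℝ) - j) * (m + 1)| ≤ N := by exact_mod_cast h7
      rw [le_div_iff₀ (by positivity)]
      rwa [abs_mul, abs_of_nonneg (by positivity : (0:ℝ) ≤ m + 1)] at h8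
    obtain ⟨i, hi, hs⟩ := ih (F.erase i0) ((Finset.erase_subset _ _).trans hF)
      (by rw [Finset.card_erase_of_mem hi0]; omega)
    refine ⟨i, Finset.mem_of_mem_erase hi, ?_⟩
    have hi' := Finset.mem_erase.1 hi
    rw [← Finset.add_sum_erase (F.erase i) w (Finset.mem_erase.2 ⟨hi'.1.symm, hi0⟩),
      Finset.erase_right_comm]
    have h9 : √(N / ((m:ℝ) + 1)) + 2 * (√N * √m) ≤ 2 * (√N * √((m:ℝ) + 1)) := by
      rw [Real.sqrt_div (by positivity)]
      have e1 : √((m:ℝ) + 1) ^ 2 = m + 1 := Real.sq_sqrt (by positivity)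
      have e2 : √(m:ℝ) ^ 2 = m := Real.sq_sqrt (by positivity)
      have e3 : 0 < √((m:ℝ) + 1) := Real.sqrt_pos.2 (by positivity)
      have e4 : 0 ≤ √(m:ℝ) := Real.sqrt_nonneg _
      have e5 : 1 / √((m:ℝ) + 1) + 2 * √m ≤ 2 * √((m:ℝ) + 1) := by
        rw [← le_sub_iff_add_le, div_le_iff₀ e3]
        nlinarith [sq_nonneg (√((m:ℝ) + 1) - √m)]
      calc √N / √((m:ℝ) + 1) + 2 * (√N * √m) = √N * (1 / √((m:ℝ) + 1) + 2 * √m) := by ring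
        _ ≤ √N * (2 * √((m:ℝ) + 1)) := by gcongr
        _ = _ := by ring
    push_cast
    calc w i0 + ∑ x ∈ (F.erase i0).erase i, w x
        ≤ A * √(N / ((m:ℝ) + 1)) + 2 * A * (√N * √m) := add_le_add key hs
      _ = A * (√(N / ((m:ℝ) + 1)) + 2 * (√N * √m)) := by ring
      _ ≤ A * (2 * (√N * √((m:ℝ) + 1))) := by gcongr
      _ = _ := by ring

lemma weight_sum' (w : ℤ → ℝ) (A : ℝ) (hA : 0 ≤ A)
    (h : ∀ i j : ℤ, i ≠ j → min (w i) (w j) ≤ A * √(|(i:ℝ) - j|)) (a : ℤ) (N : ℕ)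
    (F : Finset ℤ) (hF : F ⊆ Finset.Ico a (a + N)) (hne : F.Nonempty) :
      ∃ i ∈ F, ∑ j ∈ F.erase i, w j ≤ 2 * A * N := by
  obtain ⟨m, hm⟩ := Nat.exists_eq_succ_of_ne_zero hne.card_pos.ne'
  obtain ⟨i, hi, hs⟩ := weight_sum w A hA h a N m F hF hm
  refine ⟨i, hi, hs.trans ?_⟩
  have hmN : m ≤ N := by
    have := Finset.card_le_card hF
    simp at this; omega
  have : √(N:ℝ) * √m ≤ N := by
    calc √(N:ℝ) * √m ≤ √(N:ℝ) * √N := by gcongr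
      _ = N := Real.mul_self_sqrt (by positivity)
  nlinarith

def sn (x : ℝ) : ℝ := |2 * Real.sin (Real.pi * x)|

lemma sn_nonneg (x : ℝ) : 0 ≤ sn x := abs_nonneg _

lemma sn_le_two (x : ℝ) : sn x ≤ 2 := by
  have := Real.abs_sin_le_one (π * x)
  rw [sn, abs_mul]; norm_num; linarith

lemma sn_sub_le (x y : ℝ) : sn (x - y) ≤ sn x + sn y := by
  unfold sn
  rw [mul_sub, Real.sin_sub, mul_sub, abs_mul 2 (sin (π * x)), abs_mul 2 (sin (π * y))]
  refine (abs_sub _ _).trans ?_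
  have h1 := Real.abs_cos_le_one (π * x)
  have h2 := Real.abs_cos_le_one (π * y)
  simp only [abs_mul]
  have h3 := abs_nonneg (sin (π * x))
  have h4 := abs_nonneg (sin (π * y))
  have h5 : |(2:ℝ)| = 2 := by norm_num
  rw [h5]
  nlinarith [mul_le_mul_of_nonneg_left h2 h3, mul_le_mul_of_nonneg_left h1 h4]

lemma distToInt_le_half (x : ℝ) : distToInt x ≤ 1 / 2 := abs_sub_round x

lemma distToInt_nonneg (x : ℝ) : 0 ≤ distToInt x := abs_nonneg _

lemma sn_eq (x : ℝ) : sn x = 2 * Real.sin (π * distToInt x) := by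
  have h0 : |sin (π * x)| = |sin (π * (x - round x))| := by
    rw [mul_sub, mul_comm π (round x : ℝ), Real.sin_sub_int_mul_pi, abs_mul, abs_zpow]
    simp
  have h1 : |sin (π * (x - round x))| = sin (π * distToInt x) := by
    rw [← abs_of_nonneg (Real.sin_nonneg_of_nonneg_of_le_pi
      (mul_nonneg pi_pos.le (distToInt_nonneg x))
      (by nlinarith [distToInt_le_half x, pi_pos]))]
    unfold distToInt
    rcases abs_choice (x - round x) with h | h <;> rw [h]
    rw [mul_neg, sin_neg, abs_neg]
  rw [sn, abs_mul, h0, h1]; norm_num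

lemma sn_ge (x : ℝ) : distToInt x ≤ sn x := by
  rw [sn_eq]
  have h := Real.mul_le_sin (mul_nonneg pi_pos.le (distToInt_nonneg x))
    (by nlinarith [distToInt_le_half x, pi_pos])
  have : 2 / π * (π * distToInt x) = 2 * distToInt x := by field_simp
  have h2 := distToInt_nonneg x
  linarith

lemma sn_le (x : ℝ) : sn x ≤ 7 * distToInt x := by
  rw [sn_eq]
  have := Real.sin_le (mul_nonneg pi_pos.le (distToInt_nonneg x))
  have h2 := Real.pi_lt_d2
  nlinarith [distToInt_nonneg x]

def Dio (α κ τ : ℝ) : Prop := 1 ≤ κ ∧ 0 < τ ∧ ∀ k : ℤ, k ≠ 0 → τ / |(k : ℝ)| ^ κ ≤ sn (k * α)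

lemma exists_dio {α : ℝ} (h : IsDiophantine α) : ∃ κ τ, Dio α κ τ := by
  obtain ⟨κ, τ, h1, h2, h3⟩ := h
  refine ⟨max κ 1, τ, le_max_right _ _, h2, fun k hk => ?_⟩
  refine le_trans ?_ ((h3 k hk).trans (sn_ge _))
  have hk1 : (1:ℝ) ≤ |(k:ℝ)| := by exact_mod_cast Int.one_le_abs hk
  have := Real.rpow_le_rpow_of_exponent_le hk1 (le_max_left κ 1)
  gcongr

/-- regularised logarithm -/
def psi (r x : ℝ) : ℝ := Real.log ((1 - r) ^ 2 + r * sn x ^ 2) / 2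

def ee (x : ℝ) : ℂ := Complex.exp (2 * Real.pi * x * Complex.I)

lemma normSq_one_sub (r x : ℝ) : ‖1 - (r:ℂ) * ee x‖ ^ 2 = (1 - r) ^ 2 + r * sn x ^ 2 := by
  have : ee x = ⟨cos (2 * π * x), sin (2 * π * x)⟩ := by
    apply Complex.ext <;> simp [ee, Complex.exp_re, Complex.exp_im]
  rw [← Complex.normSq_eq_norm_sq, this, Complex.normSq_apply]
  simp [sn, mul_pow, sq_abs]
  have h1 : cos (2 * π * x) = 1 - 2 * sin (π * x) ^ 2 := by
    rw [mul_assoc, Real.cos_two_mul']; have := Real.sin_sq_add_cos_sq (π * x); linarith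
  have h2 := Real.sin_sq_add_cos_sq (2 * π * x)
  linear_combination r ^ 2 * h2 - 2 * r * h1

lemma norm_ee (x : ℝ) : ‖ee x‖ = 1 := by
  rw [ee, show (2 * π * x * Complex.I : ℂ) = ((2 * π * x : ℝ) : ℂ) * Complex.I by push_cast; ring]
  exact Complex.norm_exp_ofReal_mul_I _

lemma ee_add (x y : ℝ) : ee (x + y) = ee x * ee y := by
  simp only [ee]; rw [← Complex.exp_add]; congr 1; push_cast; ring

lemma ee_pow (x : ℝ) (n : ℕ) : ee x ^ n = ee (n * x) := by
  simp only [ee]; rw [← Complex.exp_nat_mul]; congr 1; push_cast; ring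

lemma norm_one_sub_ee (x : ℝ) : ‖1 - ee x‖ = sn x := by
  have := normSq_one_sub 1 x
  simp only [Complex.ofReal_one, one_mul, sub_self] at this
  exact (sq_eq_sq₀ (norm_nonneg _) (sn_nonneg _)).1 (by rw [this]; ring)

lemma psi_eq {r x : ℝ} :
    psi r x = (Complex.log (1 - (r:ℂ) * ee x)).re := by
  rw [Complex.log_re, psi, ← normSq_one_sub, Real.log_pow]; push_cast; ring

lemma psi_sum {α κ τ : ℝ} (hd : Dio α κ τ) {r : ℝ} (hr : 0 < r) (hr1 : r < 1) :
    ∃ C, 0 ≤ C ∧ ∀ (x : ℝ) (N : ℕ), |∑ i ∈ Finset.range N, psi r (x + i * α)| ≤ C := by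
  obtain ⟨hκ, hτ, hd⟩ := hd
  have hsum : Summable (fun n : ℕ => 2 / τ * ((n:ℝ) ^ ⌈κ⌉₊ * r ^ n)) := by
    apply Summable.mul_left
    exact summable_pow_mul_geometric_of_norm_lt_one _ (by rw [Real.norm_of_nonneg hr.le]; exact hr1)
  refine ⟨∑' n : ℕ, 2 / τ * ((n:ℝ) ^ ⌈κ⌉₊ * r ^ n), tsum_nonneg (fun n => by positivity), fun x N => ?_⟩
  have hz : ∀ i : ℕ, ‖(r:ℂ) * ee (x + i * α)‖ < 1 := by
    intro i; rw [norm_mul, norm_ee]; simpa [abs_of_pos hr]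
  have H := hasSum_sum (s := Finset.range N) (fun i _ => Complex.hasSum_taylorSeries_neg_log (hz i))
  have hnorm : ∀ n : ℕ, ‖∑ i ∈ Finset.range N, ((r:ℂ) * ee (x + i * α)) ^ n / n‖
      ≤ 2 / τ * ((n:ℝ) ^ ⌈κ⌉₊ * r ^ n) := by
    intro n
    rcases Nat.eq_zero_or_pos n with rfl | hn
    · simp; positivity
    have hs : ∑ i ∈ Finset.range N, ((r:ℂ) * ee (x + i * α)) ^ n / n
        = (r:ℂ) ^ n / n * ee (n * x) * ∑ i ∈ Finset.range N, ee (n * α) ^ i := by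
      rw [Finset.mul_sum]
      refine Finset.sum_congr rfl fun i _ => ?_
      rw [mul_pow, ee_add, mul_pow, ee_pow, ee_pow, ee_pow]
      rw [show (n:ℝ) * (i * α) = i * (n * α) by ring]; ring
    have hn1 : (1:ℝ) ≤ n := by exact_mod_cast hn
    have h1 : τ / (n:ℝ) ^ κ ≤ sn (n * α) := by
      have := hd n (by exact_mod_cast hn.ne'); simpa using this
    have hpos : 0 < τ / (n:ℝ) ^ κ := by positivity
    have hne : ee (n * α) ≠ 1 := by
      intro h
      have := norm_one_sub_ee (n * α)
      rw [h] at this; simp at this; linarith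
    rw [hs, geom_sum_eq hne, norm_mul, norm_mul, norm_ee, norm_div, norm_div, norm_pow]
    rw [norm_sub_rev _ 1, norm_sub_rev _ 1, norm_one_sub_ee]
    have h2 : ‖1 - ee (n * α) ^ N‖ ≤ 2 := by
      refine (norm_sub_le _ _).trans ?_
      rw [norm_pow, norm_ee]; norm_num
    have h3 : ‖1 - ee (n * α) ^ N‖ / sn (n * α) ≤ 2 / (τ / (n:ℝ) ^ κ) := by gcongr
    have h30 : 0 ≤ ‖1 - ee (n * α) ^ N‖ / sn (n * α) := div_nonneg (norm_nonneg _) (sn_nonneg _)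
    have h4 : (n:ℝ) ^ κ ≤ (n:ℝ) ^ ⌈κ⌉₊ := by
      rw [← Real.rpow_natCast]; exact Real.rpow_le_rpow_of_exponent_le hn1 (Nat.le_ceil κ)
    have h5 : ‖(r:ℂ)‖ ^ n / ‖(n:ℂ)‖ ≤ r ^ n := by
      simp [abs_of_pos hr]
      exact div_le_self (by positivity) hn1
    calc ‖(r:ℂ)‖ ^ n / ‖(n:ℂ)‖ * 1 * (‖1 - ee (n * α) ^ N‖ / sn (n * α))
        ≤ r ^ n * 1 * (2 / (τ / (n:ℝ) ^ κ)) := by gcongr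
      _ = 2 / τ * ((n:ℝ) ^ κ * r ^ n) := by field_simp
      _ ≤ _ := by gcongr
  have h6 : ‖∑ i ∈ Finset.range N, -Complex.log (1 - (r:ℂ) * ee (x + i * α))‖
      ≤ ∑' n : ℕ, 2 / τ * ((n:ℝ) ^ ⌈κ⌉₊ * r ^ n) := by
    rw [← H.tsum_eq]; exact tsum_of_norm_bounded hsum.hasSum hnorm
  refine le_trans ?_ h6
  rw [Finset.sum_neg_distrib, norm_neg]
  refine le_trans (le_of_eq ?_) (Complex.abs_re_le_norm _)
  rw [Complex.re_sum]
  simp only [psi_eq]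

lemma psi_Ico {α : ℝ} {r C : ℝ}
    (hC : ∀ (x : ℝ) (N : ℕ), |∑ i ∈ Finset.range N, psi r (x + i * α)| ≤ C) (x : ℝ) (a b : ℤ) :
    |∑ i ∈ Finset.Ico a b, psi r (x + i * α)| ≤ C := by
  have h := hC (x + a * α) (b - a).toNat
  convert h using 2
  rw [Int.Ico_eq_finset_map, Finset.sum_map]
  refine Finset.sum_congr rfl fun i _ => ?_
  simp; congr 1; ring

/-- union of two disjoint windows inside `[-M, M]` -/
def TwoWin (M : ℕ) (S : Finset ℤ) : Prop :=
  S ⊆ Finset.Icc (-(M:ℤ)) M ∧ ∃ a b c d : ℤ, Disjoint (Finset.Ico a b) (Finset.Ico c d) ∧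
    S = Finset.Ico a b ∪ Finset.Ico c d

lemma psi_twoWin {α κ τ : ℝ} (hd : Dio α κ τ) {r : ℝ} (hr : 0 < r) (hr1 : r < 1) :
    ∃ C, 0 ≤ C ∧ ∀ (x : ℝ) (M : ℕ) (S : Finset ℤ), TwoWin M S →
      |∑ i ∈ S, psi r (x + i * α)| ≤ C := by
  obtain ⟨C, hC0, hC⟩ := psi_sum hd hr hr1
  refine ⟨C + C, by linarith, fun x M S hS => ?_⟩
  obtain ⟨_, a, b, c, d, hdis, rfl⟩ := hS
  rw [Finset.sum_union hdis]
  exact (abs_add_le _ _).trans (add_le_add (psi_Ico hC x a b) (psi_Ico hC x c d))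

lemma psi_le {r x : ℝ} (hr : 0 < r) (hr1 : r < 1) : psi r x ≤ 1 := by
  have h1 : (1 - r) ^ 2 + r * sn x ^ 2 ≤ 4 := by
    have := sn_le_two x; have := sn_nonneg x
    have h4 : sn x ^ 2 ≤ 4 := by nlinarith
    nlinarith
  have h2 := Real.log_le_log (by nlinarith [mul_nonneg hr.le (sq_nonneg (sn x))] : 0 < (1 - r) ^ 2 + r * sn x ^ 2) h1
  have h3 : Real.log 4 = 2 * Real.log 2 := by
    rw [show (4:ℝ) = 2 ^ 2 by norm_num, Real.log_pow]; norm_num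
  have := Real.log_two_lt_d9
  unfold psi; linarith

lemma psi_ge {r x : ℝ} (hr : 0 < r) (hr1 : r < 1) : Real.log (1 - r) ≤ psi r x := by
  have h1 : (1 - r) ^ 2 ≤ (1 - r) ^ 2 + r * sn x ^ 2 := by nlinarith [mul_nonneg hr.le (sq_nonneg (sn x))]
  have h2 := Real.log_le_log (by have : 0 < 1 - r := by linarith
                                 positivity) h1
  rw [Real.log_pow] at h2
  unfold psi; push_cast at h2; linarith

lemma sn_le_psi {r x : ℝ} (hr : 0 < r) (hr1 : r < 1) :
    sn x ≤ Real.exp (psi r x - Real.log r / 2) := by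
  have hp : 0 < (1 - r) ^ 2 + r * sn x ^ 2 := by
    have : 0 < 1 - r := by linarith
    positivity
  refine le_of_sq_le_sq ?_ (Real.exp_pos _).le
  rw [← Real.exp_nat_mul, psi]
  rw [show ((2:ℕ):ℝ) * (Real.log ((1 - r) ^ 2 + r * sn x ^ 2) / 2 - Real.log r / 2)
    = Real.log ((1 - r) ^ 2 + r * sn x ^ 2) - Real.log r by push_cast; ring]
  rw [Real.exp_sub, Real.exp_log hp, Real.exp_log hr, le_div_iff₀ hr]
  nlinarith [sq_nonneg (1 - r)]

lemma twoWin_card {M : ℕ} {S : Finset ℤ} (h : TwoWin M S) : S.card ≤ 2 * M + 1 := by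
  have := Finset.card_le_card h.1
  simp at this; omega

lemma prod_sn_le {α κ τ : ℝ} (hd : Dio α κ τ) {ε : ℝ} (hε : 0 < ε) :
    ∃ C, 0 ≤ C ∧ ∀ (x : ℝ) (M : ℕ) (S : Finset ℤ), TwoWin M S → ∀ j ∈ S,
      ∏ i ∈ S.erase j, sn (x + i * α) ≤ Real.exp (ε * M + C) := by
  set r := Real.exp (-(min ε 1)) with hrdef
  have hm : 0 < min ε 1 := lt_min hε one_pos
  have hr : 0 < r := Real.exp_pos _
  have hr1 : r < 1 := by rw [hrdef, Real.exp_lt_one_iff]; linarith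
  obtain ⟨C, hC0, hC⟩ := psi_twoWin hd hr hr1
  have hl : Real.log (1 - r) ≤ 0 := Real.log_nonpos (by linarith) (by linarith)
  refine ⟨C - Real.log (1 - r) + ε, by linarith, fun x M S hS j hj => ?_⟩
  calc ∏ i ∈ S.erase j, sn (x + i * α)
      ≤ ∏ i ∈ S.erase j, Real.exp (psi r (x + i * α) - Real.log r / 2) :=
        Finset.prod_le_prod (fun i _ => sn_nonneg _) (fun i _ => sn_le_psi hr hr1)
    _ = Real.exp (∑ i ∈ S.erase j, (psi r (x + i * α) - Real.log r / 2)) := (Real.exp_sum _ _).symm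
    _ ≤ _ := by
      apply Real.exp_le_exp.2
      rw [Finset.sum_sub_distrib, Finset.sum_const, nsmul_eq_mul, hrdef, Real.log_exp, ← hrdef]
      have h1 := Finset.add_sum_erase S (fun i : ℤ => psi r (x + i * α)) hj
      have h2 := (abs_le.1 (hC x M S hS)).2
      have h3 := psi_ge (x := x + j * α) hr hr1
      have h4 : ((S.erase j).card : ℝ) ≤ 2 * M + 1 := by
        have h5 := (Finset.card_le_card (Finset.erase_subset j S)).trans (twoWin_card hS)
        exact_mod_cast h5
      have h6 : min ε 1 ≤ ε := min_le_left _ _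
      have h7 : ((S.erase j).card : ℝ) * min ε 1 ≤ (2 * M + 1) * ε := by gcongr
      linarith

lemma log_one_add_sq {y p : ℝ} (hy : 0 ≤ y) (hp : 0 < p) (hp1 : p ≤ 1) :
    Real.log (1 + y ^ 2) / 2 ≤ y ^ p / p := by
  have h1 : (1 + y ^ 2) ^ (p / 2) ≤ 1 + y ^ p := by
    have := Real.rpow_add_le_add_rpow (p := p / 2) zero_le_one (sq_nonneg y) (by positivity) (by linarith)
    rw [Real.one_rpow, ← Real.rpow_natCast, ← Real.rpow_mul hy] at this
    convert this using 3
    · norm_num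
    · push_cast; ring
  have hyp : 0 ≤ y ^ p := Real.rpow_nonneg hy p
  have h2 := Real.log_le_log (by positivity) h1
  rw [Real.log_rpow (by positivity)] at h2
  have h3 := Real.log_le_sub_one_of_pos (by linarith : 0 < 1 + y ^ p)
  rw [le_div_iff₀ hp]; nlinarith

lemma sn_ge_psi {r x p : ℝ} (hr : 0 < r) (hr1 : r < 1) (hp : 0 < p) (hp1 : p ≤ 1) (hx : 0 < sn x) :
    psi r x - (1 - r) ^ p / p * sn x ^ (-p) ≤ Real.log (sn x) := by
  have h0 : 0 < 1 - r := by linarith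
  have h1 := log_one_add_sq (y := (1 - r) / sn x) (by positivity) hp hp1
  have h2 : psi r x ≤ Real.log (sn x) + Real.log (1 + ((1 - r) / sn x) ^ 2) / 2 := by
    have h3 : Real.log (sn x ^ 2 * (1 + ((1 - r) / sn x) ^ 2)) = 2 * Real.log (sn x) + Real.log (1 + ((1 - r) / sn x) ^ 2) := by
      rw [Real.log_mul (by positivity) (by positivity), Real.log_pow]; push_cast; ring
    have h4 : sn x ^ 2 * (1 + ((1 - r) / sn x) ^ 2) = sn x ^ 2 + (1 - r) ^ 2 := by field_simp
    have h5 : Real.log ((1 - r) ^ 2 + r * sn x ^ 2) ≤ Real.log (sn x ^ 2 + (1 - r) ^ 2) :=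
      Real.log_le_log (by positivity) (by nlinarith [sq_nonneg (sn x)])
    rw [h4] at h3
    unfold psi; linarith
  have h6 : ((1 - r) / sn x) ^ p / p = (1 - r) ^ p / p * sn x ^ (-p) := by
    rw [Real.div_rpow h0.le hx.le, Real.rpow_neg hx.le]; ring
  linarith

lemma prod_sn_ge {α κ τ : ℝ} (hd : Dio α κ τ) {ε : ℝ} (hε : 0 < ε) :
    ∃ C, 0 ≤ C ∧ ∀ (x : ℝ) (M : ℕ) (S : Finset ℤ), TwoWin M S → ∀ j ∈ S, ∀ ρ : ℝ, 0 < ρ → ρ ≤ 1 →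
      (∀ i ∈ S.erase j, ρ ≤ sn (x + i * α)) →
      ρ * Real.exp (-(ε * M + C)) ≤ ∏ i ∈ S.erase j, sn (x + i * α) := by
  obtain ⟨hκ, hτ, hd'⟩ := id hd
  set p := 1 / (2 * κ) with hp
  have hp0 : 0 < p := by positivity
  have hp1 : p ≤ 1 := by rw [hp, div_le_one (by positivity)]; linarith
  set A := (τ / 2) ^ (-p) with hA
  have hA0 : 0 < A := by positivity
  set s := min (1/2) ((ε * p / (4 * A)) ^ (1 / p)) with hs
  have hs0 : 0 < s := lt_min (by norm_num) (by positivity)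
  have hs1 : s ≤ 1/2 := min_le_left _ _
  have hsp : s ^ p ≤ ε * p / (4 * A) := by
    calc s ^ p ≤ ((ε * p / (4 * A)) ^ (1 / p)) ^ p := by gcongr; exact min_le_right _ _
      _ = _ := by rw [← Real.rpow_mul (by positivity), one_div_mul_cancel hp0.ne', Real.rpow_one]
  have hr : 0 < 1 - s := by linarith
  have hr1 : 1 - s < 1 := by linarith
  obtain ⟨C, hC0, hC⟩ := psi_twoWin hd hr hr1
  refine ⟨C + 2 + ε, by linarith, fun x M S hS j hj ρ hρ hρ1 hF => ?_⟩
  rcases (S.erase j).eq_empty_or_nonempty with he | hne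
  · rw [he, Finset.prod_empty]
    have : Real.exp (-(ε * M + (C + 2 + ε))) ≤ 1 := Real.exp_le_one_iff.2 (by
      have : 0 ≤ ε * M := by positivity
      linarith)
    nlinarith [Real.exp_pos (-(ε * M + (C + 2 + ε)))]
  have hw : ∀ i j : ℤ, i ≠ j → min (sn (x + i * α) ^ (-p)) (sn (x + j * α) ^ (-p)) ≤ A * √(|(i:ℝ) - j|) := by
    intro i j hij
    have h1 := hd' (i - j) (sub_ne_zero.2 hij)
    push_cast at h1
    have hpos : 0 < |(i:ℝ) - j| := abs_pos.2 (sub_ne_zero.2 (by exact_mod_cast hij))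
    have h2 := sn_sub_le (x + i * α) (x + j * α)
    rw [show x + i * α - (x + j * α) = ((i:ℝ) - j) * α by ring] at h2
    have key : ∀ u : ℝ, τ / |(i:ℝ) - j| ^ κ / 2 ≤ u → u ^ (-p) ≤ A * √(|(i:ℝ) - j|) := by
      intro u hu
      have h3 : 0 < τ / |(i:ℝ) - j| ^ κ / 2 := by positivity
      calc u ^ (-p) ≤ (τ / |(i:ℝ) - j| ^ κ / 2) ^ (-p) :=
            Real.rpow_le_rpow_of_nonpos h3 hu (by linarith)
        _ = (τ / 2 * |(i:ℝ) - j| ^ (-κ)) ^ (-p) := by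
            rw [Real.rpow_neg hpos.le]; congr 1; ring
        _ = A * √(|(i:ℝ) - j|) := by
            rw [Real.mul_rpow (by positivity) (by positivity), ← Real.rpow_mul hpos.le, Real.sqrt_eq_rpow]
            congr 2; rw [hp]; field_simp
    rcases le_total (sn (x + i * α)) (sn (x + j * α)) with h | h
    · exact (min_le_right _ _).trans (key _ (by linarith))
    · exact (min_le_left _ _).trans (key _ (by linarith))
  obtain ⟨i, hi, hsum⟩ := weight_sum' (fun i : ℤ => sn (x + i * α) ^ (-p)) A hA0.le hw (-(M:ℤ)) (2 * M + 1)
    (S.erase j) (by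
      refine (Finset.erase_subset _ _).trans (hS.1.trans ?_)
      intro z hz; simp at hz ⊢; omega) hne
  have hpos : ∀ i ∈ S.erase j, 0 < sn (x + i * α) := fun i hi => hρ.trans_le (hF i hi)
  rw [← Real.exp_log (Finset.prod_pos hpos), ← Real.exp_log hρ, ← Real.exp_add,
    Real.exp_le_exp, Real.log_prod (fun i hi => (hpos i hi).ne')]
  rw [← Finset.add_sum_erase _ _ hi]
  have h1 : Real.log ρ ≤ Real.log (sn (x + i * α)) := Real.log_le_log hρ (hF i hi)
  have h2 : ∑ z ∈ (S.erase j).erase i, (psi (1 - s) (x + z * α) - s ^ p / p * sn (x + z * α) ^ (-p))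
      ≤ ∑ z ∈ (S.erase j).erase i, Real.log (sn (x + z * α)) := by
    refine Finset.sum_le_sum fun z hz => ?_
    have := sn_ge_psi hr hr1 hp0 hp1 (hpos z (Finset.mem_of_mem_erase hz))
    rwa [sub_sub_cancel] at this
  rw [Finset.sum_sub_distrib, ← Finset.mul_sum] at h2
  have h3 := Finset.add_sum_erase (S.erase j) (fun z : ℤ => psi (1 - s) (x + z * α)) hi
  have h4 := Finset.add_sum_erase S (fun z : ℤ => psi (1 - s) (x + z * α)) hj
  have h5 := psi_le (x := x + i * α) hr hr1
  have h6 := psi_le (x := x + j * α) hr hr1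
  have h7 := (abs_le.1 (hC x M S hS)).1
  have h8 : s ^ p / p * ∑ z ∈ (S.erase j).erase i, sn (x + z * α) ^ (-p) ≤ ε * M + ε := by
    calc s ^ p / p * ∑ z ∈ (S.erase j).erase i, sn (x + z * α) ^ (-p)
        ≤ (ε * p / (4 * A)) / p * (2 * A * ((2 * M + 1 : ℕ) : ℝ)) := by
          have : 0 ≤ ∑ z ∈ (S.erase j).erase i, sn (x + z * α) ^ (-p) :=
            Finset.sum_nonneg fun z _ => Real.rpow_nonneg (sn_nonneg _) _
          gcongr
      _ = ε * M + ε / 2 := by push_cast; field_simp; ring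
      _ ≤ _ := by linarith
  linarith

/-- determinant as a function of the phase -/
def dt (lam α E : ℝ) (k : ℕ) (t : ℝ) : ℝ := cont (amoPot lam α t) E k 0

lemma cont_eq_dt (lam α θ E : ℝ) (k : ℕ) (x : ℤ) :
    cont (amoPot lam α θ) E k x = dt lam α E k (θ + x * α) := by
  have := cont_shift (amoPot lam α θ) E k x 0
  rw [add_zero] at this
  rw [this, dt]
  congr 1
  funext n; simp only [amoPot]; push_cast; congr 2; ring

lemma dt_zero (lam α E t : ℝ) : dt lam α E 0 t = 1 := rfl

lemma dt_one (lam α E t : ℝ) : dt lam α E 1 t = E - 2 * lam * cos (2 * π * t) := by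
  simp [dt, cont, amoPot]

lemma dt_ss (lam α E t : ℝ) (k : ℕ) : dt lam α E (k + 2) t
    = (E - 2 * lam * cos (2 * π * (t + (k + 1) * α))) * dt lam α E (k + 1) t - dt lam α E k t := by
  simp [dt, cont, amoPot]

lemma dt_mul (lam α E t : ℝ) (j k : ℕ) : dt lam α E (j + k + 2) t
    = dt lam α E (j + 1) t * dt lam α E (k + 1) (t + (j + 1) * α)
      - dt lam α E j t * dt lam α E k (t + (j + 2) * α) := by
  have := cont_mul (amoPot lam α t) E j k 0
  simp only [cont_eq_dt] at this
  push_cast at this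
  simpa [add_assoc] using this

lemma dt_reflect (lam α E t : ℝ) (k : ℕ) : dt lam α E k (-t) = dt lam α E k (t + (1 - k) * α) := by
  have h := cont_reverse (amoPot lam α t) E k 0
  rw [cont_eq_dt] at h
  have h2 : (fun n => amoPot lam α t (-n)) = amoPot lam α (-t) := by
    funext n; simp only [amoPot]; push_cast
    rw [← Real.cos_neg]; congr 2; ring
  rw [h2] at h
  rw [dt, h]; push_cast; congr 1; ring

open Polynomial in
lemma dt_trig (lam α E c : ℝ) (k : ℕ) : ∃ P Q : ℝ[X], P.natDegree ≤ k ∧ Q.natDegree ≤ k - 1 ∧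
    ∀ s, dt lam α E k (s + c) = P.eval (cos (2 * π * s)) + sin (2 * π * s) * Q.eval (cos (2 * π * s)) := by
  have hcos : ∀ s b : ℝ, cos (2 * π * (s + b)) = cos (2 * π * b) * cos (2 * π * s) - sin (2 * π * b) * sin (2 * π * s) := by
    intro s b; rw [mul_add, Real.cos_add]; ring
  induction k using Nat.twoStepInduction with
  | zero => exact ⟨1, 0, by simp, by simp, by simp [dt_zero]⟩
  | one =>
    refine ⟨C E - C (2 * lam * cos (2 * π * c)) * X, C (2 * lam * sin (2 * π * c)), ?_, (natDegree_C _).le, ?_⟩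
    · compute_degree
    · intro s; rw [dt_one, hcos]; simp; ring
  | more k h1 h2 =>
    obtain ⟨P, Q, hP, hQ, h⟩ := h1
    obtain ⟨P', Q', hP', hQ', h'⟩ := h2
    set a := 2 * lam * cos (2 * π * (c + (k + 1) * α))
    set b := 2 * lam * sin (2 * π * (c + (k + 1) * α))
    have ha : ∀ s, 2 * lam * cos (2 * π * (s + c + (k + 1) * α)) = a * cos (2 * π * s) - b * sin (2 * π * s) := by
      intro s; rw [add_assoc, hcos]; ring
    refine ⟨(C E - C a * X) * P' + C b * (1 - X ^ 2) * Q' - P, (C E - C a * X) * Q' + C b * P' - Q, ?_, ?_, ?_⟩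
    · refine (natDegree_sub_le _ _).trans (max_le ((natDegree_add_le _ _).trans (max_le ?_ ?_)) (by omega))
      · refine natDegree_mul_le.trans ?_
        have : (C E - C a * X).natDegree ≤ 1 := by compute_degree
        omega
      · refine natDegree_mul_le.trans ?_
        have : (C b * (1 - X ^ 2)).natDegree ≤ 2 := by compute_degree
        omega
    · refine (natDegree_sub_le _ _).trans (max_le ((natDegree_add_le _ _).trans (max_le ?_ ?_)) (by omega))
      · refine natDegree_mul_le.trans ?_
        have : (C E - C a * X).natDegree ≤ 1 := by compute_degree
        omega
      · refine (natDegree_C_mul_le _ _).trans (by omega)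
    · intro s
      rw [dt_ss, ha, h, h']
      have := Real.sin_sq_add_cos_sq (2 * π * s)
      simp
      linear_combination b * Q'.eval (cos (2 * π * s)) * this

open Polynomial in
lemma dt_poly (lam α E : ℝ) (k : ℕ) : ∃ P : ℝ[X], P.natDegree ≤ k ∧
    ∀ s, dt lam α E k (s - (k - 1) * α / 2) = P.eval (cos (2 * π * s)) := by
  obtain ⟨P, Q, hP, _, h⟩ := dt_trig lam α E (-((k - 1) * α / 2)) k
  refine ⟨P, hP, fun s => ?_⟩
  have h1 := h s
  have h2 := h (-s)
  rw [mul_neg, Real.cos_neg, Real.sin_neg, ← sub_eq_add_neg] at h2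
  rw [← sub_eq_add_neg] at h1
  have h3 : dt lam α E k (-s - (k - 1) * α / 2) = dt lam α E k (s - (k - 1) * α / 2) := by
    rw [show -s - (k - 1) * α / 2 = -(s + (k - 1) * α / 2) by ring, dt_reflect]; congr 1; ring
  linarith

/-- analytic extension for Herman's bound -/
def hz (lam α E : ℝ) : ℕ → ℂ → ℂ
  | 0, _ => 1
  | 1, z => E * z - lam * (z ^ 2 + 1)
  | (k + 2), z => (E * z - lam * (ee ((k + 1) * α) * z ^ 2 + ee (-((k + 1) * α)))) * hz lam α E (k + 1) z
      - z ^ 2 * hz lam α E k z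

lemma ee_eq (x : ℝ) : ee x = cos (2 * π * x) + sin (2 * π * x) * Complex.I := by
  rw [ee]; rw [show (2 * π * x * Complex.I : ℂ) = ((2 * π * x : ℝ) : ℂ) * Complex.I by push_cast; ring]
  rw [Complex.exp_mul_I]; simp

lemma ee_neg_mul (x : ℝ) : ee x * ee (-x) = 1 := by
  rw [← ee_add]; simp [ee]

lemma two_cos (x : ℝ) : (2 * cos (2 * π * x) : ℂ) = ee x + ee (-x) := by
  rw [ee_eq, ee_eq]; simp; ring

lemma hz_eq (lam α E : ℝ) (k : ℕ) (t : ℝ) : hz lam α E k (ee t) = ee t ^ k * (dt lam α E k t : ℂ) := by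
  have key : ∀ b : ℝ, lam * (ee b * ee t ^ 2 + ee (-b)) = ee t * (2 * lam * cos (2 * π * (t + b))) := by
    intro b
    rw [show (2 * (lam:ℂ) * cos (2 * π * (t + b))) = lam * (2 * cos (2 * π * (t + b)) : ℂ) by ring]
    have := two_cos (t + b)
    push_cast at this ⊢
    rw [this, neg_add, ee_add, ee_add]
    have := ee_neg_mul t
    linear_combination -lam * ee (-b) * this
  induction k using Nat.twoStepInduction with
  | zero => simp [hz, dt_zero]
  | one =>
    rw [hz, dt_one]
    have := key 0
    simp [ee_eq 0] at this
    push_cast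
    rw [this]; ring
  | more k h1 h2 =>
    rw [hz, h1, h2, dt_ss]
    have := key ((k + 1) * α)
    push_cast at this ⊢
    rw [this]; ring

lemma hz_zero {lam : ℝ} (hl : 0 ≤ lam) (α E : ℝ) (k : ℕ) : ‖hz lam α E k 0‖ = lam ^ k := by
  induction k using Nat.twoStepInduction with
  | zero => simp [hz]
  | one => simp [hz, abs_of_nonneg hl]
  | more k h1 h2 =>
    simp only [hz]
    simp [norm_ee, abs_of_nonneg hl, h2]; ring

lemma hz_diff (lam α E : ℝ) (k : ℕ) : Differentiable ℂ (hz lam α E k) := by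
  induction k using Nat.twoStepInduction with
  | zero =>
    rw [show hz lam α E 0 = fun _ => 1 from funext fun z => rfl]; fun_prop
  | one =>
    rw [show hz lam α E 1 = fun z : ℂ => E * z - lam * (z ^ 2 + 1) from funext fun z => rfl]; fun_prop
  | more k h1 h2 =>
    rw [show hz lam α E (k + 2) = fun z : ℂ =>
      (E * z - lam * (ee ((k + 1) * α) * z ^ 2 + ee (-((k + 1) * α)))) * hz lam α E (k + 1) z
      - z ^ 2 * hz lam α E k z from funext fun z => rfl]; fun_prop

lemma exists_ee {z : ℂ} (h : ‖z‖ = 1) : ∃ t, ee t = z := by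
  refine ⟨z.arg / (2 * π), ?_⟩
  have h0 := Complex.norm_mul_exp_arg_mul_I z
  rw [h] at h0
  have : (π:ℂ) ≠ 0 := by exact_mod_cast Real.pi_ne_zero
  rw [ee]
  refine Eq.trans ?_ h0
  rw [Complex.ofReal_one, one_mul]
  congr 1; push_cast; field_simp

lemma herman {lam : ℝ} (hl : 0 ≤ lam) (α E : ℝ) (k : ℕ) (B : ℝ) (h : ∀ t, |dt lam α E k t| ≤ B) :
    lam ^ k ≤ B := by
  rw [← hz_zero hl α E k]
  refine Complex.norm_le_of_forall_mem_frontier_norm_le (U := Metric.ball 0 1) Metric.isBounded_ball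
    (hz_diff lam α E k).diffContOnCl (fun z hz' => ?_) (subset_closure (by simp))
  rw [frontier_ball _ one_ne_zero] at hz'
  obtain ⟨t, rfl⟩ := exists_ee (by simpa using hz')
  rw [hz_eq, norm_mul, norm_pow, norm_ee]
  simpa using h t

lemma cos_sub_cos_sn (a b : ℝ) : |cos (2 * π * a) - cos (2 * π * b)| = sn (a - b) * sn (a + b) / 2 := by
  rw [Real.cos_sub_cos, sn, sn, show (2 * π * a + 2 * π * b) / 2 = π * (a + b) by ring,
    show (2 * π * a - 2 * π * b) / 2 = π * (a - b) by ring]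
  simp only [abs_mul, abs_neg]; norm_num; ring

lemma sn_neg (a : ℝ) : sn (-a) = sn a := by simp [sn, Real.sin_neg]

lemma sn_sub_comm (a b : ℝ) : sn (a - b) = sn (b - a) := by rw [← sn_neg]; congr 1; ring

lemma exp_bound {ε : ℝ} (hε : 0 < ε) : ∃ C, 0 ≤ C ∧ ∀ x : ℝ, 0 ≤ x → 2 * x + 1 ≤ Real.exp (ε * x + C) := by
  have h1 : (1:ℝ) ≤ 2 / ε + 1 := by have : 0 < 2 / ε := by positivity
                                    linarith
  refine ⟨Real.log (2 / ε + 1), Real.log_nonneg h1, fun x hx => ?_⟩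
  rw [Real.exp_add, Real.exp_log (by linarith)]
  have h2 := Real.add_one_le_exp (ε * x)
  calc 2 * x + 1 ≤ (ε * x + 1) * (2 / ε + 1) := by
        have : (ε * x + 1) * (2 / ε + 1) = 2 * x + 1 + (ε * x + 2 / ε) := by field_simp; ring
        rw [this]; have : 0 ≤ ε * x + 2 / ε := by positivity
        linarith
    _ ≤ _ := by gcongr

lemma dio_exp {α κ τ : ℝ} (hd : Dio α κ τ) {ε : ℝ} (hε : 0 < ε) : ∃ C, 0 ≤ C ∧ ∀ (x : ℝ) (k : ℤ), 0 ≤ x → k ≠ 0 →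
    |(k:ℝ)| ≤ 2 * x → Real.exp (-(ε * x + C)) ≤ sn (k * α) := by
  obtain ⟨hκ, hτ, hd⟩ := hd
  obtain ⟨C, hC, h⟩ := exp_bound (ε := ε / κ) (by positivity)
  refine ⟨κ * C + |Real.log τ|, by positivity, fun x k hx hk hkx => ?_⟩
  refine le_trans ?_ (hd k hk)
  have hk0 : 0 < |(k:ℝ)| := abs_pos.2 (by exact_mod_cast hk)
  rw [le_div_iff₀ (by positivity)]
  calc Real.exp (-(ε * x + (κ * C + |Real.log τ|))) * |(k:ℝ)| ^ κ
      ≤ Real.exp (-(ε * x + (κ * C + |Real.log τ|))) * Real.exp (ε / κ * x + C) ^ κ := by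
        gcongr; linarith [h x hx]
    _ = Real.exp (-|Real.log τ|) := by
        rw [← Real.exp_mul, ← Real.exp_add]; congr 1; field_simp; ring
    _ ≤ Real.exp (Real.log τ) := Real.exp_le_exp.2 (neg_abs_le _)
    _ = τ := Real.exp_log hτ

open Polynomial in
lemma interp_bound (P : ℝ[X]) (S : Finset ℤ) (v : ℤ → ℝ) (k : ℕ) (hP : P.natDegree ≤ k) (hS : S.card = k + 1)
    (hv : Set.InjOn v S) (x B : ℝ)
    (hB : ∀ j ∈ S, ∏ i ∈ S.erase j, |x - v i| ≤ B * ∏ i ∈ S.erase j, |v j - v i|) :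
    ∃ j ∈ S, |P.eval x| ≤ (k + 1) * B * |P.eval (v j)| := by
  have hne : S.Nonempty := Finset.card_pos.1 (by omega)
  obtain ⟨j, hj, hmax⟩ := Finset.exists_max_image S (fun j => |P.eval (v j)|) hne
  refine ⟨j, hj, ?_⟩
  have h1 := Lagrange.eq_interpolate hv (f := P) (by
    rw [hS]; exact lt_of_le_of_lt degree_le_natDegree (by exact_mod_cast Nat.lt_succ_of_le hP))
  have h1' : P.eval x = ∑ i ∈ S, eval x (C (eval (v i) P) * Lagrange.basis S v i) := by
    conv_lhs => rw [h1, Lagrange.interpolate_apply, eval_finsetSum]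
  rw [h1']
  refine (Finset.abs_sum_le_sum_abs _ _).trans ?_
  calc ∑ i ∈ S, |eval x (C (eval (v i) P) * Lagrange.basis S v i)|
      ≤ ∑ i ∈ S, B * |P.eval (v j)| := by
        refine Finset.sum_le_sum fun i hi => ?_
        rw [eval_mul, eval_C, abs_mul, mul_comm B]
        refine mul_le_mul (hmax i hi) ?_ (abs_nonneg _) (abs_nonneg _)
        rw [Lagrange.basis, eval_prod, Finset.abs_prod]
        have h2 : ∀ l ∈ S.erase i, |eval x (Lagrange.basisDivisor (v i) (v l))| = |x - v l| / |v i - v l| := by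
          intro l _
          simp [Lagrange.basisDivisor, abs_mul, abs_inv]; ring
        rw [Finset.prod_congr rfl h2, Finset.prod_div_distrib, div_le_iff₀]
        · exact hB i hi
        · refine Finset.prod_pos fun l hl => abs_pos.2 (sub_ne_zero.2 fun h => ?_)
          have := Finset.mem_erase.1 hl
          exact this.1 (hv hi this.2 h).symm
    _ = _ := by rw [Finset.sum_const, hS, nsmul_eq_mul]; push_cast; ring

lemma node_lemma {lam α κ τ : ℝ} (hd : Dio α κ τ) {ε : ℝ} (hε : 0 < ε) :
    ∃ C, 0 ≤ C ∧ ∀ (θ : ℝ) (M : ℕ) (S : Finset ℤ) (k : ℕ) (ρ : ℝ), TwoWin M S → S.card = k + 1 →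
      0 < ρ → ρ ≤ 1 →
      (∀ i ∈ S, ∀ j ∈ S, i ≠ j → ρ ≤ sn (2 * θ + ((i + j + k - 1 : ℤ) : ℝ) * α)) →
      ∀ E t, ∃ j ∈ S, |dt lam α E k t| ≤ Real.exp (ε * M + C) * ρ⁻¹ * |dt lam α E k (θ + j * α)| := by
  have hε' : 0 < ε / 6 := by positivity
  obtain ⟨C1, hC1, h1⟩ := prod_sn_le hd hε'
  obtain ⟨C2, hC2, h2⟩ := prod_sn_ge hd hε'
  obtain ⟨C3, hC3, h3⟩ := dio_exp hd hε'
  obtain ⟨C4, hC4, h4⟩ := exp_bound hε'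
  refine ⟨2 * C1 + 2 * C2 + C3 + C4, by positivity, fun θ M S k ρ hS hcard hρ hρ1 hres E t => ?_⟩
  obtain ⟨P, hP, hPe⟩ := dt_poly lam α E k
  set σ : ℤ → ℝ := fun j => θ + j * α + (k - 1) * α / 2 with hσ
  set s := t + (k - 1) * α / 2 with hs
  set ρ0 := Real.exp (-(ε / 6 * M + C3)) with hρ0
  have hρ01 : ρ0 ≤ 1 := Real.exp_le_one_iff.2 (by
    have : 0 ≤ ε / 6 * M := by positivity
    linarith)
  have hdiff : ∀ i ∈ S, ∀ j ∈ S, i ≠ j → ρ0 ≤ sn (σ i - σ j) := by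
    intro i hi j hj hij
    have hi' := Finset.mem_Icc.1 (hS.1 hi)
    have hj' := Finset.mem_Icc.1 (hS.1 hj)
    have := h3 M (i - j) (by positivity) (sub_ne_zero.2 hij) (by
      rw [← Int.cast_abs]
      have : |i - j| ≤ 2 * (M:ℤ) := by rw [abs_le]; constructor <;> linarith
      exact_mod_cast this)
    convert this using 2
    simp only [hσ]; push_cast; ring
  have hadd : ∀ i ∈ S, ∀ j ∈ S, i ≠ j → ρ ≤ sn (σ i + σ j) := by
    intro i hi j hj hij
    convert hres i hi j hj hij using 2
    simp only [hσ]; push_cast; ring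
  have hv : Set.InjOn (fun j => cos (2 * π * σ j)) S := by
    intro i hi j hj h
    by_contra hij
    have h5 := cos_sub_cos_sn (σ i) (σ j)
    simp only at h
    rw [h, sub_self, abs_zero] at h5
    have h6 := mul_pos (lt_of_lt_of_le (Real.exp_pos _) (hdiff i hi j hj hij)) (lt_of_lt_of_le hρ (hadd i hi j hj hij))
    linarith
  have key := interp_bound P S (fun j => cos (2 * π * σ j)) k hP hcard hv (cos (2 * π * s))
    (Real.exp (ε / 6 * M + C1) * Real.exp (ε / 6 * M + C1) * Real.exp (ε / 6 * M + C2) * Real.exp (ε / 6 * M + C2) * Real.exp (ε / 6 * M + C3) * ρ⁻¹) (by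
    intro j hj
    simp only [cos_sub_cos_sn]
    rw [Finset.prod_div_distrib, Finset.prod_div_distrib, Finset.prod_mul_distrib, Finset.prod_mul_distrib, ← mul_div_assoc]
    refine div_le_div_of_nonneg_right ?_ (Finset.prod_nonneg fun _ _ => by norm_num)
    have a1 : ∏ i ∈ S.erase j, sn (s - σ i) ≤ Real.exp (ε / 6 * M + C1) := by
      have := h1 (θ + (k - 1) * α / 2 - s) M S hS j hj
      refine le_of_eq_of_le ?_ this
      refine Finset.prod_congr rfl fun i _ => ?_
      rw [sn_sub_comm]; congr 1; simp only [hσ]; ring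
    have a2 : ∏ i ∈ S.erase j, sn (s + σ i) ≤ Real.exp (ε / 6 * M + C1) := by
      have := h1 (θ + (k - 1) * α / 2 + s) M S hS j hj
      convert this using 3 with i
      simp only [hσ]; ring
    have a3 : ρ0 * Real.exp (-(ε / 6 * M + C2)) ≤ ∏ i ∈ S.erase j, sn (σ j - σ i) := by
      have := h2 (θ + (k - 1) * α / 2 - σ j) M S hS j hj ρ0 (Real.exp_pos _) hρ01 (by
        intro i hi
        have hi := Finset.mem_erase.1 hi
        convert hdiff i hi.2 j hj hi.1 using 2
        simp only [hσ]; ring)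
      refine this.trans_eq ?_
      refine Finset.prod_congr rfl fun i _ => ?_
      rw [sn_sub_comm (σ j)]; congr 1; simp only [hσ]; ring
    have a4 : ρ * Real.exp (-(ε / 6 * M + C2)) ≤ ∏ i ∈ S.erase j, sn (σ j + σ i) := by
      have := h2 (θ + (k - 1) * α / 2 + σ j) M S hS j hj ρ hρ hρ1 (by
        intro i hi
        have hi := Finset.mem_erase.1 hi
        convert hadd i hi.2 j hj hi.1 using 2
        simp only [hσ]; ring)
      convert this using 3 with i
      simp only [hσ]; ring
    calc _ ≤ Real.exp (ε / 6 * M + C1) * Real.exp (ε / 6 * M + C1) :=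
          mul_le_mul a1 a2 (Finset.prod_nonneg fun _ _ => sn_nonneg _) (Real.exp_pos _).le
      _ = Real.exp (ε / 6 * M + C1) * Real.exp (ε / 6 * M + C1) * Real.exp (ε / 6 * M + C2) * Real.exp (ε / 6 * M + C2) * Real.exp (ε / 6 * M + C3) * ρ⁻¹
          * ((ρ0 * Real.exp (-(ε / 6 * M + C2))) * (ρ * Real.exp (-(ε / 6 * M + C2)))) := by
          rw [hρ0]; simp only [Real.exp_neg]; field_simp
      _ ≤ _ := by
          have := Finset.prod_nonneg (s := S.erase j) (f := fun x => sn (σ j - σ x)) fun _ _ => sn_nonneg _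
          gcongr)
  obtain ⟨j, hj, hb⟩ := key
  refine ⟨j, hj, ?_⟩
  rw [← hPe, ← hPe] at hb
  rw [show s - (k - 1) * α / 2 = t by rw [hs]; ring, show σ j - (k - 1) * α / 2 = θ + j * α by simp only [hσ]; ring] at hb
  refine hb.trans ?_
  refine mul_le_mul_of_nonneg_right ?_ (abs_nonneg _)
  have hk : (k:ℝ) + 1 ≤ Real.exp (ε / 6 * M + C4) := by
    refine le_trans ?_ (h4 M (by positivity))
    have := twoWin_card hS
    rw [hcard] at this
    exact_mod_cast this
  rw [show ε * M + (2 * C1 + 2 * C2 + C3 + C4) = (ε / 6 * M + C4) + ((ε / 6 * M + C1) + (ε / 6 * M + C1) + (ε / 6 * M + C2) + (ε / 6 * M + C2) + (ε / 6 * M + C3)) by ring]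
  simp only [Real.exp_add (ε / 6 * M + C4), Real.exp_add (_ + _ + _ + _) (ε / 6 * M + C3), Real.exp_add (_ + _ + _) (ε / 6 * M + C2), Real.exp_add (_ + _) (ε / 6 * M + C2), Real.exp_add (ε / 6 * M + C1) (ε / 6 * M + C1)]
  rw [mul_assoc]
  rw [← mul_assoc]
  have h00 : 0 ≤ Real.exp (ε / 6 * M + C1) * Real.exp (ε / 6 * M + C1) * Real.exp (ε / 6 * M + C2) * Real.exp (ε / 6 * M + C2) * Real.exp (ε / 6 * M + C3) * ρ⁻¹ := by positivity
  have := mul_le_mul_of_nonneg_right hk h00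
  simpa [mul_assoc] using this

lemma dt_bound {lam α E Em : ℝ} (hl : 0 ≤ lam) (hE : |E| ≤ Em) (k : ℕ) (t : ℝ) :
    |dt lam α E k t| ≤ (Em + 2 * lam + 1) ^ k := by
  have hEm : 0 ≤ Em := (abs_nonneg _).trans hE
  have hb : ∀ c : ℝ, |E - 2 * lam * cos c| ≤ Em + 2 * lam := by
    intro c
    refine (abs_sub _ _).trans (add_le_add hE ?_)
    rw [abs_mul, abs_of_nonneg (by positivity : 0 ≤ 2 * lam)]
    exact mul_le_of_le_one_right (by positivity) (Real.abs_cos_le_one _)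
  have h : |dt lam α E k t| ≤ (Em + 2 * lam + 1) ^ k ∧ |dt lam α E (k + 1) t| ≤ (Em + 2 * lam + 1) ^ (k + 1) := by
    induction k with
    | zero => rw [dt_zero, zero_add, dt_one]; simp; linarith [hb (2 * π * t)]
    | succ k ih =>
      refine ⟨ih.2, ?_⟩
      rw [show k + 1 + 1 = k + 2 from rfl, dt_ss]
      refine (abs_sub _ _).trans ?_
      rw [abs_mul]
      have h1 : (Em + 2 * lam + 1) ^ k ≤ (Em + 2 * lam + 1) ^ (k + 1) := pow_le_pow_right₀ (by linarith) (by omega)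
      calc _ ≤ (Em + 2 * lam) * (Em + 2 * lam + 1) ^ (k + 1) + (Em + 2 * lam + 1) ^ (k + 1) :=
            add_le_add (mul_le_mul (hb _) ih.2 (abs_nonneg _) (by positivity)) (ih.1.trans h1)
        _ = _ := by ring
  exact h.1

/-- maximal size of determinants up to length `k` -/
def qq (lam α E : ℝ) (k : ℕ) : ℝ := ⨆ p : Fin (k + 1) × ℝ, |dt lam α E p.1 p.2|

lemma qq_bdd {lam : ℝ} (hl : 0 ≤ lam) (α E : ℝ) (k : ℕ) :
    BddAbove (Set.range fun p : Fin (k + 1) × ℝ => |dt lam α E p.1 p.2|) := by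
  refine ⟨(|E| + 2 * lam + 1) ^ k, ?_⟩
  rintro _ ⟨p, rfl⟩
  refine (dt_bound hl le_rfl _ _).trans (pow_le_pow_right₀ (by linarith [abs_nonneg E]) (by omega))

lemma le_qq {lam : ℝ} (hl : 0 ≤ lam) (α E : ℝ) {i k : ℕ} (h : i ≤ k) (t : ℝ) :
    |dt lam α E i t| ≤ qq lam α E k :=
  le_ciSup (f := fun p : Fin (k + 1) × ℝ => |dt lam α E p.1 p.2|) (qq_bdd hl α E k) (⟨⟨i, by omega⟩, t⟩ : Fin (k + 1) × ℝ)

lemma qq_le {lam α E : ℝ} {k : ℕ} {B : ℝ} (h : ∀ i ≤ k, ∀ t, |dt lam α E i t| ≤ B) :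
    qq lam α E k ≤ B := ciSup_le fun p => h _ (by omega) _

lemma one_le_qq {lam : ℝ} (hl : 0 ≤ lam) (α E : ℝ) (k : ℕ) : 1 ≤ qq lam α E k := by
  have := le_qq hl α E (Nat.zero_le k) 0
  simpa [dt_zero] using this

lemma exists_qq {lam : ℝ} (hl : 0 ≤ lam) (α E : ℝ) (k : ℕ) :
    ∃ i ≤ k, ∃ t, qq lam α E k ≤ 2 * |dt lam α E i t| := by
  have h1 := one_le_qq hl α E k
  by_contra! h
  have : qq lam α E k ≤ qq lam α E k / 2 := qq_le fun i hi t => by linarith [h i hi t]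
  linarith

lemma qq_mono {lam : ℝ} (hl : 0 ≤ lam) (α E : ℝ) {i k : ℕ} (h : i ≤ k) : qq lam α E i ≤ qq lam α E k :=
  qq_le fun _ hj t => le_qq hl α E (hj.trans h) t

lemma qq_add {lam : ℝ} (hl : 0 ≤ lam) (α E : ℝ) (j k : ℕ) :
    qq lam α E (j + k) ≤ 2 * (qq lam α E j * qq lam α E k) := by
  have hj := one_le_qq hl α E j
  have hk := one_le_qq hl α E k
  refine qq_le fun i hi t => ?_
  rcases le_or_gt i j with h | h
  · have := le_qq hl α E h t
    nlinarith
  rcases Nat.eq_zero_or_pos j with rfl | hj0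
  · have := le_qq hl α E (show i ≤ k by omega) t
    nlinarith
  obtain ⟨j', rfl⟩ : ∃ j', j = j' + 1 := ⟨j - 1, by omega⟩
  obtain ⟨l, rfl⟩ : ∃ l, i = j' + l + 2 := ⟨i - j' - 2, by omega⟩
  rw [dt_mul]
  refine (abs_sub _ _).trans ?_
  rw [abs_mul, abs_mul, two_mul]
  gcongr
  · exact le_qq hl α E le_rfl t
  · exact le_qq hl α E (by omega) _
  · exact le_qq hl α E (by omega) t
  · exact le_qq hl α E (by omega) _

lemma lam_pow_le_qq {lam : ℝ} (hl : 0 ≤ lam) (α E : ℝ) (k : ℕ) : lam ^ k ≤ qq lam α E k :=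
  herman hl α E k _ fun t => le_qq hl α E le_rfl t

def fq (lam α E : ℝ) (k : ℕ) : ℝ := Real.log (2 * qq lam α E k)

lemma fq_nonneg {lam : ℝ} (hl : 0 ≤ lam) (α E : ℝ) (k : ℕ) : 0 ≤ fq lam α E k :=
  Real.log_nonneg (by linarith [one_le_qq hl α E k])

lemma fq_add {lam : ℝ} (hl : 0 ≤ lam) (α E : ℝ) (j k : ℕ) : fq lam α E (j + k) ≤ fq lam α E j + fq lam α E k := by
  have hj := one_le_qq hl α E j
  have hk := one_le_qq hl α E k
  have hjk := one_le_qq hl α E (j + k)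
  rw [fq, fq, fq, ← Real.log_mul (by positivity) (by positivity)]
  apply Real.log_le_log (by positivity)
  linarith [qq_add hl α E j k]

lemma fq_mul {lam : ℝ} (hl : 0 ≤ lam) (α E : ℝ) (n k : ℕ) (hn : 0 < n) : fq lam α E (n * k) ≤ n * fq lam α E k := by
  induction n, hn using Nat.le_induction with
  | base => simp
  | succ n hn ih =>
    rw [Nat.succ_mul]; push_cast
    linarith [fq_add hl α E (n * k) k]

lemma fq_mono {lam : ℝ} (hl : 0 ≤ lam) (α E : ℝ) {i k : ℕ} (h : i ≤ k) : fq lam α E i ≤ fq lam α E k := by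
  have := one_le_qq hl α E i
  exact Real.log_le_log (by positivity) (by linarith [qq_mono hl α E h])

lemma fq_le {lam : ℝ} (hl : 0 ≤ lam) (α E : ℝ) (j k : ℕ) (hk : 0 < k) :
    fq lam α E j ≤ (j + k) * (fq lam α E k / k) := by
  have h1 : j ≤ (j / k + 1) * k := by
    have := Nat.div_add_mod j k; have := Nat.mod_lt j hk; nlinarith
  have h2 := (fq_mono hl α E h1).trans (fq_mul hl α E (j / k + 1) k (Nat.succ_pos _))
  refine h2.trans ?_
  have h3 : (((j / k + 1 : ℕ)) : ℝ) * k ≤ j + k := by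
    have := Nat.div_mul_le_self j k
    have : (j / k + 1) * k ≤ j + k := by rw [add_mul]; omega
    exact_mod_cast this
  have hk' : (0:ℝ) < k := by exact_mod_cast hk
  have h4 := fq_nonneg hl α E k
  calc ((j / k + 1 : ℕ) : ℝ) * fq lam α E k = (((j / k + 1 : ℕ)) : ℝ) * k * (fq lam α E k / k) := by field_simp
    _ ≤ _ := by gcongr

lemma fq_ge {lam : ℝ} (hl : 1 < lam) (α E : ℝ) (k : ℕ) : k * Real.log lam ≤ fq lam α E k := by
  rw [← Real.log_pow]
  have := lam_pow_le_qq (by linarith : 0 ≤ lam) α E k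
  have := one_le_qq (by linarith : 0 ≤ lam) α E k
  exact Real.log_le_log (by positivity) (by linarith)

lemma fq_up {lam α E Em : ℝ} (hl : 0 ≤ lam) (hE : |E| ≤ Em) (k : ℕ) (hk : 0 < k) :
    fq lam α E k ≤ k * Real.log (2 * (Em + 2 * lam + 1)) := by
  have hEm : 0 ≤ Em := (abs_nonneg _).trans hE
  have h1 : qq lam α E k ≤ (Em + 2 * lam + 1) ^ k := qq_le fun i hi t =>
    (dt_bound hl hE i t).trans (pow_le_pow_right₀ (by linarith) hi)
  have := one_le_qq hl α E k
  rw [← Real.log_pow]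
  apply Real.log_le_log (by positivity)
  rw [mul_pow]
  have h2 : (2:ℝ) ≤ 2 ^ k := le_self_pow₀ (by norm_num) (by omega)
  gcongr

lemma dt_le_exp_fq {lam : ℝ} (hl : 0 ≤ lam) (α E : ℝ) (j : ℕ) (t : ℝ) :
    |dt lam α E j t| ≤ Real.exp (fq lam α E j) := by
  have := one_le_qq hl α E j
  rw [fq, Real.exp_log (by positivity)]
  linarith [le_qq hl α E le_rfl t (i := j)]

def Gam (lam Em : ℝ) : ℝ := Real.log (2 * (Em + 2 * lam + 1))

set_option maxHeartbeats 1000000 in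
lemma scale_lemma {lam : ℝ} (hl : 1 < lam) (α : ℝ) {Em : ℝ} (hEm : 0 ≤ Em) {ε h' : ℝ} (hε : 0 < ε) (hh' : 0 < h') :
    ∃ h : ℝ, 0 < h ∧ ∃ R0 : ℕ, ∀ R : ℕ, R0 ≤ R → ∀ E, |E| ≤ Em → ∃ (k : ℕ) (ℓ t0 : ℝ),
      h * R ≤ k ∧ k ≤ h' * R ∧ Real.log lam ≤ ℓ ∧ ℓ ≤ Gam lam Em ∧
      Real.exp (ℓ * k) ≤ 4 * |dt lam α E k t0| ∧
      ∀ j t, |dt lam α E j t| ≤ Real.exp ((ℓ + ε) * j + ε * k) := by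
  have hl0 : 0 ≤ lam := by linarith
  have hll : 0 < Real.log lam := Real.log_pos hl
  set Γ := Gam lam Em with hΓ
  -- auxiliary small parameter
  obtain ⟨e, he0, hee, hel⟩ : ∃ e : ℝ, 0 < e ∧ 4 * e ≤ ε ∧ 12 * e ≤ Real.log lam :=
    ⟨min (ε / 4) (Real.log lam / 12), by positivity, by linarith [min_le_left (ε / 4) (Real.log lam / 12)],
      by linarith [min_le_right (ε / 4) (Real.log lam / 12)]⟩
  have hΓ0 : 0 < Γ := Real.log_pos (by linarith)
  obtain ⟨B, hB⟩ := exists_nat_ge ((Γ + e) / e + 1)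
  have hB1 : (1:ℝ) ≤ B := by have : 0 < (Γ + e) / e := by positivity
                             linarith
  have hBe : (Γ + e) ≤ e * B := by
    have : (Γ + e) / e ≤ B := by linarith
    rwa [div_le_iff₀' he0] at this
  obtain ⟨N, hN⟩ := exists_nat_gt (Γ / e)
  have hNe : Γ < N * e := by rwa [div_lt_iff₀ he0] at hN
  have hB0 : (0:ℝ) < B := by linarith
  have hB0' : 0 < B := by exact_mod_cast hB0
  set h0 := h' / (2 * B ^ N) with hh0
  have hh0' : 0 < h0 := by positivity
  obtain ⟨R0, hR0⟩ := exists_nat_ge (1 / h0 + Real.log 4 / e / h0 + 1)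
  refine ⟨h0 / 2, by positivity, R0, fun R hR E hE => ?_⟩
  have hRr : 1 / h0 + Real.log 4 / e / h0 + 1 ≤ R := hR0.trans (by exact_mod_cast hR)
  have hlog4 : 0 < Real.log 4 := Real.log_pos (by norm_num)
  have hR1 : 1 ≤ h0 * R := by
    have : 1 / h0 ≤ R := by
      have : 0 < Real.log 4 / e / h0 := by positivity
      linarith
    rwa [div_le_iff₀' hh0'] at this
  have hR2 : Real.log 4 ≤ e * (h0 * R) := by
    have : Real.log 4 / e / h0 ≤ R := by
      have : 0 < 1 / h0 := by positivity
      linarith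
    rwa [div_le_iff₀' hh0', div_le_iff₀' he0] at this
  set k0 := ⌈h0 * R⌉₊ with hk0
  have hk0l : h0 * R ≤ k0 := Nat.le_ceil _
  have hk0u : (k0:ℝ) ≤ 2 * (h0 * R) := by
    have := Nat.ceil_lt_add_one (by linarith : 0 ≤ h0 * R); linarith
  have hk0p : (0:ℝ) < k0 := by linarith
  have hk0p' : 0 < k0 := by exact_mod_cast hk0p
  set a : ℕ → ℝ := fun n => fq lam α E (k0 * B ^ n) / ((k0 * B ^ n : ℕ) : ℝ) with ha
  have kpos : ∀ n, 0 < k0 * B ^ n := fun n => by positivity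
  have kpos' : ∀ n, (0:ℝ) < ((k0 * B ^ n : ℕ) : ℝ) := fun n => by exact_mod_cast kpos n
  have ha_lo : ∀ n, Real.log lam ≤ a n := by
    intro n; rw [ha, le_div_iff₀ (kpos' n)]; linarith [fq_ge hl α E (k0 * B ^ n)]
  have ha_up : ∀ n, a n ≤ Γ := by
    intro n
    have : fq lam α E (k0 * B ^ n) ≤ ((k0 * B ^ n : ℕ) : ℝ) * Γ := fq_up hl0 hE _ (kpos n)
    rw [ha, div_le_iff₀ (kpos' n)]; linarith
  obtain ⟨n, hn, hdrop⟩ : ∃ n < N, a n - a (n + 1) ≤ e := by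
    by_contra! hcon
    have : ∀ n ≤ N, a n ≤ a 0 - n * e := by
      intro n
      induction n with
      | zero => simp
      | succ n ih => intro hn; push_cast; linarith [ih (by omega), hcon n (by omega)]
    linarith [this N le_rfl, ha_lo N, ha_up 0]
  set k := k0 * B ^ (n + 1) with hk
  set ki := k0 * B ^ n with hki
  have hkk : (k:ℝ) = ki * B := by rw [hk, hki]; push_cast; ring
  have hkp := kpos' (n + 1)
  set ℓ := a (n + 1) with hℓ
  have hfk : fq lam α E k = ℓ * k := (div_mul_cancel₀ _ hkp.ne').symm
  have hki0 : (ki:ℝ) * (Γ + e) ≤ e * k := by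
    rw [hkk]; nlinarith [kpos' n]
  have hfj : ∀ j : ℕ, fq lam α E j ≤ (ℓ + e) * j + e * k := by
    intro j
    have h1 := fq_le hl0 α E j ki (kpos n)
    change _ ≤ _ * a n at h1
    have h2 : (ki:ℝ) * a n ≤ ki * (Γ + e) := by
      have := ha_up n; have := kpos' n; gcongr; linarith
    have h3 : (j:ℝ) * a n ≤ j * (ℓ + e) := by gcongr; linarith
    linarith
  obtain ⟨k', hk', t0, ht0⟩ := exists_qq hl0 α E k
  have hq1 := one_le_qq hl0 α E k
  have hexp : Real.exp (ℓ * k) ≤ 4 * |dt lam α E k' t0| := by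
    rw [← hfk, fq, Real.exp_log (by positivity)]; linarith
  have hk'r : (k':ℝ) ≤ k := by exact_mod_cast hk'
  have hkh : h0 * R ≤ k := by
    refine hk0l.trans ?_
    have : k0 ≤ k := Nat.le_mul_of_pos_right _ (by positivity)
    exact_mod_cast this
  have hℓl := ha_lo (n + 1)
  have hℓu := ha_up (n + 1)
  have hhalf : (k:ℝ) / 2 ≤ k' := by
    have h1 : ℓ * k - Real.log 4 ≤ fq lam α E k' := by
      have h2 := dt_le_exp_fq hl0 α E k' t0
      have h3 : Real.exp (ℓ * k - Real.log 4) ≤ Real.exp (fq lam α E k') := by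
        rw [Real.exp_sub, Real.exp_log (by norm_num)]; linarith
      exact Real.exp_le_exp.1 h3
    have h4 := hfj k'
    have h5 : Real.log 4 ≤ e * k := hR2.trans (by gcongr)
    by_contra! hcon
    have h6 : (ℓ + e) * k' ≤ (ℓ + e) * (k / 2) := by
      have : 0 < ℓ + e := by linarith
      gcongr
    nlinarith
  refine ⟨k', ℓ, t0, by linarith, ?_, hℓl, hℓu, ?_, fun j t => ?_⟩
  · refine hk'r.trans ?_
    have : (k:ℝ) ≤ k0 * B ^ N := by
      have h10 : k ≤ k0 * B ^ N := Nat.mul_le_mul_left _ (Nat.pow_le_pow_right hB0' (by omega))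
      exact_mod_cast h10
    refine this.trans ?_
    calc (k0:ℝ) * B ^ N ≤ 2 * (h0 * R) * B ^ N := by gcongr
      _ = h' * R := by rw [hh0]; field_simp
  · refine le_trans (Real.exp_le_exp.2 ?_) hexp
    have : 0 < ℓ := by linarith
    gcongr
  · refine (dt_le_exp_fq hl0 α E j t).trans (Real.exp_le_exp.2 ((hfj j).trans ?_))
    have : e * k ≤ 2 * e * k' := by
      have := mul_le_mul_of_nonneg_left hhalf he0.le
      linarith
    have h8 : (ℓ + e) * j ≤ (ℓ + ε) * j := by gcongr; linarith
    have h9 : 2 * e * k' ≤ ε * k' := by gcongr; linarith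
    linarith

lemma green_dt {lam α θ E : ℝ} {φ : ℤ → ℝ} (h : IsEigenfunction (amoPot lam α θ) E φ) (z : ℤ) (k t : ℕ)
    (ht : t < k) (b : ℕ → ℝ) (hb : ∀ j t, |dt lam α E j t| ≤ b j) :
    |φ z| * |dt lam α E k (θ + ((z - t : ℤ) : ℝ) * α)|
      ≤ b (k - 1 - t) * |φ (z - t - 1)| + b t * |φ (z - t + k)| := by
  have h1 := green h (z - t) t (k - 1 - t)
  rw [show t + (k - 1 - t) + 1 = k by omega] at h1
  simp only [cont_eq_dt] at h1
  rw [← abs_mul]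
  rw [show z - (t:ℤ) + t = z by ring] at h1
  rw [h1]
  refine (abs_add_le _ _).trans ?_
  rw [abs_mul, abs_mul]
  have h2 : z + ((k - 1 - t : ℕ) : ℤ) + 1 = z - t + k := by omega
  rw [h2]
  gcongr
  · exact hb _ _
  · exact hb _ _

def winI (z : ℤ) (p q : ℕ) : Finset ℤ := Finset.Ico (z - q) (z - p + 1)

lemma mem_winI {z j : ℤ} {p q : ℕ} : j ∈ winI z p q ↔ ∃ t : ℕ, p ≤ t ∧ t ≤ q ∧ j = z - t := by
  simp only [winI, Finset.mem_Ico]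
  constructor
  · intro h; exact ⟨(z - j).toNat, by omega, by omega, by omega⟩
  · rintro ⟨t, h1, h2, rfl⟩; omega

def NodeB (lam α ε C : ℝ) : Prop := ∀ (θ : ℝ) (M : ℕ) (S : Finset ℤ) (k : ℕ) (ρ : ℝ), TwoWin M S → S.card = k + 1 →
      0 < ρ → ρ ≤ 1 →
      (∀ i ∈ S, ∀ j ∈ S, i ≠ j → ρ ≤ sn (2 * θ + ((i + j + k - 1 : ℤ) : ℝ) * α)) →
      ∀ E t, ∃ j ∈ S, |dt lam α E k t| ≤ Real.exp (ε * M + C) * ρ⁻¹ * |dt lam α E k (θ + j * α)|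

lemma two_win {lam α θ ε C ρ : ℝ} (hN : NodeB lam α ε C) (hρ : 0 < ρ) (hρ1 : ρ ≤ 1) (M k : ℕ) (z1 z2 : ℤ) (p1 q1 p2 q2 : ℕ)
    (h1 : p1 ≤ q1) (h2 : p2 ≤ q2) (hq1 : q1 < k) (hq2 : q2 < k)
    (hc : (q1 - p1 + 1) + (q2 - p2 + 1) = k + 1)
    (hM1 : |z1| + k ≤ M) (hM2 : |z2| + k ≤ M)
    (hdis : z1 - p1 < z2 - q2 ∨ z2 - p2 < z1 - q1)
    (n1 : ∀ t t' : ℕ, t ≠ t' → p1 ≤ t → t ≤ q1 → p1 ≤ t' → t' ≤ q1 →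
      ρ ≤ sn (2 * θ + ((2 * z1 + k - 1 - t - t' : ℤ) : ℝ) * α))
    (n2 : ∀ t t' : ℕ, t ≠ t' → p2 ≤ t → t ≤ q2 → p2 ≤ t' → t' ≤ q2 →
      ρ ≤ sn (2 * θ + ((2 * z2 + k - 1 - t - t' : ℤ) : ℝ) * α))
    (n12 : ∀ t t' : ℕ, p1 ≤ t → t ≤ q1 → p2 ≤ t' → t' ≤ q2 →
      ρ ≤ sn (2 * θ + ((z1 + z2 + k - 1 - t - t' : ℤ) : ℝ) * α)) (E t0 : ℝ) :
    (∃ t : ℕ, p1 ≤ t ∧ t ≤ q1 ∧ |dt lam α E k t0| ≤ Real.exp (ε * M + C) * ρ⁻¹ * |dt lam α E k (θ + ((z1 - t : ℤ) : ℝ) * α)|)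
    ∨ (∃ t : ℕ, p2 ≤ t ∧ t ≤ q2 ∧ |dt lam α E k t0| ≤ Real.exp (ε * M + C) * ρ⁻¹ * |dt lam α E k (θ + ((z2 - t : ℤ) : ℝ) * α)|) := by
  have hD : Disjoint (winI z1 p1 q1) (winI z2 p2 q2) := by
    rw [Finset.disjoint_left]
    intro j hj hj'
    simp only [winI, Finset.mem_Ico] at hj hj'
    omega
  have hS : TwoWin M (winI z1 p1 q1 ∪ winI z2 p2 q2) := by
    refine ⟨?_, _, _, _, _, hD, rfl⟩
    intro j hj
    have a1 := abs_le.1 (show |z1| ≤ (M:ℤ) - k by linarith)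
    have a2 := abs_le.1 (show |z2| ≤ (M:ℤ) - k by linarith)
    rcases Finset.mem_union.1 hj with hj | hj <;> simp only [winI, Finset.mem_Ico] at hj <;>
      simp only [Finset.mem_Icc] <;> omega
  obtain ⟨j, hj, hb⟩ := hN θ M _ k ρ hS (by
      rw [Finset.card_union_of_disjoint hD]; simp [winI]; omega) hρ hρ1 (by
      intro i hi j hj hij
      rcases Finset.mem_union.1 hi with hi | hi <;> rcases Finset.mem_union.1 hj with hj | hj <;>
        obtain ⟨t, ht, ht', rfl⟩ := mem_winI.1 hi <;> obtain ⟨t', htt, htt', rfl⟩ := mem_winI.1 hj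
      · convert n1 t t' (by omega) ht ht' htt htt' using 5; ring
      · convert n12 t t' ht ht' htt htt' using 5; ring
      · convert n12 t' t htt htt' ht ht' using 5; ring
      · convert n2 t t' (by omega) ht ht' htt htt' using 5; ring) E t0
  rcases Finset.mem_union.1 hj with hj | hj <;> obtain ⟨t, ht, ht', rfl⟩ := mem_winI.1 hj
  · exact Or.inl ⟨t, ht, ht', hb⟩
  · exact Or.inr ⟨t, ht, ht', hb⟩

/-- estimate of `φ z` by the values at the two ends of a window -/
def GoodAt (φ : ℤ → ℝ) (ℓ e : ℝ) (k : ℕ) (z : ℤ) (t : ℕ) : Prop :=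
  |φ z| ≤ Real.exp (-ℓ * (t + 1) + 3 * e * k) * |φ (z - t - 1)| + Real.exp (-ℓ * (k - t) + 3 * e * k) * |φ (z - t + k)|

lemma goodAt_of {lam α θ E : ℝ} {φ : ℤ → ℝ} (h : IsEigenfunction (amoPot lam α θ) E φ) {ℓ e B : ℝ} {k : ℕ} {z : ℤ} {t : ℕ} {t0 : ℝ}
    (he : 0 < e) (ht : t < k) (hb : ∀ j t, |dt lam α E j t| ≤ Real.exp ((ℓ + e) * j + e * k))
    (ht0 : Real.exp (ℓ * k) ≤ 4 * |dt lam α E k t0|) (hB : 4 * B ≤ Real.exp (e * k))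
    (hn : |dt lam α E k t0| ≤ B * |dt lam α E k (θ + ((z - t : ℤ) : ℝ) * α)|) : GoodAt φ ℓ e k z t := by
  have h1 := green_dt h z k t ht _ hb
  set X := |dt lam α E k (θ + ((z - t : ℤ) : ℝ) * α)| with hX
  have hX0 : 0 ≤ X := abs_nonneg _
  have h2 : Real.exp (ℓ * k - e * k) ≤ X := by
    rw [Real.exp_sub, div_le_iff₀ (Real.exp_pos _)]
    calc _ ≤ 4 * (B * X) := by linarith
      _ = X * (4 * B) := by ring
      _ ≤ _ := by gcongr
  have h3 : |φ z| * Real.exp (ℓ * k - e * k) ≤ _ := (mul_le_mul_of_nonneg_left h2 (abs_nonneg _)).trans h1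
  rw [← le_div_iff₀ (Real.exp_pos _), add_div] at h3
  refine h3.trans (add_le_add ?_ ?_)
  · rw [mul_div_right_comm, ← Real.exp_sub]
    gcongr
    rw [Nat.cast_sub (by omega), Nat.cast_sub (by omega)]
    push_cast
    have : 0 ≤ e * (t + 1) := by positivity
    nlinarith
  · rw [mul_div_right_comm, ← Real.exp_sub]
    gcongr
    have : e * t ≤ e * k := by gcongr
    nlinarith

lemma regular_site {lam α θ E ε C ρ : ℝ} (hN : NodeB lam α ε C) (hρ : 0 < ρ) (hρ1 : ρ ≤ 1) {φ : ℤ → ℝ}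
    (h : IsEigenfunction (amoPot lam α θ) E φ) {ℓ e : ℝ} {k M : ℕ} {t0 K : ℝ} {nres m x : ℤ}
    (he : 0 < e) (hk : 0 < k) (hb : ∀ j t, |dt lam α E j t| ≤ Real.exp ((ℓ + e) * j + e * k))
    (ht0 : Real.exp (ℓ * k) ≤ 4 * |dt lam α E k t0|) (hB : 4 * (Real.exp (ε * M + C) * ρ⁻¹) ≤ Real.exp (e * k))
    (hM1 : |m| + k ≤ M) (hM2 : |x| + k ≤ M)
    (hres : ∀ n : ℤ, n ≠ nres → |n| ≤ 2 * M → ρ ≤ sn (2 * θ + n * α))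
    (hmax : ∀ n, |φ n| ≤ K * |φ m|) (hm : 0 < |φ m|)
    (hℓ : 72 * e ≤ ℓ) (hK : 2 * K < Real.exp (9 * e * k))
    (hxm : (k:ℤ) ≤ |x - m|) (hxy : (k:ℤ) ≤ |x - (nres - m)|) :
    ∃ t : ℕ, (k - 1) / 6 ≤ t ∧ t + (k - 1) / 6 + 1 ≤ k ∧ GoodAt φ ℓ e k x t := by
  set u := (k - 1) / 6 with hu
  have a1 := abs_le.1 (show |m| ≤ (M:ℤ) - k by linarith)
  have a2 := abs_le.1 (show |x| ≤ (M:ℤ) - k by linarith)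
  have hx1 := le_abs.1 hxm
  have hx2 := le_abs.1 hxy
  have hres' : ∀ n : ℤ, n ≠ nres → -(2 * M) ≤ n → n ≤ 2 * M → ρ ≤ sn (2 * θ + n * α) :=
    fun n h1 h2 h3 => hres n h1 (abs_le.2 ⟨h2, h3⟩)
  have notm : ∀ t : ℕ, u ≤ t → t + u + 1 ≤ k → ¬ GoodAt φ ℓ e k m t := by
    intro t ht1 ht2 hg
    have hb1 : (k:ℝ) / 6 ≤ t + 1 := by
      have : k ≤ 6 * (t + 1) := by omega
      have : (k:ℝ) ≤ 6 * (t + 1) := by exact_mod_cast this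
      linarith
    have hb2 : (k:ℝ) / 6 ≤ k - t := by
      have : k + 6 * t ≤ 6 * k := by omega
      have : (k:ℝ) + 6 * t ≤ 6 * k := by exact_mod_cast this
      linarith
    have key : ∀ b : ℝ, (k:ℝ) / 6 ≤ b → Real.exp (-ℓ * b + 3 * e * k) ≤ Real.exp (-(9 * e * k)) := by
      intro b hb
      apply Real.exp_le_exp.2
      have : ℓ * (k / 6) ≤ ℓ * b := by gcongr; linarith
      have : 72 * e * k ≤ ℓ * k := by gcongr
      linarith
    have h1 : |φ m| ≤ Real.exp (-(9 * e * k)) * (K * |φ m|) + Real.exp (-(9 * e * k)) * (K * |φ m|) := by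
      exact hg.trans (add_le_add (mul_le_mul (key _ hb1) (hmax _) (abs_nonneg _) (Real.exp_pos _).le) (mul_le_mul (key _ hb2) (hmax _) (abs_nonneg _) (Real.exp_pos _).le))
    rw [Real.exp_neg, ← mul_add, ← div_eq_inv_mul, le_div_iff₀ (Real.exp_pos _)] at h1
    nlinarith
  have hgood : ∀ (z : ℤ) (t : ℕ), t < k → |dt lam α E k t0| ≤ Real.exp (ε * M + C) * ρ⁻¹ * |dt lam α E k (θ + ((z - t : ℤ) : ℝ) * α)| → GoodAt φ ℓ e k z t :=
    fun z t ht hh => goodAt_of h he ht hb ht0 hB hh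
  have h6 : 6 * u ≤ k - 1 := by omega
  have h6' : k - 1 < 6 * u + 6 := by omega
  clear_value u
  -- centred window at z1, one-sided at z2
  have main : ∀ z1 z2 : ℤ, (z1 = m ∧ z2 = x ∨ z1 = x ∧ z2 = m) → ((k:ℤ) ≤ 2 * z1 - nres ∨ (k:ℤ) ≤ -(2 * z1 - nres)) →
      (∃ t : ℕ, u ≤ t ∧ t + u + 1 ≤ k ∧ GoodAt φ ℓ e k z1 t) ∨ (∃ t : ℕ, u ≤ t ∧ t + u + 1 ≤ k ∧ GoodAt φ ℓ e k z2 t) := by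
    intro z1 z2 hz hz1
    have hz1M : |z1| + k ≤ M := by rcases hz with ⟨rfl, rfl⟩ | ⟨rfl, rfl⟩ <;> assumption
    have hz2M : |z2| + k ≤ M := by rcases hz with ⟨rfl, rfl⟩ | ⟨rfl, rfl⟩ <;> assumption
    rcases le_or_gt nres (2 * z2) with hside | hside
    · have := two_win (θ := θ) hN hρ hρ1 M k z1 z2 u (k - 1 - u) u (3 * u) (by omega) (by omega) (by omega) (by omega) (by omega)
        hz1M hz2M (by rcases hz with ⟨rfl, rfl⟩ | ⟨rfl, rfl⟩ <;> omega)
        (by intro t t' h1 h2 h3 h4 h5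
            apply hres' <;> rcases hz with ⟨rfl, rfl⟩ | ⟨rfl, rfl⟩ <;> omega)
        (by intro t t' h1 h2 h3 h4 h5
            apply hres' <;> rcases hz with ⟨rfl, rfl⟩ | ⟨rfl, rfl⟩ <;> omega)
        (by intro t t' h1 h2 h3 h4
            apply hres' <;> rcases hz with ⟨rfl, rfl⟩ | ⟨rfl, rfl⟩ <;> omega) E t0
      rcases this with ⟨t, h1, h2, h3⟩ | ⟨t, h1, h2, h3⟩
      · exact Or.inl ⟨t, by omega, by omega, hgood _ _ (by omega) h3⟩
      · exact Or.inr ⟨t, by omega, by omega, hgood _ _ (by omega) h3⟩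
    · have := two_win (θ := θ) hN hρ hρ1 M k z1 z2 u (k - 1 - u) (k - 1 - 3 * u) (k - 1 - u) (by omega) (by omega) (by omega) (by omega) (by omega)
        hz1M hz2M (by rcases hz with ⟨rfl, rfl⟩ | ⟨rfl, rfl⟩ <;> omega)
        (by intro t t' h1 h2 h3 h4 h5
            apply hres' <;> rcases hz with ⟨rfl, rfl⟩ | ⟨rfl, rfl⟩ <;> omega)
        (by intro t t' h1 h2 h3 h4 h5
            apply hres' <;> rcases hz with ⟨rfl, rfl⟩ | ⟨rfl, rfl⟩ <;> omega)
        (by intro t t' h1 h2 h3 h4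
            apply hres' <;> rcases hz with ⟨rfl, rfl⟩ | ⟨rfl, rfl⟩ <;> omega) E t0
      rcases this with ⟨t, h1, h2, h3⟩ | ⟨t, h1, h2, h3⟩
      · exact Or.inl ⟨t, by omega, by omega, hgood _ _ (by omega) h3⟩
      · exact Or.inr ⟨t, by omega, by omega, hgood _ _ (by omega) h3⟩
  by_cases hc : (k:ℤ) ≤ 2 * m - nres ∨ (k:ℤ) ≤ -(2 * m - nres)
  · rcases main m x (Or.inl ⟨rfl, rfl⟩) hc with ⟨t, h1, h2, h3⟩ | h3
    · exact absurd h3 (notm t h1 h2)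
    · exact h3
  · rcases main x m (Or.inr ⟨rfl, rfl⟩) (by omega) with h3 | ⟨t, h1, h2, h3⟩
    · exact h3
    · exact absurd h3 (notm t h1 h2)

def AMax (lam α θ K Em E : ℝ) (φ : ℤ → ℝ) (m : ℤ) : Prop :=
  IsEigenfunction (amoPot lam α θ) E φ ∧ (∀ n, |φ n| ≤ K * |φ m|) ∧ 0 < |φ m| ∧ |E| ≤ Em

def NonRes (α θ ε1 : ℝ) (R : ℕ) (nres : ℤ) : Prop :=
  ∀ n : ℤ, n ≠ nres → |n| ≤ 60 * R → Real.exp (-(ε1 * R)) ≤ sn (2 * θ + n * α)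

def Decay (lam α E K : ℝ) (φ : ℤ → ℝ) (m nres : ℤ) (ν : ℝ) (R : ℕ) (ℓ : ℝ) : Prop :=
  (∀ (j : ℕ) t, |dt lam α E j t| ≤ Real.exp (ℓ * j + ν * (R + j))) ∧
  ∀ z d : ℤ, |z| ≤ 20 * R → d ≤ |z - m| → d ≤ |z - (nres - m)| → d ≤ 20 * R - |z| →
    |φ z| ≤ K * |φ m| * Real.exp (-ℓ * d + ν * R)

lemma max_principle {ℓ e A : ℝ} {φ : ℤ → ℝ} {k R : ℕ} {m y : ℤ} (he : 0 < e) (hℓ : 36 * e ≤ ℓ) (hk : Real.log 2 < 3 * e * k)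
    (hA : ∀ n, |φ n| ≤ A)
    (hreg : ∀ x : ℤ, |x| + k ≤ 20 * R → (k:ℤ) ≤ |x - m| → (k:ℤ) ≤ |x - y| →
      ∃ t : ℕ, (k - 1) / 6 ≤ t ∧ t + (k - 1) / 6 + 1 ≤ k ∧ GoodAt φ ℓ e k x t)
    (z d : ℤ) (hz : |z| ≤ 20 * R) (h1 : d ≤ |z - m|) (h2 : d ≤ |z - y|) (h3 : d ≤ 20 * R - |z|) :
    |φ z| ≤ A * Real.exp ((ℓ - 36 * e) * k - (ℓ - 36 * e) * d) := by
  set c := ℓ - 36 * e with hc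
  have hc0 : 0 ≤ c := by linarith
  have hA0 : 0 ≤ A := (abs_nonneg _).trans (hA 0)
  let dd : ℤ → ℤ := fun z => min (min |z - m| |z - y|) (20 * R - |z|)
  have hdd : ∀ z, dd z = min (min |z - m| |z - y|) (20 * R - |z|) := fun _ => rfl
  obtain ⟨w, hw, hmax⟩ := Finset.exists_max_image (Finset.Icc (-(20 * R:ℤ)) (20 * R))
    (fun z => |φ z| * Real.exp (c * dd z)) ⟨0, by simp⟩
  have hmax' : ∀ x : ℤ, |x| ≤ 20 * R → |φ x| * Real.exp (c * dd x) ≤ |φ w| * Real.exp (c * dd w) := by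
    intro x hx
    exact hmax x (Finset.mem_Icc.2 (abs_le.1 hx))
  have hw' : |w| ≤ 20 * R := abs_le.2 (Finset.mem_Icc.1 hw)
  have hfin : |φ w| * Real.exp (c * dd w) ≤ A * Real.exp (c * k) → |φ z| ≤ A * Real.exp (c * k - c * d) := by
    intro hh
    have hd : d ≤ dd z := by simp [hdd, *]
    have hd' : (d:ℝ) ≤ dd z := by exact_mod_cast hd
    rw [Real.exp_sub, ← mul_div_assoc, le_div_iff₀ (Real.exp_pos _)]
    refine le_trans ?_ ((hmax' z hz).trans hh)
    gcongr
  apply hfin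
  by_cases hk1 : dd w ≤ k
  · have : (dd w:ℝ) ≤ k := by exact_mod_cast hk1
    have := hA w
    gcongr
  · push Not at hk1
    have g1 : (k:ℤ) < |w - m| := hk1.trans_le (by simp [hdd])
    have g2 : (k:ℤ) < |w - y| := hk1.trans_le (by simp [hdd])
    have g3 : (k:ℤ) < 20 * R - |w| := hk1.trans_le (by simp [hdd])
    obtain ⟨t, ht1, ht2, hg⟩ := hreg w (by linarith) g1.le g2.le
    have hlip : ∀ x : ℤ, dd w - |x - w| ≤ dd x := by
      intro x
      have b1 := abs_sub_le w x m
      have b2 := abs_sub_le w x y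
      have b3 := abs_sub_abs_le_abs_sub x w
      rw [abs_sub_comm w x] at b1 b2
      have c1 : dd w ≤ |w - m| := (min_le_left _ _).trans (min_le_left _ _)
      have c2 : dd w ≤ |w - y| := (min_le_left _ _).trans (min_le_right _ _)
      have c3 : dd w ≤ 20 * R - |w| := min_le_right _ _
      exact le_min (le_min (by linarith) (by linarith)) (by linarith)
    have hstep : ∀ x : ℤ, ∀ b : ℝ, |x| ≤ 20 * R → ((|x - w| : ℤ) : ℝ) = b → (k:ℝ) / 6 ≤ b →
        Real.exp (-ℓ * b + 3 * e * k) * |φ x| ≤ |φ w| * Real.exp (-(3 * e * k)) := by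
      intro x b hx hb hkb
      have q1 := hmax' x hx
      have q2 : (dd w : ℝ) - b ≤ dd x := by
        rw [← hb]; exact_mod_cast hlip x
      have q3 : |φ x| ≤ |φ w| * Real.exp (c * b) := by
        rw [← le_div_iff₀ (Real.exp_pos _)] at q1
        refine q1.trans ?_
        rw [mul_div_assoc, ← Real.exp_sub]
        gcongr
        nlinarith
      calc _ ≤ Real.exp (-ℓ * b + 3 * e * k) * (|φ w| * Real.exp (c * b)) := by gcongr
        _ = |φ w| * Real.exp (-(36 * e) * b + 3 * e * k) := by
          rw [mul_left_comm, ← Real.exp_add]; congr 2; rw [hc]; ring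
        _ ≤ _ := by
          gcongr
          have : e * (k / 6) ≤ e * b := by gcongr
          linarith
    have hb1 : (k:ℝ) / 6 ≤ t + 1 := by
      have : k ≤ 6 * (t + 1) := by omega
      have : (k:ℝ) ≤ 6 * (t + 1) := by exact_mod_cast this
      linarith
    have hb2 : (k:ℝ) / 6 ≤ k - t := by
      have : k + 6 * t ≤ 6 * k := by omega
      have : (k:ℝ) + 6 * t ≤ 6 * k := by exact_mod_cast this
      linarith
    have s1 := hstep (w - t - 1) (t + 1) (by rw [abs_le]; have := abs_le.1 (show |w| ≤ 20 * R - k by linarith); omega)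
      (by rw [show w - t - 1 - w = -((t + 1 : ℕ) : ℤ) by push_cast; ring, abs_neg, Nat.abs_cast]; push_cast; ring) hb1
    have s2 := hstep (w - t + k) (k - t) (by rw [abs_le]; have := abs_le.1 (show |w| ≤ 20 * R - k by linarith); omega)
      (by rw [show w - t + k - w = ((k - t : ℕ) : ℤ) by omega, Nat.abs_cast]; push_cast [show t ≤ k by omega]; rfl) hb2
    have h5 : |φ w| ≤ |φ w| * (2 * Real.exp (-(3 * e * k))) := by
      have := hg.trans (add_le_add s1 s2); linarith
    have h6 : 2 * Real.exp (-(3 * e * k)) < 1 := by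
      rw [Real.exp_neg, ← div_eq_mul_inv, div_lt_one (Real.exp_pos _)]
      rwa [← Real.log_lt_iff_lt_exp (by norm_num)]
    have h7 : |φ w| = 0 := by
      have := abs_nonneg (φ w)
      nlinarith
    rw [h7, zero_mul]; positivity

lemma one_le_K {lam α θ K Em E : ℝ} {φ : ℤ → ℝ} {m : ℤ} (h : AMax lam α θ K Em E φ m) : 1 ≤ K := by
  obtain ⟨-, h1, h2, -⟩ := h
  have := h1 m
  nlinarith

lemma decay_lemma {lam α κ τ : ℝ} (hl : 1 < lam) (hd : Dio α κ τ) (θ K : ℝ) {Em : ℝ} (hEm : 0 ≤ Em) {ν : ℝ} (hν : 0 < ν) :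
    ∃ ε1, 0 < ε1 ∧ ∃ R0 : ℕ, ∀ R : ℕ, R0 ≤ R → ∀ nres : ℤ, NonRes α θ ε1 R nres →
      ∀ E φ m, AMax lam α θ K Em E φ m → |m| ≤ R →
      ∃ ℓ, Real.log lam ≤ ℓ ∧ ℓ ≤ Gam lam Em ∧ Decay lam α E K φ m nres ν R ℓ := by
  set Γ := Gam lam Em with hΓ
  have hll : 0 < Real.log lam := Real.log_pos hl
  have hΓ0 : 0 < Γ := Real.log_pos (by linarith)
  obtain ⟨e, he, he1, he2⟩ : ∃ e : ℝ, 0 < e ∧ 1440 * e ≤ ν ∧ 72 * e ≤ Real.log lam :=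
    ⟨min (ν / 1440) (Real.log lam / 72), by positivity, by linarith [min_le_left (ν / 1440) (Real.log lam / 72)],
      by linarith [min_le_right (ν / 1440) (Real.log lam / 72)]⟩
  obtain ⟨h', hh', hh1, hh2⟩ : ∃ h' : ℝ, 0 < h' ∧ h' ≤ 1 ∧ Γ * h' ≤ ν / 2 :=
    ⟨min 1 (ν / 2 / Γ), by positivity, min_le_left _ _, by
      calc _ ≤ Γ * (ν / 2 / Γ) := by gcongr; exact min_le_right _ _
        _ = _ := by field_simp⟩
  obtain ⟨h, hh, R1, hR1⟩ := scale_lemma hl α hEm he hh'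
  obtain ⟨C, hC, hN⟩ := node_lemma (lam := lam) hd (ε := e * h / 120) (by positivity)
  have hN : NodeB lam α (e * h / 120) C := hN
  obtain ⟨R2, hR2⟩ := exists_nat_ge ((2 * (C + Real.log 4 + |Real.log (2 * K)| + 1)) / (e * h))
  refine ⟨e * h / 4, by positivity, max R1 R2, fun R hR nres hres E φ m hA hm => ?_⟩
  obtain ⟨k, ℓ, t0, hk1, hk2, hl1, hl2, ht0, hb⟩ := hR1 R (le_trans (le_max_left _ _) hR) E hA.2.2.2
  have hK1 := one_le_K hA
  have hRR : 2 * (C + Real.log 4 + |Real.log (2 * K)| + 1) ≤ e * (h * R) := by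
    have : (R2:ℝ) ≤ R := by exact_mod_cast le_trans (le_max_right _ _) hR
    have := hR2.trans this
    rw [div_le_iff₀ (by positivity)] at this
    linarith
  have hek : e * (h * R) ≤ e * k := by gcongr
  have hl4 : 0 < Real.log 4 := Real.log_pos (by norm_num)
  have habs := abs_nonneg (Real.log (2 * K))
  have hl24 : Real.log 4 = 2 * Real.log 2 := by
    rw [show (4:ℝ) = 2 ^ 2 by norm_num, Real.log_pow]; norm_num
  have hk0 : 0 < k := by
    rcases Nat.eq_zero_or_pos k with rfl | h0
    · simp at hek; linarith
    · exact h0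
  have hkR : k ≤ R := by
    have : (k:ℝ) ≤ R := hk2.trans (by nlinarith [Nat.cast_nonneg (α := ℝ) R])
    exact_mod_cast this
  have hekR : e * k ≤ e * R := by gcongr
  refine ⟨ℓ, hl1, hl2, fun j t => (hb j t).trans ?_, ?_⟩
  · apply Real.exp_le_exp.2
    have : 0 ≤ (ν - e) * j := mul_nonneg (by linarith) (Nat.cast_nonneg _)
    have : 0 ≤ (ν - e) * R := mul_nonneg (by linarith) (Nat.cast_nonneg _)
    nlinarith
  · intro z d hz h1 h2 h3
    have hmp := max_principle (A := K * |φ m|) (ℓ := ℓ) (k := k) he (by linarith) (by linarith) hA.2.1 (fun x hx hxm hxy =>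
      regular_site (M := 30 * R) hN (Real.exp_pos (-(e * h / 4 * R))) (by rw [Real.exp_le_one_iff]; have : 0 ≤ e * h / 4 * R := by positivity
                                                                          linarith)
        hA.1 he hk0 hb ht0 (by
          rw [← Real.exp_neg, neg_neg, ← Real.exp_add]
          have h44 : ∀ X : ℝ, 4 * Real.exp X = Real.exp (Real.log 4 + X) := fun X => by
            rw [Real.exp_add, Real.exp_log (by norm_num)]
          rw [h44]
          apply Real.exp_le_exp.2
          push_cast
          linarith) (by push_cast; linarith) (by push_cast; have : (k:ℤ) ≤ R := by exact_mod_cast hkR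
                                                 linarith [abs_nonneg x]) (fun n hn hnn => hres n hn (by push_cast at hnn; linarith)) hA.2.1 hA.2.2.1 (by linarith) (by
          rw [← Real.log_lt_iff_lt_exp (by linarith)]
          have := le_abs_self (Real.log (2 * K))
          linarith) hxm hxy) z d hz h1 h2 h3
    have hKφ : 0 ≤ K * |φ m| := by positivity
    rcases le_or_gt d 0 with hd0 | hd0
    · refine (hA.2.1 z).trans (le_mul_of_one_le_right hKφ (Real.one_le_exp ?_))
      have : (d:ℝ) ≤ 0 := by exact_mod_cast hd0
      have : 0 ≤ ℓ * (-d) := mul_nonneg (by linarith) (by linarith)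
      have : 0 ≤ ν * R := by positivity
      linarith
    · refine hmp.trans ?_
      gcongr
      have hd20 : (d:ℝ) ≤ 20 * R := by
        have : d ≤ 20 * R := by linarith [abs_nonneg z]
        exact_mod_cast this
      have hd0' : (0:ℝ) < d := by exact_mod_cast hd0
      have q1 : e * d ≤ e * (20 * R) := by gcongr
      have q2 : 1440 * e * R ≤ ν * R := by gcongr
      have q3 : ℓ * k ≤ Γ * (h' * R) := by gcongr
      have q4 : Γ * h' * R ≤ ν / 2 * R := by gcongr
      have q5 : 0 ≤ e * k := by positivity
      linarith

lemma exists_nres {α κ τ : ℝ} (hd : Dio α κ τ) (θ : ℝ) {ε1 : ℝ} (hε : 0 < ε1) :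
    ∃ R0 : ℕ, ∀ R : ℕ, R0 ≤ R → ∃ nres, NonRes α θ ε1 R nres := by
  obtain ⟨C, hC, h⟩ := dio_exp hd (ε := ε1 / 120) (by positivity)
  obtain ⟨R0, hR0⟩ := exists_nat_ge ((2 * (C + Real.log 2 + 1)) / ε1)
  refine ⟨R0, fun R hR => ?_⟩
  have hRR : 2 * (C + Real.log 2 + 1) ≤ ε1 * R := by
    have : (R0:ℝ) ≤ R := by exact_mod_cast hR
    have := hR0.trans this
    rw [div_le_iff₀ (by positivity)] at this
    linarith
  by_cases hex : ∃ n : ℤ, |n| ≤ 60 * R ∧ sn (2 * θ + n * α) < Real.exp (-(ε1 * R))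
  · obtain ⟨n0, hn0, hs0⟩ := hex
    refine ⟨n0, fun n hn hnR => ?_⟩
    by_contra hlt
    push Not at hlt
    have h1 := h (60 * R) (n - n0) (by positivity) (sub_ne_zero.2 hn) (by
      have : |n - n0| ≤ 2 * (60 * R) := by
        rw [abs_le] at *; omega
      exact_mod_cast this)
    have h2 := sn_sub_le (2 * θ + n * α) (2 * θ + n0 * α)
    rw [show 2 * θ + n * α - (2 * θ + n0 * α) = ((n - n0 : ℤ):ℝ) * α by push_cast; ring] at h2
    have h3 : 2 * Real.exp (-(ε1 * R)) ≤ Real.exp (-(ε1 / 120 * (60 * R) + C)) := by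
      rw [show (2:ℝ) = Real.exp (Real.log 2) by rw [Real.exp_log (by norm_num)], ← Real.exp_add]
      apply Real.exp_le_exp.2
      linarith
    linarith
  · push Not at hex
    exact ⟨0, fun n _ hn => hex n hn⟩

lemma qq_low {lam α θ K Em E ν ℓ : ℝ} (hl0 : 0 ≤ lam) {φ : ℤ → ℝ} {m nres : ℤ} {R : ℕ} (hA : AMax lam α θ K Em E φ m)
    (hD : Decay lam α E K φ m nres ν R ℓ) (hm : |m| ≤ R) (k : ℕ) (hk : k + 1 ≤ 4 * R) :
    Real.exp (ℓ * (k + 1 : ℕ) - ν * R) ≤ 2 * K * qq lam α E (k + 1) := by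
  obtain ⟨h, hmax, hpos, hE⟩ := hA
  set X := K * |φ m| * Real.exp (-ℓ * (k + 1 : ℕ) + ν * R) with hX
  have ham := abs_le.1 hm
  have hdec : ∀ z : ℤ, |z| ≤ 20 * R → ((k + 1 : ℕ) : ℤ) ≤ |z - m| → ((k + 1 : ℕ) : ℤ) ≤ |z - (nres - m)| →
      ((k + 1 : ℕ) : ℤ) ≤ 20 * R - |z| → |φ z| ≤ X := fun z h1 h2 h3 h4 => by
    have := hD.2 z _ h1 h2 h3 h4
    rw [hX]; exact_mod_cast this
  have hdec : ∀ z : ℤ, -(10 * R) ≤ z → z ≤ 10 * R → (((k + 1 : ℕ) : ℤ) ≤ z - m ∨ ((k + 1 : ℕ) : ℤ) ≤ -(z - m)) →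
      (((k + 1 : ℕ) : ℤ) ≤ z - (nres - m) ∨ ((k + 1 : ℕ) : ℤ) ≤ -(z - (nres - m))) → |φ z| ≤ X := fun z h1 h2 h3 h4 => by
    have : |z| ≤ 10 * R := abs_le.2 ⟨h1, h2⟩
    exact hdec z (by omega) (le_abs.2 h3) (le_abs.2 h4) (by omega)
  have key : |φ m| ≤ qq lam α E (k + 1) * X + qq lam α E (k + 1) * X := by
    have q0 : 0 ≤ qq lam α E (k + 1) := (abs_nonneg _).trans (le_qq hl0 α E le_rfl 0)
    rcases le_total m (nres - m) with hs | hs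
    · have h1 := prop_right h (m - (k + 1 : ℕ)) k
      rw [show m - ((k + 1 : ℕ) : ℤ) + k + 1 = m by push_cast; ring] at h1
      rw [h1]
      refine (abs_sub _ _).trans ?_
      rw [abs_mul, abs_mul, cont_eq_dt, cont_eq_dt]
      refine add_le_add (mul_le_mul (le_qq hl0 α E le_rfl _) (hdec _ ?_ ?_ ?_ ?_) (abs_nonneg _) q0)
        (mul_le_mul (le_qq hl0 α E (by omega) _) (hdec _ ?_ ?_ ?_ ?_) (abs_nonneg _) q0) <;> omega
    · have h1 := prop_left h (m + 1) k
      rw [show m + 1 - 1 = m by ring] at h1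
      rw [h1]
      refine (abs_sub _ _).trans ?_
      rw [abs_mul, abs_mul, cont_eq_dt, cont_eq_dt]
      refine add_le_add (mul_le_mul (le_qq hl0 α E le_rfl _) (hdec _ ?_ ?_ ?_ ?_) (abs_nonneg _) q0)
        (mul_le_mul (le_qq hl0 α E (by omega) _) (hdec _ ?_ ?_ ?_ ?_) (abs_nonneg _) q0) <;> omega
  have h2 : |φ m| * 1 ≤ |φ m| * (2 * K * qq lam α E (k + 1) * Real.exp (-ℓ * (k + 1 : ℕ) + ν * R)) := by
    rw [hX] at key; linarith
  have h3 := le_of_mul_le_mul_left h2 hpos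
  rw [show -ℓ * ((k + 1 : ℕ):ℝ) + ν * R = -(ℓ * ((k + 1 : ℕ):ℝ) - ν * R) by ring, Real.exp_neg, ← div_eq_mul_inv,
    le_div_iff₀ (Real.exp_pos _), one_mul] at h3
  exact h3

set_option maxHeartbeats 1000000 in
lemma resonant_step {lam α θ K Em E ν ℓ C ε1 ρ : ℝ} (hl0 : 0 ≤ lam) (hν : 0 < ν) (hC : 0 ≤ C) (hℓ : 0 < ℓ) {φ : ℤ → ℝ} {m nres x : ℤ} {R e0 : ℕ}
    (hA : AMax lam α θ K Em E φ m) (hN : NodeB lam α (ν / 5) C)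
    (hD : Decay lam α E K φ m nres ν R ℓ) (hres : NonRes α θ ε1 R nres) (hm : |m| ≤ R) (hx : |x| ≤ R)
    (hρ : 0 < ρ) (hρ1 : ρ ≤ 1) (hρ2 : ρ ≤ Real.exp (-(ε1 * R))) (hρ3 : ρ ≤ sn (2 * θ + nres * α))
    (hxy : |x - (nres - m)| ≤ e0) (he0 : e0 ≤ R)
    (hQ : 8 * K ^ 2 * Real.exp (C + 8 * ν * R + ℓ * e0 - ℓ * (((|x - m| : ℤ) : ℝ) - 1)) * ρ⁻¹ < 1) :
    |φ x| ≤ 8 * K ^ 2 * Real.exp (C + 8 * ν * R + ℓ * e0 - ℓ * (((|x - m| : ℤ) : ℝ) - 1)) * ρ⁻¹ * |φ m| := by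
  have hK1 := one_le_K hA
  set Q := 8 * K ^ 2 * Real.exp (C + 8 * ν * R + ℓ * e0 - ℓ * (((|x - m| : ℤ) : ℝ) - 1)) * ρ⁻¹ with hQdef
  obtain ⟨D, hDD⟩ : ∃ D : ℕ, |x - m| = D := ⟨(x - m).natAbs, by simp⟩
  rw [hDD] at hQdef
  have hρi : 1 ≤ ρ⁻¹ := (one_le_inv₀ hρ).2 hρ1
  have hR0 : (0:ℝ) ≤ ν * R := by positivity
  -- consequences of Q < 1
  have hW : 4 * K * Real.exp (ν * R) < Real.exp (ℓ * (D - 1)) := by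
    have h1 : 4 * K * Real.exp (ν * R - ℓ * (D - 1)) ≤ Q := by
      rw [hQdef]
      calc _ = 4 * K * Real.exp (ν * R - ℓ * (D - 1)) * 1 := by ring
        _ ≤ _ := by
          gcongr ?_ * ?_
          gcongr ?_ * Real.exp ?_
          · nlinarith
          · push_cast
            have : 0 ≤ ℓ * e0 := by positivity
            linarith
    have h2 := h1.trans_lt hQ
    rwa [Real.exp_sub, ← mul_div_assoc, div_lt_one (Real.exp_pos _)] at h2
  have hD2 : 2 ≤ D := by
    by_contra hlt
    have : (D:ℝ) ≤ 1 := by exact_mod_cast (by omega : D ≤ 1)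
    have h1 : Real.exp (ℓ * (D - 1)) ≤ 1 := Real.exp_le_one_iff.2 (by nlinarith)
    have h2 := Real.one_le_exp hR0
    nlinarith
  have ham := abs_le.1 hm
  have hax := abs_le.1 hx
  have hay := abs_le.1 hxy
  have hDx : (x - m = D ∨ x - m = -D) := by
    rcases abs_choice (x - m) with h | h <;> omega
  have hD2R : D ≤ 2 * R := by omega
  have hDR : (1:ℝ) ≤ D := by exact_mod_cast (by omega : 1 ≤ D)
  have hlow := qq_low hl0 hA hD hm (2 * D - 3) (by omega)
  rw [show 2 * D - 3 + 1 = 2 * D - 2 by omega] at hlow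
  obtain ⟨k, hk, t0, ht0⟩ := exists_qq hl0 α E (2 * D - 2)
  have hcast : ((2 * D - 2 : ℕ) : ℝ) = 2 * D - 2 := by push_cast [show 2 ≤ 2 * D by omega]; ring
  rw [hcast] at hlow
  have hbig : Real.exp (ℓ * (2 * D - 2) - ν * R) ≤ 4 * K * |dt lam α E k t0| := by
    refine hlow.trans ?_
    nlinarith
  have hk0 : 0 < k := by
    rcases Nat.eq_zero_or_pos k with rfl | h0
    · exfalso
      rw [dt_zero, abs_one, Real.exp_sub, div_le_iff₀ (Real.exp_pos _)] at hbig
      have : Real.exp (ℓ * (D - 1)) ≤ Real.exp (ℓ * (2 * D - 2)) := Real.exp_le_exp.2 (by nlinarith)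
      linarith
    · exact h0
  have hkR : (k:ℝ) ≤ 4 * R := by exact_mod_cast (by omega : k ≤ 4 * R)
  have hkD : (k:ℝ) ≤ 2 * D - 2 := by rw [← hcast]; exact_mod_cast hk
  -- the estimate at a good window
  have main : ∀ (z : ℤ) (t : ℕ), (z = m ∨ z = x) → k / 4 ≤ t → (t < k ∧ 4 * t ≤ 3 * k) →
      |dt lam α E k t0| ≤ Real.exp (ν / 5 * (5 * R : ℕ) + C) * ρ⁻¹ * |dt lam α E k (θ + ((z - t : ℤ) : ℝ) * α)| →
      |φ z| ≤ Q * |φ m| := by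
    intro z t hz ht1 ht2 hdt
    have hg := green_dt hA.1 z k t (by omega) _ hD.1
    set Y := |dt lam α E k (θ + ((z - t : ℤ) : ℝ) * α)| with hY
    -- edges
    have edge : ∀ (p : ℤ) (a b : ℕ), |p - z| = a → k ≤ 4 * a → b + a = k →
        Real.exp (ℓ * b + ν * (R + b)) * |φ p| ≤ K * |φ m| * Real.exp (ℓ * (D - 1) + ℓ * e0 + 6 * ν * R) := by
      intro p a b hp ha hb
      have hp' : (p - z = a ∨ p - z = -a) := by
        rcases abs_choice (p - z) with h | h <;> omega
      have hφ := hD.2 p (min (a:ℤ) |(D:ℤ) - a| - e0) (by rcases hz with rfl | rfl <;> grind)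
        (by rcases hz with rfl | rfl <;> rcases hDx with h | h <;> rcases hp' with h' | h' <;> grind)
        (by rcases hz with rfl | rfl <;> rcases hDx with h | h <;> rcases hp' with h' | h' <;> grind)
        (by rcases hz with rfl | rfl <;> grind)
      have hbR : (b:ℝ) ≤ 4 * R := by exact_mod_cast (by omega : b ≤ 4 * R)
      have harith : (b:ℤ) - min (a:ℤ) |(D:ℤ) - a| ≤ D - 1 := by grind
      have harith' : (b:ℝ) - ((min (a:ℤ) |(D:ℤ) - a| : ℤ) : ℝ) ≤ D - 1 := by exact_mod_cast harith
      calc _ ≤ Real.exp (ℓ * b + ν * (R + b)) * (K * |φ m| * Real.exp (-ℓ * ((min (a:ℤ) |(D:ℤ) - a| - e0 : ℤ) : ℝ) + ν * R)) := by gcongr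
        _ = K * |φ m| * Real.exp (ℓ * b + ν * (R + b) + (-ℓ * ((min (a:ℤ) |(D:ℤ) - a| - e0 : ℤ) : ℝ) + ν * R)) := by
          rw [Real.exp_add (ℓ * b + ν * (R + b))]; ring
        _ ≤ _ := by
          have hK0 : 0 ≤ K * |φ m| := by positivity
          refine mul_le_mul_of_nonneg_left (Real.exp_le_exp.2 ?_) hK0
          rw [Int.cast_sub, Int.cast_natCast]
          have q1 := mul_le_mul_of_nonneg_left harith' hℓ.le
          have q2 := mul_le_mul_of_nonneg_left hbR hν.le
          linarith
    have e1 := edge (z - t - 1) (t + 1) (k - 1 - t) (by rw [show z - t - 1 - z = -((t + 1 : ℕ) : ℤ) by push_cast; ring, abs_neg, Nat.abs_cast]) (by omega) (by omega)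
    have e2 := edge (z - t + k) (k - t) t (by rw [show z - t + k - z = ((k - t : ℕ) : ℤ) by omega, Nat.abs_cast]) (by omega) (by omega)
    have h1 : |φ z| * Y ≤ 2 * (K * |φ m| * Real.exp (ℓ * (D - 1) + ℓ * e0 + 6 * ν * R)) := by
      refine hg.trans ?_; linarith
    have h2 : Real.exp (ℓ * (2 * D - 2) - ν * R) ≤ 4 * K * (Real.exp (ν * R + C) * ρ⁻¹ * Y) := by
      refine hbig.trans ?_
      gcongr
      refine hdt.trans (le_of_eq ?_)
      congr 3; push_cast; ring
    have h3 : |φ z| * Real.exp (ℓ * (2 * D - 2) - ν * R) ≤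
        4 * K * (Real.exp (ν * R + C) * ρ⁻¹) * (2 * (K * |φ m| * Real.exp (ℓ * (D - 1) + ℓ * e0 + 6 * ν * R))) := by
      calc _ ≤ |φ z| * (4 * K * (Real.exp (ν * R + C) * ρ⁻¹ * Y)) := by gcongr
        _ = 4 * K * (Real.exp (ν * R + C) * ρ⁻¹) * (|φ z| * Y) := by ring
        _ ≤ _ := by gcongr
    rw [← le_div_iff₀ (Real.exp_pos _)] at h3
    refine h3.trans (le_of_eq ?_)
    rw [div_eq_mul_inv, ← Real.exp_neg, hQdef]
    have : Real.exp (C + 8 * ν * R + ℓ * e0 - ℓ * (((D : ℤ) : ℝ) - 1)) =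
        Real.exp (ν * R + C) * Real.exp (ℓ * (D - 1) + ℓ * e0 + 6 * ν * R) * Real.exp (-(ℓ * (2 * D - 2) - ν * R)) := by
      rw [← Real.exp_add, ← Real.exp_add]; congr 1; push_cast; ring
    rw [this]; ring
  have hn : ∀ n : ℤ, -(60 * R) ≤ n → n ≤ 60 * R → ρ ≤ sn (2 * θ + n * α) := by
    intro n h1 h2
    by_cases h : n = nres
    · rw [h]; exact hρ3
    · exact hρ2.trans (hres n h (abs_le.2 ⟨h1, h2⟩))
  have htw := two_win (θ := θ) hN hρ hρ1 (5 * R) k m x (k / 4) (k / 4 + k / 2) (k / 4) (k / 4 + (k - k / 2 - 1)) (by omega) (by omega)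
    (by omega) (by omega) (by omega) (by push_cast; omega) (by push_cast; omega)
    (by omega) (by intro t t' h0 h1 h2 h3 h4; apply hn <;> omega)
    (by intro t t' h0 h1 h2 h3 h4; apply hn <;> omega) (by intro t t' h1 h2 h3 h4; apply hn <;> omega) E t0
  rcases htw with ⟨t, h1, h2, h3⟩ | ⟨t, h1, h2, h3⟩
  · exfalso
    have h4 := main m t (Or.inl rfl) h1 (by omega) h3
    have h5 := mul_lt_mul_of_pos_right hQ hA.2.2.1
    linarith
  · exact main x t (Or.inr rfl) h1 (by omega) h3

def PhaseB (α θ δ : ℝ) : Prop :=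
  ∀ ε : ℝ, 0 < ε → ∃ N : ℕ, ∀ n : ℤ, (N:ℝ) < |(n:ℝ)| → Real.exp (-((δ + ε) * |(n:ℝ)|)) ≤ sn (2 * θ + n * α)

lemma NonRes.mono {α θ ε1 ε2 : ℝ} {R : ℕ} {nres : ℤ} (h : NonRes α θ ε1 R nres) (h12 : ε1 ≤ ε2) : NonRes α θ ε2 R nres :=
  fun n h1 h2 => (Real.exp_le_exp.2 (by have : ε1 * (R:ℝ) ≤ ε2 * R := by gcongr
                                        linarith)).trans (h n h1 h2)

set_option maxHeartbeats 1000000 in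
lemma localization {lam α κ τ θ δ : ℝ} (hl : 1 < lam) (hd : Dio α κ τ) (hδ : 0 ≤ δ) (hph : PhaseB α θ δ) (K : ℝ) {Em : ℝ} (hEm : 0 ≤ Em)
    {ε : ℝ} (hε : 0 < ε) :
    ∃ γ, 0 < γ ∧ ∃ R0 : ℕ, ∀ R : ℕ, R0 ≤ R → ∃ nres : ℤ, ∀ E φ m, AMax lam α θ K Em E φ m → |m| ≤ R →
      ∀ n : ℤ, |n| ≤ R → |((n - m : ℤ):ℝ)| ≤ ε * R ∨
        (|((n - (nres - m) : ℤ):ℝ)| ≤ ε * R ∧ (Real.log lam * |((nres - 2 * m : ℤ):ℝ)| ≤ δ * |(nres:ℝ)| + ε * R ∨ |(nres:ℝ)| ≤ ε * R)) ∨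
        |φ n| ≤ Real.exp (-(γ * R)) * |φ m| := by
  set Γ := Gam lam Em with hΓ
  have hll : 0 < Real.log lam := Real.log_pos hl
  have hΓ0 : 0 < Γ := Real.log_pos (by linarith)
  set L := Real.log lam with hL
  obtain ⟨ε0, h00, h01, h02, h03⟩ : ∃ ε0 : ℝ, 0 < ε0 ∧ ε0 ≤ 1 ∧ ε0 ≤ ε ∧ 16 * (Γ * ε0) ≤ ε := by
    refine ⟨min 1 (min ε (ε / (16 * Γ))), by positivity, min_le_left _ _, (min_le_right _ _).trans (min_le_left _ _), ?_⟩
    calc 16 * (Γ * _) ≤ 16 * (Γ * (ε / (16 * Γ))) := by gcongr; exact (min_le_right _ _).trans (min_le_right _ _)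
      _ = ε := by field_simp
  obtain ⟨ν, hν, hν1, hν2⟩ : ∃ ν : ℝ, 0 < ν ∧ 64 * ν ≤ ε ∧ 4 * ν ≤ L * ε0 :=
    ⟨min (ε / 64) (L * ε0 / 4), by positivity, by linarith [min_le_left (ε / 64) (L * ε0 / 4)],
      by linarith [min_le_right (ε / 64) (L * ε0 / 4)]⟩
  obtain ⟨γ, hγ, hγ1, hγ2⟩ : ∃ γ : ℝ, 0 < γ ∧ 4 * γ ≤ ε ∧ 4 * γ ≤ L * ε0 :=
    ⟨min (ε / 4) (L * ε0 / 4), by positivity, by linarith [min_le_left (ε / 4) (L * ε0 / 4)],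
      by linarith [min_le_right (ε / 4) (L * ε0 / 4)]⟩
  obtain ⟨ε1, hε1, R1, hR1⟩ := decay_lemma hl hd θ K hEm hν
  obtain ⟨ε2, hε2, h21, h22⟩ : ∃ ε2 : ℝ, 0 < ε2 ∧ ε2 ≤ ε1 ∧ 8 * ε2 ≤ ε :=
    ⟨min ε1 (ε / 8), by positivity, min_le_left _ _, by linarith [min_le_right ε1 (ε / 8)]⟩
  obtain ⟨R2, hR2⟩ := exists_nres hd θ hε2
  obtain ⟨C, hC, hN⟩ := node_lemma (lam := lam) hd (ε := ν / 5) (by positivity)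
  have hN : NodeB lam α (ν / 5) C := hN
  obtain ⟨N, hNN⟩ := hph (ε / 24) (by positivity)
  obtain ⟨R3, hR3⟩ := exists_nat_ge ((N + |Real.log (8 * K ^ 2)| + |Real.log K| + C + Γ + L + 1) / (min (ε / 4) (L * ε0 / 4)))
  refine ⟨γ, hγ, max R1 (max R2 R3), fun R hR => ?_⟩
  have hRa : R1 ≤ R := (le_max_left _ _).trans hR
  have hRb : R2 ≤ R := (le_max_left _ _).trans ((le_max_right _ _).trans hR)
  have hRc : R3 ≤ R := (le_max_right _ _).trans ((le_max_right _ _).trans hR)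
  have hRR : N + |Real.log (8 * K ^ 2)| + |Real.log K| + C + Γ + L + 1 ≤ (min (ε / 4) (L * ε0 / 4)) * R := by
    have : (R3:ℝ) ≤ R := by exact_mod_cast hRc
    have := hR3.trans this
    rw [div_le_iff₀ (by positivity)] at this
    linarith
  have hRR1 : N + |Real.log (8 * K ^ 2)| + |Real.log K| + C + Γ + L + 1 ≤ ε / 4 * R :=
    hRR.trans (by gcongr; exact min_le_left _ _)
  have hRR2 : N + |Real.log (8 * K ^ 2)| + |Real.log K| + C + Γ + L + 1 ≤ L * ε0 / 4 * R :=
    hRR.trans (by gcongr; exact min_le_right _ _)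
  have hab1 := abs_nonneg (Real.log (8 * K ^ 2))
  have hab2 := abs_nonneg (Real.log K)
  have hN0 : (0:ℝ) ≤ N := Nat.cast_nonneg _
  obtain ⟨nres, hres⟩ := hR2 R hRb
  have hres1 := hres.mono h21
  refine ⟨nres, fun E φ m hA hm n hn => ?_⟩
  have hK1 := one_le_K hA
  obtain ⟨ℓ, hℓ1, hℓ2, hdec⟩ := hR1 R hRa nres hres1 E φ m hA hm
  have hφ := hA.2.2.1
  obtain ⟨e0, he0, he0', he0R⟩ : ∃ e0 : ℕ, (e0:ℝ) ≤ ε0 * R ∧ ε0 * R - 1 ≤ e0 ∧ e0 ≤ R := by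
    refine ⟨⌊ε0 * R⌋₊, Nat.floor_le (by positivity), (Nat.sub_one_lt_floor _).le, ?_⟩
    have : ε0 * R ≤ R := by nlinarith [Nat.cast_nonneg (α := ℝ) R]
    exact Nat.floor_le_of_le this
  have hν1R : 64 * ν * R ≤ ε * R := by gcongr
  have hν2R : 4 * ν * R ≤ L * ε0 * R := by gcongr
  have hγ1R : 4 * γ * R ≤ ε * R := by gcongr
  have hγ2R : 4 * γ * R ≤ L * ε0 * R := by gcongr
  have hε2R : 8 * ε2 * R ≤ ε * R := by gcongr
  have h02R : ε0 * R ≤ ε * R := by gcongr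
  have h03R : 16 * (Γ * ε0) * R ≤ ε * R := by gcongr
  by_contra hcon
  push Not at hcon
  obtain ⟨c1, c2, c3⟩ := hcon
  have hnm : (e0:ℤ) ≤ |n - m| := by
    have : (e0:ℝ) < |((n - m : ℤ):ℝ)| := by linarith
    exact_mod_cast this.le
  by_cases hcase : (e0:ℤ) ≤ |n - (nres - m)|
  · have h1 := hdec.2 n e0 (by have := abs_nonneg n; omega) hnm hcase (by have := abs_nonneg n; omega)
    refine absurd (h1.trans ?_) (not_le.2 c3)
    rw [mul_right_comm]
    gcongr
    rw [← Real.exp_log (show 0 < K by linarith), ← Real.exp_add]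
    apply Real.exp_le_exp.2
    have hlk := le_abs_self (Real.log K)
    push_cast
    have q1 : L * e0 ≤ ℓ * e0 := by gcongr
    have q2 : L * (ε0 * R - 1) ≤ L * e0 := by gcongr
    linarith
  · push Not at hcase
    have hxy : |((n - (nres - m) : ℤ):ℝ)| ≤ e0 := by exact_mod_cast hcase.le
    obtain ⟨c4, c5⟩ := c2 (by linarith)
    have hnr3 : |(nres:ℝ)| ≤ 3 * R := by
      have : |nres| ≤ 3 * R := by
        rw [abs_le] at *; rw [abs_lt] at hcase; omega
      exact_mod_cast this
    have hDn : |((nres - 2 * m : ℤ):ℝ)| - e0 ≤ ((|n - m| : ℤ):ℝ) := by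
      have h1 : |nres - 2 * m| ≤ |n - m| + |n - (nres - m)| := by
        have := abs_sub (n - m) (n - (nres - m))
        rw [show n - m - (n - (nres - m)) = nres - 2 * m by ring] at this
        exact this
      have h1' : |((nres - 2 * m : ℤ):ℝ)| ≤ ((|n - m| : ℤ):ℝ) + |((n - (nres - m) : ℤ):ℝ)| := by exact_mod_cast h1
      linarith
    set ρ := Real.exp (-(ε2 * R + (δ + ε / 24) * |(nres:ℝ)|)) with hρ
    have hnr0 := abs_nonneg (nres:ℝ)
    have p1 : 0 ≤ (δ + ε / 24) * |(nres:ℝ)| := by positivity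
    have p2 : 0 ≤ ε2 * R := by positivity
    have p3 : 0 ≤ ε * R := by positivity
    have hQle : 8 * K ^ 2 * Real.exp (C + 8 * ν * R + ℓ * e0 - ℓ * (((|n - m| : ℤ) : ℝ) - 1)) * ρ⁻¹ ≤ Real.exp (-(γ * R)) := by
      have hl8 := le_abs_self (Real.log (8 * K ^ 2))
      rw [hρ, ← Real.exp_neg, neg_neg]
      have h8 : 8 * K ^ 2 = Real.exp (Real.log (8 * K ^ 2)) := (Real.exp_log (by positivity)).symm
      rw [h8, ← Real.exp_add, ← Real.exp_add]
      apply Real.exp_le_exp.2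
      have q1 : ℓ * e0 ≤ Γ * (ε0 * R) := by gcongr
      have q2 : ℓ * (|((nres - 2 * m : ℤ):ℝ)| - e0) ≤ ℓ * ((|n - m| : ℤ):ℝ) := by
        apply mul_le_mul_of_nonneg_left hDn; linarith
      have q3 : L * |((nres - 2 * m : ℤ):ℝ)| ≤ ℓ * |((nres - 2 * m : ℤ):ℝ)| := by gcongr
      have q4 : ε / 24 * |(nres:ℝ)| ≤ ε / 24 * (3 * R) := by gcongr
      linarith
    have hlt1 : Real.exp (-(γ * R)) < 1 := by
      rw [Real.exp_lt_one_iff]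
      have : 0 < L * ε0 / 4 * R := by linarith
      have : (0:ℝ) < R := by
        by_contra h0
        have : (R:ℝ) = 0 := le_antisymm (not_lt.1 h0) (Nat.cast_nonneg _)
        rw [this] at hRR1; linarith
      have := mul_pos hγ this
      linarith
    have hmain := resonant_step (ρ := ρ) (by linarith) hν hC (show 0 < ℓ by linarith) hA hN hdec hres hm hn (Real.exp_pos _)
      (Real.exp_le_one_iff.2 (by linarith)) (Real.exp_le_exp.2 (by linarith))
      ((Real.exp_le_exp.2 (by linarith)).trans (hNN nres (by linarith))) hcase.le he0R (hQle.trans_lt hlt1)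
    exact absurd (hmain.trans (mul_le_mul_of_nonneg_right hQle (abs_nonneg _))) (not_le.2 c3)

def LocA (F : ℕ → ℤ → ℝ) (m : ℕ → ℤ) (d : ℝ) : Prop :=
  ∀ ε : ℝ, 0 < ε → ∃ γ, 0 < γ ∧ ∃ R0 : ℕ, ∀ R : ℕ, R0 ≤ R → ∃ p : ℤ, ∀ s, |(m s:ℝ)| ≤ R → ∀ n : ℤ, |(n:ℝ)| ≤ R →
    |(n:ℝ) - m s| ≤ ε * R ∨ (|(n:ℝ) - (p - m s)| ≤ ε * R ∧ (|(p:ℝ) - 2 * m s| ≤ d * |(p:ℝ)| + ε * R ∨ |(p:ℝ)| ≤ ε * R)) ∨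
      |F s n| ≤ Real.exp (-(γ * R)) * |F s (m s)|

lemma comb {F : ℕ → ℤ → ℝ} {m : ℕ → ℤ} {d : ℝ} (hF : LocA F m d) (hd0 : 0 ≤ d) (hd1 : d < 1) {η : ℝ} (hη : 0 < η) :
    ∃ γ, 0 < γ ∧ ∃ L0 : ℕ, ∀ L : ℕ, L0 ≤ L → ∃ p : ℤ, ∀ s (n : ℤ), (|(m s:ℝ)| ≤ L ∨ |(n:ℝ)| ≤ L) →
    |(n:ℝ) - m s| ≤ η * L ∨ (|(n:ℝ) - (p - m s)| ≤ η * L ∧ (|(p:ℝ) - 2 * m s| ≤ d * |(p:ℝ)| + η * L ∨ |(p:ℝ)| ≤ η * L)) ∨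
      |F s n| ≤ Real.exp (-(γ * (L + |(n:ℝ)| + |(m s : ℝ)|))) * |F s (m s)| := by
  set ε := (1 - d) / 10 with hε
  have hε0 : 0 < ε := by rw [hε]; linarith
  obtain ⟨γ1, hγ1, R1, h1⟩ := hF ε hε0
  obtain ⟨C, hC⟩ := exists_nat_ge (1 / ε + 1)
  have hCε : 1 ≤ ε * C := by
    have : ε * (1 / ε + 1) ≤ ε * C := by gcongr
    have h2 : ε * (1 / ε + 1) = 1 + ε := by field_simp
    linarith
  have hC1 : (1:ℝ) ≤ C := by
    have : 0 < 1 / ε := by positivity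
    linarith
  have hC0 : (0:ℝ) < C := by linarith
  obtain ⟨γ2, hγ2, R2, h2⟩ := hF (η / C) (by positivity)
  obtain ⟨γ, hγ, hγa, hγb⟩ : ∃ γ, 0 < γ ∧ 3 * γ ≤ γ1 ∧ 3 * γ ≤ γ2 :=
    ⟨min (γ1 / 3) (γ2 / 3), by positivity, by linarith [min_le_left (γ1 / 3) (γ2 / 3)], by linarith [min_le_right (γ1 / 3) (γ2 / 3)]⟩
  refine ⟨γ, hγ, max R1 R2, fun L hL => ?_⟩
  have hC1' : 1 ≤ C := by exact_mod_cast hC1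
  have hLC : L ≤ C * L := Nat.le_mul_of_pos_left _ (by omega)
  have hLR1 : R1 ≤ L := (le_max_left _ _).trans hL
  have hLR2 : R2 ≤ L := (le_max_right _ _).trans hL
  obtain ⟨p, hp⟩ := h2 (C * L) (by omega)
  have hL0 : (0:ℝ) ≤ L := Nat.cast_nonneg _
  refine ⟨p, fun s n hsn => ?_⟩
  have hexp : ∀ (R γ' : ℝ), 3 * γ ≤ γ' → L ≤ R → |(n:ℝ)| ≤ R → |(m s:ℝ)| ≤ R → |F s n| ≤ Real.exp (-(γ' * R)) * |F s (m s)| →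
      |F s n| ≤ Real.exp (-(γ * (L + |(n:ℝ)| + |(m s : ℝ)|))) * |F s (m s)| := by
    intro R γ' hg a1 a2 a3 h
    refine h.trans ?_
    refine mul_le_mul_of_nonneg_right (Real.exp_le_exp.2 ?_) (abs_nonneg _)
    have : γ * (L + |(n:ℝ)| + |(m s : ℝ)|) ≤ γ * (3 * R) := by gcongr; linarith
    have : 3 * γ * R ≤ γ' * R := by gcongr; linarith
    linarith
  by_cases hnear : |(m s:ℝ)| ≤ C * L ∧ |(n:ℝ)| ≤ C * L
  · have hcc : ((C * L : ℕ):ℝ) = C * L := by push_cast; ring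
    have := hp s (by rw [hcc]; exact hnear.1) n (by rw [hcc]; exact hnear.2)
    rw [hcc, show η / C * (C * L) = η * L by field_simp] at this
    rcases this with h | h | h
    · exact Or.inl h
    · exact Or.inr (Or.inl h)
    · exact Or.inr (Or.inr (hexp (C * L) γ2 hγb (by nlinarith) hnear.2 hnear.1 h))
  · refine Or.inr (Or.inr ?_)
    set R := max (m s).natAbs n.natAbs with hR
    have hRr : (R:ℝ) = max |(m s:ℝ)| |(n:ℝ)| := by
      rw [hR]; push_cast [Nat.cast_natAbs]; rfl
    have hmR : |(m s:ℝ)| ≤ R := by rw [hRr]; exact le_max_left _ _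
    have hnR : |(n:ℝ)| ≤ R := by rw [hRr]; exact le_max_right _ _
    have hbig : (C:ℝ) * L < R := by
      rw [hRr, lt_max_iff]
      by_contra hh
      push Not at hh
      exact hnear hh
    have hLR : (L:ℝ) ≤ R := by nlinarith
    obtain ⟨q, hq⟩ := h1 R (hLR1.trans (by exact_mod_cast hLR))
    have hR0 : 0 < (R:ℝ) := lt_of_le_of_lt (by positivity) hbig
    -- the small one is at most ε R
    have hLε : (L:ℝ) ≤ ε * R := by
      have : L * 1 ≤ L * (ε * C) := by gcongr
      have : ε * (C * L) ≤ ε * R := by gcongr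
      linarith
    have hd10 : d = 1 - 10 * ε := by rw [hε]; ring
    have hsmall : (|(m s:ℝ)| ≤ ε * R ∧ |(n:ℝ)| = R) ∨ (|(n:ℝ)| ≤ ε * R ∧ |(m s:ℝ)| = R) := by
      have hε1 : ε * R < R := by nlinarith
      rcases hsn with h | h
      · left; refine ⟨by linarith, ?_⟩
        rw [hRr] at hε1 hLε ⊢
        rw [max_eq_right]
        by_contra hh
        rw [max_eq_left (by linarith)] at hε1 hLε; linarith
      · right; refine ⟨by linarith, ?_⟩
        rw [hRr] at hε1 hLε ⊢
        rw [max_eq_left]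
        by_contra hh
        rw [max_eq_right (by linarith)] at hε1 hLε; linarith
    have hε10 : 10 * ε ≤ 1 := by linarith
    have hεR : 10 * ε * R ≤ R := by nlinarith
    have hεRp : 0 < ε * R := by positivity
    have tr1 := abs_sub_abs_le_abs_sub (n:ℝ) (m s)
    have tr2 := abs_sub_abs_le_abs_sub (m s:ℝ) n
    rw [abs_sub_comm] at tr2
    rcases hq s hmR n hnR with h | h | h
    · exfalso; rcases hsmall with ⟨a, b⟩ | ⟨a, b⟩ <;> linarith
    · exfalso
      obtain ⟨h3, h4⟩ := h
      have b1 : |(n:ℝ)| ≤ |(n:ℝ) - (q - m s)| + (|(q:ℝ)| + |(m s:ℝ)|) := by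
        have := abs_add_le ((n:ℝ) - (q - m s)) (q - m s)
        have := abs_sub (q:ℝ) (m s)
        rw [sub_add_cancel] at *; linarith
      have b2 : |(m s:ℝ)| ≤ |(n:ℝ) - (q - m s)| + (|(q:ℝ)| + |(n:ℝ)|) := by
        have h5 := abs_add_le ((n:ℝ) - (q - m s)) (q - n)
        have := abs_sub (q:ℝ) n
        rw [show (n:ℝ) - (q - m s) + (q - n) = m s by ring] at h5; linarith
      rcases h4 with h4 | h4
      · rcases hsmall with ⟨a, b⟩ | ⟨a, b⟩
        · have b3 : |(q:ℝ)| ≤ |(q:ℝ) - 2 * m s| + 2 * |(m s:ℝ)| := by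
            have := abs_add_le ((q:ℝ) - 2 * m s) (2 * m s)
            rw [sub_add_cancel, abs_mul, abs_two] at this; exact this
          have b4 : R - 2 * (ε * R) ≤ |(q:ℝ)| := by linarith
          rw [hd10] at h4
          nlinarith
        · have b3 : |(q:ℝ)| ≤ |(n:ℝ) - (q - m s)| + |(n:ℝ)| + |(m s:ℝ)| := by
            have h5 := abs_sub ((n:ℝ) + m s) (n - (q - m s))
            rw [show (n:ℝ) + m s - (n - (q - m s)) = q by ring] at h5
            have := abs_add_le (n:ℝ) (m s)
            linarith
          have b5 : |(m s:ℝ)| ≤ |(q:ℝ) - 2 * m s| + |(n:ℝ) - (q - m s)| + |(n:ℝ)| := by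
            have h5 := abs_add_le ((n:ℝ) - (q - m s)) (q - 2 * m s)
            rw [show (n:ℝ) - (q - m s) + (q - 2 * m s) = n - m s by ring] at h5
            linarith
          have : d * |(q:ℝ)| ≤ d * (R + 2 * (ε * R)) := by gcongr; linarith
          have : d * (ε * R) ≤ 1 * (ε * R) := by gcongr
          have : d * R = R - 10 * (ε * R) := by rw [hd10]; ring
          nlinarith
      · rcases hsmall with ⟨a, b⟩ | ⟨a, b⟩ <;> linarith
    · exact hexp R γ1 hγa hLR hnR hmR h

lemma card_interval (S : Finset ℤ) (a b : ℝ) (h0 : 0 ≤ b - a + 1) (h : ∀ n ∈ S, a ≤ (n:ℝ) ∧ (n:ℝ) ≤ b) : (S.card:ℝ) ≤ b - a + 1 := by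
  have hsub : S ⊆ Finset.Icc ⌈a⌉ ⌊b⌋ := fun n hn => Finset.mem_Icc.2 ⟨Int.ceil_le.2 (h n hn).1, Int.le_floor.2 (h n hn).2⟩
  have h1 := Finset.card_le_card hsub
  rw [Int.card_Icc] at h1
  have h2 : (S.card:ℝ) ≤ ((⌊b⌋ + 1 - ⌈a⌉).toNat : ℝ) := by exact_mod_cast h1
  refine h2.trans ?_
  rcases le_total (⌊b⌋ + 1 - ⌈a⌉) 0 with h3 | h3
  · rw [Int.toNat_of_nonpos h3]; simpa using h0
  · have h4 : (((⌊b⌋ + 1 - ⌈a⌉).toNat : ℤ) : ℝ) = ((⌊b⌋ + 1 - ⌈a⌉ : ℤ) : ℝ) := by rw [Int.toNat_of_nonneg h3]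
    rw [Int.cast_natCast] at h4
    rw [h4]; push_cast
    linarith [Int.floor_le b, Int.le_ceil a]

lemma card_bad1 {d X h : ℝ} (hd0 : 0 ≤ d) (hd1 : d ≤ 1) (hX : 0 ≤ X) (hh : 0 ≤ h) (hhX : 3 / 2 * h ≤ X) (p : ℤ) (S : Finset ℤ)
    (hS : ∀ n ∈ S, |(p:ℝ) - 2 * n| ≤ d * |(p:ℝ)| + 3 * h ∧ |(p:ℝ) - n| ≤ X ∧ X < |(n:ℝ)|) : (S.card:ℝ) ≤ d * X + 3 / 2 * h + 1 := by
  have main : ∀ (p : ℤ) (S : Finset ℤ), 0 ≤ p →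
    (∀ n ∈ S, |(p:ℝ) - 2 * n| ≤ d * |(p:ℝ)| + 3 * h ∧ |(p:ℝ) - n| ≤ X ∧ X < |(n:ℝ)|) → (S.card:ℝ) ≤ d * X + 3 / 2 * h + 1 := by
    intro p S hp hS
    have hp' : (0:ℝ) ≤ p := by exact_mod_cast hp
    have hdX : 0 ≤ d * X := by positivity
    have := card_interval S ((1 + d) / 2 * p - d * X) ((1 + d) / 2 * p + 3 / 2 * h) (by linarith) (fun n hn => by
      obtain ⟨h1, h2, h3⟩ := hS n hn
      rw [abs_of_nonneg hp'] at h1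
      rw [abs_le] at h1 h2
      have hdp : d * p ≤ 1 * p := by gcongr
      rcases lt_abs.1 h3 with h4 | h4
      · constructor
        · nlinarith
        · linarith
      · exfalso; linarith)
    linarith
  rcases le_total 0 p with hp | hp
  · exact main p S hp hS
  · have := main (-p) (S.map (Equiv.neg ℤ).toEmbedding) (by omega) (by
      intro n hn
      simp only [Finset.mem_map, Equiv.coe_toEmbedding, Equiv.neg_apply] at hn
      obtain ⟨a, ha, rfl⟩ := hn
      obtain ⟨h1, h2, h3⟩ := hS a ha
      push_cast
      rw [abs_neg, abs_neg, show -(p:ℝ) - 2 * -a = -(p - 2 * a) by ring, abs_neg, show -(p:ℝ) - -a = -(p - a) by ring, abs_neg]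
      exact ⟨h1, h2, h3⟩)
    rwa [Finset.card_map] at this

lemma card_bad2 {d X h : ℝ} (hd0 : 0 ≤ d) (hd1 : d ≤ 1) (hX : 0 ≤ X) (hh : 0 ≤ h) (p : ℤ) (S : Finset ℤ)
    (hS : ∀ n ∈ S, |(p:ℝ) - 2 * n| ≤ d * |(p:ℝ)| + 3 * h ∧ X ≤ |(p:ℝ) - n| ∧ |(n:ℝ)| < X) : (S.card:ℝ) ≤ d * X + 3 / 2 * h + 1 := by
  have main : ∀ (p : ℤ) (S : Finset ℤ), 0 ≤ p →
    (∀ n ∈ S, |(p:ℝ) - 2 * n| ≤ d * |(p:ℝ)| + 3 * h ∧ X ≤ |(p:ℝ) - n| ∧ |(n:ℝ)| < X) → (S.card:ℝ) ≤ d * X + 3 / 2 * h + 1 := by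
    intro p S hp hS
    have hp' : (0:ℝ) ≤ p := by exact_mod_cast hp
    have hdX : 0 ≤ d * X := by positivity
    have := card_interval S ((1 - d) / 2 * p - 3 / 2 * h) ((1 - d) / 2 * p + d * X) (by linarith) (fun n hn => by
      obtain ⟨h1, h2, h3⟩ := hS n hn
      rw [abs_of_nonneg hp'] at h1
      rw [abs_le] at h1
      rw [abs_lt] at h3
      rcases le_abs.1 h2 with h4 | h4
      · constructor
        · linarith
        · nlinarith
      · exfalso; linarith)
    linarith
  rcases le_total 0 p with hp | hp
  · exact main p S hp hS
  · have := main (-p) (S.map (Equiv.neg ℤ).toEmbedding) (by omega) (by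
      intro n hn
      simp only [Finset.mem_map, Equiv.coe_toEmbedding, Equiv.neg_apply] at hn
      obtain ⟨a, ha, rfl⟩ := hn
      obtain ⟨h1, h2, h3⟩ := hS a ha
      push_cast
      rw [abs_neg, abs_neg, show -(p:ℝ) - 2 * -a = -(p - 2 * a) by ring, abs_neg, show -(p:ℝ) - -a = -(p - a) by ring, abs_neg]
      exact ⟨h1, h2, h3⟩)
    rwa [Finset.card_map] at this

lemma exists_G {γ : ℝ} (hγ : 0 < γ) : ∃ G : ℝ, 0 ≤ G ∧ ∀ V : Finset ℤ, ∑ n ∈ V, Real.exp (-(γ * |(n:ℝ)|)) ≤ G := by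
  have hg : Summable fun n : ℕ => Real.exp (-(γ * n)) := by
    have := summable_geometric_of_lt_one (Real.exp_pos (-γ)).le (Real.exp_lt_one_iff.2 (by linarith))
    refine this.congr fun n => ?_
    rw [← Real.exp_nat_mul]; congr 1; ring
  have hs : Summable fun n : ℤ => Real.exp (-(γ * |(n:ℝ)|)) := by
    apply Summable.of_nat_of_neg
    · refine hg.congr fun n => ?_
      simp
    · refine hg.congr fun n => ?_
      simp
  exact ⟨∑' n : ℤ, Real.exp (-(γ * |(n:ℝ)|)), tsum_nonneg fun n => (Real.exp_pos _).le,
    fun V => hs.sum_le_tsum V fun n _ => (Real.exp_pos _).le⟩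

/-- conclusion of `comb` at scale `L` -/
def CombAt (F : ℕ → ℤ → ℝ) (m : ℕ → ℤ) (d η γ : ℝ) (L : ℕ) (p : ℤ) : Prop :=
  ∀ s (n : ℤ), (|(m s:ℝ)| ≤ L ∨ |(n:ℝ)| ≤ L) →
    |(n:ℝ) - m s| ≤ η * L ∨ (|(n:ℝ) - (p - m s)| ≤ η * L ∧ (|(p:ℝ) - 2 * m s| ≤ d * |(p:ℝ)| + η * L ∨ |(p:ℝ)| ≤ η * L)) ∨
      |F s n| ≤ Real.exp (-(γ * (L + |(n:ℝ)| + |(m s : ℝ)|))) * |F s (m s)|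

lemma sq_bound {F : ℕ → ℤ → ℝ} {m : ℕ → ℤ} {γ : ℝ} (hγ : 0 ≤ γ) {L : ℕ} {s : ℕ} {n : ℤ}
    (h : |F s n| ≤ Real.exp (-(γ * (L + |(n:ℝ)| + |(m s : ℝ)|))) * |F s (m s)|) :
    F s n ^ 2 ≤ Real.exp (-(γ * L)) * Real.exp (-(γ * |(n:ℝ)|)) * Real.exp (-(γ * |(m s:ℝ)|)) * F s (m s) ^ 2 := by
  rw [← Real.exp_add, ← Real.exp_add, ← sq_abs (F s n), ← sq_abs (F s (m s))]
  have e0 : Real.exp (-(γ * (L + |(n:ℝ)| + |(m s : ℝ)|))) ≤ 1 := Real.exp_le_one_iff.2 (by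
    have : 0 ≤ γ * (L + |(n:ℝ)| + |(m s : ℝ)|) := by positivity
    linarith)
  calc |F s n| ^ 2 ≤ (Real.exp (-(γ * (L + |(n:ℝ)| + |(m s : ℝ)|))) * |F s (m s)|) ^ 2 := by gcongr
    _ = Real.exp (-(γ * (L + |(n:ℝ)| + |(m s : ℝ)|))) * Real.exp (-(γ * (L + |(n:ℝ)| + |(m s : ℝ)|))) * |F s (m s)| ^ 2 := by ring
    _ ≤ 1 * Real.exp (-(γ * (L + |(n:ℝ)| + |(m s : ℝ)|))) * |F s (m s)| ^ 2 := by gcongr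
    _ = _ := by rw [one_mul]; congr 2; ring

lemma bad_transfer {n m p : ℝ} {d h : ℝ} (h1 : |n - (p - m)| ≤ h) (h2 : |p - 2 * m| ≤ d * |p| + h) : |p - 2 * n| ≤ d * |p| + 3 * h := by
  have := abs_add_le (-(p - 2 * m)) (-(2 * (n - (p - m))))
  rw [abs_neg, abs_neg, abs_mul, abs_two] at this
  rw [show p - 2 * n = -(p - 2 * m) + -(2 * (n - (p - m))) by ring]
  linarith

set_option maxHeartbeats 1000000 in
lemma upper_count {F : ℕ → ℤ → ℝ} {m : ℕ → ℤ} {d η γ : ℝ} {L : ℕ} {p : ℤ} {G : ℝ} (hd0 : 0 ≤ d) (hd1 : d ≤ 1) (hη : 0 < η) (hη1 : η ≤ 1 / 2) (hγ : 0 < γ)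
    (hP1 : ∀ n, HasSum (fun s => F s n ^ 2) 1) (hP2 : ∀ s, HasSum (fun n => F s n ^ 2) 1)
    (hG0 : 0 ≤ G) (hG : ∀ V : Finset ℤ, ∑ n ∈ V, Real.exp (-(γ * |(n:ℝ)|)) ≤ G) (hGL : Real.exp (-(γ * L)) * G ≤ η)
    (hc : CombAt F m d η γ L p) (S : Finset ℕ) (hS : ∀ s ∈ S, |(m s:ℝ)| ≤ L) :
    (S.card:ℝ) * (1 - η) ≤ 2 * L + d * L + 8 * η * L + 2 := by
  classical
  have hL0 : (0:ℝ) ≤ L := Nat.cast_nonneg _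
  set X := (1 + 2 * η) * L with hX
  have hX0 : 0 ≤ X := by positivity
  have hηL : 0 ≤ η * L := by positivity
  have hηL1 : η * L ≤ 1 / 2 * L := by gcongr
  set J1 := Finset.Icc (-⌊X⌋) ⌊X⌋ with hJ1
  set J2 := (Finset.Icc (p - ⌈X⌉) (p + ⌈X⌉)).filter (fun n : ℤ => |(p:ℝ) - 2 * n| ≤ d * |(p:ℝ)| + 3 * (η * L) ∧ |(p:ℝ) - n| ≤ X ∧ X < |(n:ℝ)|) with hJ2
  have hc2 : (J2.card:ℝ) ≤ d * X + 3 / 2 * (η * L) + 1 := card_bad1 hd0 hd1 hX0 hηL (by rw [hX]; linarith) p J2 (fun n hn => by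
    rw [hJ2, Finset.mem_filter] at hn; exact hn.2)
  have hc1 : (J1.card:ℝ) ≤ 2 * X + 1 := by
    have := card_interval J1 (-X) X (by linarith) (fun n hn => by
      rw [hJ1, Finset.mem_Icc] at hn
      have h1 : ((-⌊X⌋ : ℤ):ℝ) ≤ n := by exact_mod_cast hn.1
      have h2 : (n:ℝ) ≤ ⌊X⌋ := by exact_mod_cast hn.2
      push_cast at h1
      constructor <;> linarith [Int.floor_le X])
    linarith
  have hmem1 : ∀ n : ℤ, |(n:ℝ)| ≤ X → n ∈ J1 := by
    intro n hn
    rw [abs_le] at hn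
    rw [hJ1, Finset.mem_Icc]
    refine ⟨?_, Int.le_floor.2 hn.2⟩
    have : -n ≤ ⌊X⌋ := Int.le_floor.2 (by push_cast; linarith)
    omega
  have hF1 : ∀ s n, F s n ^ 2 ≤ 1 := fun s n => le_hasSum (hP2 s) n fun _ _ => sq_nonneg _
  have hout : ∀ s ∈ S, ∀ n, n ∉ J1 ∪ J2 → F s n ^ 2 ≤ Real.exp (-(γ * L)) * Real.exp (-(γ * |(n:ℝ)|)) := by
    intro s hs n hn
    have hms := hS s hs
    rw [Finset.mem_union, not_or] at hn
    have hnX : X < |(n:ℝ)| := by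
      by_contra hh; exact hn.1 (hmem1 n (not_lt.1 hh))
    rcases hc s n (Or.inl hms) with h | h | h
    · exfalso
      have := abs_sub_abs_le_abs_sub (n:ℝ) (m s)
      rw [hX] at hnX; linarith
    · exfalso
      obtain ⟨h1, h2⟩ := h
      have h3 : |(p:ℝ) - n| ≤ L + η * L := by
        have := abs_sub (m s:ℝ) (n - (p - m s))
        rw [show (m s:ℝ) - (n - (p - m s)) = p - n by ring] at this
        linarith
      rcases h2 with h2 | h2
      · apply hn.2
        have h4 : |(p:ℝ) - n| ≤ X := by rw [hX]; linarith
        rw [hJ2, Finset.mem_filter, Finset.mem_Icc]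
        refine ⟨?_, bad_transfer h1 h2, h4, hnX⟩
        rw [abs_le] at h4
        have hce := Int.le_ceil X
        constructor
        · have : (p:ℝ) - ⌈X⌉ ≤ n := by linarith
          exact_mod_cast this
        · have : (n:ℝ) ≤ p + ⌈X⌉ := by linarith
          exact_mod_cast this
      · have := abs_sub (p:ℝ) (p - n)
        rw [show (p:ℝ) - (p - n) = n by ring] at this
        rw [hX] at hnX
        linarith
    · refine (sq_bound hγ.le h).trans ?_
      have e1 : Real.exp (-(γ * |(m s:ℝ)|)) ≤ 1 := Real.exp_le_one_iff.2 (by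
        have : 0 ≤ γ * |(m s:ℝ)| := by positivity
        linarith)
      have e2 := hF1 s (m s)
      have e3 : Real.exp (-(γ * |(m s:ℝ)|)) * F s (m s) ^ 2 ≤ 1 * 1 := by gcongr
      calc _ = Real.exp (-(γ * L)) * Real.exp (-(γ * |(n:ℝ)|)) * (Real.exp (-(γ * |(m s:ℝ)|)) * F s (m s) ^ 2) := by ring
        _ ≤ Real.exp (-(γ * L)) * Real.exp (-(γ * |(n:ℝ)|)) * (1 * 1) := by gcongr
        _ = _ := by ring
  have hone : ∀ s ∈ S, 1 - η ≤ ∑ n ∈ J1 ∪ J2, F s n ^ 2 := by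
    intro s hs
    have : (1:ℝ) ≤ ∑ n ∈ J1 ∪ J2, F s n ^ 2 + Real.exp (-(γ * L)) * G := by
      refine hasSum_le_of_sum_le (hP2 s) fun V => ?_
      rw [← Finset.sum_inter_add_sum_sdiff V (J1 ∪ J2)]
      gcongr ?_ + ?_
      · exact Finset.sum_le_sum_of_subset_of_nonneg Finset.inter_subset_right fun _ _ _ => sq_nonneg _
      · calc _ ≤ ∑ n ∈ V \ (J1 ∪ J2), Real.exp (-(γ * L)) * Real.exp (-(γ * |(n:ℝ)|)) :=
              Finset.sum_le_sum fun n hn => hout s hs n (Finset.mem_sdiff.1 hn).2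
          _ ≤ _ := by rw [← Finset.mul_sum]; gcongr; exact hG _
    linarith
  have hfin : (S.card:ℝ) * (1 - η) ≤ ((J1 ∪ J2).card : ℝ) := by
    calc (S.card:ℝ) * (1 - η) = ∑ s ∈ S, (1 - η) := by rw [Finset.sum_const, nsmul_eq_mul]
      _ ≤ ∑ s ∈ S, ∑ n ∈ J1 ∪ J2, F s n ^ 2 := Finset.sum_le_sum hone
      _ = ∑ n ∈ J1 ∪ J2, ∑ s ∈ S, F s n ^ 2 := Finset.sum_comm
      _ ≤ ∑ n ∈ J1 ∪ J2, (1:ℝ) := Finset.sum_le_sum fun n _ => sum_le_hasSum S (fun _ _ => sq_nonneg _) (hP1 n)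
      _ = _ := by simp
  have hcu : ((J1 ∪ J2).card : ℝ) ≤ J1.card + J2.card := by exact_mod_cast Finset.card_union_le J1 J2
  have : d * (η * L) ≤ 1 * (η * L) := by gcongr
  rw [hX] at hc1 hc2
  linarith

set_option maxHeartbeats 1000000 in
lemma lower_count {F : ℕ → ℤ → ℝ} {m : ℕ → ℤ} {d η γ : ℝ} {L : ℕ} {p : ℤ} {G : ℝ} (hd0 : 0 ≤ d) (hd1 : d ≤ 1) (hη : 0 < η) (hη1 : η ≤ 1 / 2) (hγ : 0 < γ)
    (hL : 0 < L)
    (hP1 : ∀ n, HasSum (fun s => F s n ^ 2) 1) (hP2 : ∀ s, HasSum (fun n => F s n ^ 2) 1)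
    (hG0 : 0 ≤ G) (hG : ∀ V : Finset ℤ, ∑ n ∈ V, Real.exp (-(γ * |(n:ℝ)|)) ≤ G) (hGL : Real.exp (-(γ * L)) * G ≤ η)
    (hc : CombAt F m d η γ L p) (T : Finset ℕ) (hT : ∀ s, s ∈ T ↔ |(m s:ℝ)| ≤ L) :
    (1 - η) * (2 * L - d * L - 6 * η * L - 2) ≤ T.card := by
  classical
  have hL0 : (0:ℝ) < L := by exact_mod_cast hL
  set Y := (1 - 2 * η) * L with hY
  set X := (1 - η) * L with hX
  have hηL : 0 < η * L := by positivity
  have hηL1 : η * L ≤ 1 / 2 * L := by gcongr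
  have hX0 : 0 ≤ X := by rw [hX]; linarith
  have hY0 : 0 ≤ Y := by rw [hY]; linarith
  set J1 := Finset.Icc (-⌊Y⌋) ⌊Y⌋ with hJ1
  let P : ℤ → Prop := fun n : ℤ => |(p:ℝ) - 2 * n| ≤ d * |(p:ℝ)| + 3 * (η * L) ∧ X ≤ |(p:ℝ) - n| ∧ |(n:ℝ)| < X
  have hc2 : ((J1.filter P).card:ℝ) ≤ d * X + 3 / 2 * (η * L) + 1 := card_bad2 hd0 hd1 hX0 hηL.le p _ (fun n hn => (Finset.mem_filter.1 hn).2)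
  have hc1 : 2 * Y - 1 ≤ (J1.card:ℝ) := by
    have hfl := Int.floor_nonneg.2 hY0
    have h1 : (J1.card:ℤ) = 2 * ⌊Y⌋ + 1 := by
      rw [hJ1, Int.card_Icc, Int.toNat_of_nonneg (by omega)]; ring
    have h2 : (J1.card:ℝ) = 2 * ⌊Y⌋ + 1 := by exact_mod_cast h1
    rw [h2]; linarith [Int.lt_floor_add_one Y]
  have hmem1 : ∀ n ∈ J1, |(n:ℝ)| ≤ Y := by
    intro n hn
    rw [hJ1, Finset.mem_Icc] at hn
    have h1 : ((-⌊Y⌋ : ℤ):ℝ) ≤ n := by exact_mod_cast hn.1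
    have h2 : (n:ℝ) ≤ ⌊Y⌋ := by exact_mod_cast hn.2
    push_cast at h1
    rw [abs_le]
    constructor <;> linarith [Int.floor_le Y]
  have hcI : (J1.card:ℝ) = (J1.filter P).card + (J1.filter fun n => ¬ P n).card := by
    exact_mod_cast (Finset.card_filter_add_card_filter_not (s := J1) P).symm
  set I := J1.filter fun n => ¬ P n with hI
  have hout : ∀ n ∈ I, ∀ s, s ∉ T → F s n ^ 2 ≤ Real.exp (-(γ * L)) * (Real.exp (-(γ * |(m s:ℝ)|)) * F s (m s) ^ 2) := by
    intro n hn s hs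
    rw [hI, Finset.mem_filter] at hn
    have hnY := hmem1 n hn.1
    rw [hT, not_le] at hs
    rw [hY] at hnY
    rcases hc s n (Or.inr (by linarith)) with h | h | h
    · exfalso
      have := abs_sub_abs_le_abs_sub (m s:ℝ) n
      rw [abs_sub_comm] at this
      linarith
    · exfalso
      obtain ⟨h1, h2⟩ := h
      have h3 : X ≤ |(p:ℝ) - n| := by
        have := abs_add_le ((p:ℝ) - n) (n - (p - m s))
        rw [show ((p:ℝ) - n) + (n - (p - m s)) = m s by ring] at this
        rw [hX]; linarith
      rcases h2 with h2 | h2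
      · exact hn.2 ⟨bad_transfer h1 h2, h3, by rw [hX]; linarith⟩
      · have := abs_sub (p:ℝ) n
        rw [hX] at h3
        have h5 := abs_add_le ((p:ℝ) - n) (n - (p - m s))
        rw [show ((p:ℝ) - n) + (n - (p - m s)) = m s by ring] at h5
        linarith
    · refine (sq_bound hγ.le h).trans ?_
      have e1 : Real.exp (-(γ * |(n:ℝ)|)) ≤ 1 := Real.exp_le_one_iff.2 (by
        have : 0 ≤ γ * |(n:ℝ)| := by positivity
        linarith)
      calc _ = Real.exp (-(γ * L)) * Real.exp (-(γ * |(n:ℝ)|)) * (Real.exp (-(γ * |(m s:ℝ)|)) * F s (m s) ^ 2) := by ring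
        _ ≤ Real.exp (-(γ * L)) * 1 * (Real.exp (-(γ * |(m s:ℝ)|)) * F s (m s) ^ 2) := by gcongr
        _ = _ := by ring
  have hwt : ∀ U : Finset ℕ, ∑ s ∈ U, Real.exp (-(γ * |(m s:ℝ)|)) * F s (m s) ^ 2 ≤ G := by
    intro U
    calc _ ≤ ∑ s ∈ U, ∑ n ∈ U.image m, Real.exp (-(γ * |(n:ℝ)|)) * F s n ^ 2 := by
          refine Finset.sum_le_sum fun s hs => ?_
          exact Finset.single_le_sum (f := fun n : ℤ => Real.exp (-(γ * |(n:ℝ)|)) * F s n ^ 2) (fun _ _ => by positivity) (Finset.mem_image_of_mem m hs)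
      _ = ∑ n ∈ U.image m, Real.exp (-(γ * |(n:ℝ)|)) * ∑ s ∈ U, F s n ^ 2 := by
          rw [Finset.sum_comm]; simp only [Finset.mul_sum]
      _ ≤ ∑ n ∈ U.image m, Real.exp (-(γ * |(n:ℝ)|)) * 1 := by
          refine Finset.sum_le_sum fun n _ => ?_
          gcongr
          exact sum_le_hasSum U (fun _ _ => sq_nonneg _) (hP1 n)
      _ ≤ G := by simp only [mul_one]; exact hG _
  have hone : ∀ n ∈ I, 1 - η ≤ ∑ s ∈ T, F s n ^ 2 := by
    intro n hn
    have : (1:ℝ) ≤ ∑ s ∈ T, F s n ^ 2 + Real.exp (-(γ * L)) * G := by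
      refine hasSum_le_of_sum_le (hP1 n) fun V => ?_
      rw [← Finset.sum_inter_add_sum_sdiff V T]
      gcongr ?_ + ?_
      · exact Finset.sum_le_sum_of_subset_of_nonneg Finset.inter_subset_right fun _ _ _ => sq_nonneg _
      · calc _ ≤ ∑ s ∈ V \ T, Real.exp (-(γ * L)) * (Real.exp (-(γ * |(m s:ℝ)|)) * F s (m s) ^ 2) :=
              Finset.sum_le_sum fun s hs => hout n hn s (Finset.mem_sdiff.1 hs).2
          _ ≤ _ := by rw [← Finset.mul_sum]; gcongr; exact hwt _
    linarith
  have hfin : (I.card:ℝ) * (1 - η) ≤ (T.card : ℝ) := by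
    calc (I.card:ℝ) * (1 - η) = ∑ s ∈ I, (1 - η) := by rw [Finset.sum_const, nsmul_eq_mul]
      _ ≤ ∑ n ∈ I, ∑ s ∈ T, F s n ^ 2 := Finset.sum_le_sum hone
      _ = ∑ s ∈ T, ∑ n ∈ I, F s n ^ 2 := Finset.sum_comm
      _ ≤ ∑ s ∈ T, (1:ℝ) := Finset.sum_le_sum fun s _ => sum_le_hasSum I (fun _ _ => sq_nonneg _) (hP2 s)
      _ = _ := by simp
  refine le_trans ?_ hfin
  rw [mul_comm]
  refine mul_le_mul_of_nonneg_right ?_ (by linarith)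
  rw [hcI] at hc1
  have hX2 : d * X = d * ((1 - η) * L) := by rw [hX]
  rw [hX2] at hc2
  have hY2 : 2 * Y = 2 * ((1 - 2 * η) * L) := by rw [hY]
  have : 0 ≤ d * (η * L) := by positivity
  linarith

lemma count_core {F : ℕ → ℤ → ℝ} {m : ℕ → ℤ} {d : ℝ} (hF : LocA F m d) (hd0 : 0 ≤ d) (hd1 : d < 1)
    (hP1 : ∀ n, HasSum (fun s => F s n ^ 2) 1) (hP2 : ∀ s, HasSum (fun n => F s n ^ 2) 1) {η : ℝ} (hη : 0 < η) (hη1 : η ≤ 1 / 2) :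
    ∀ᶠ L : ℕ in atTop, (Set.ncard {s : ℕ | |m s| ≤ (L:ℤ)} : ℝ) * (1 - η) ≤ 2 * L + d * L + 8 * η * L + 2 ∧
      (1 - η) * (2 * L - d * L - 6 * η * L - 2) ≤ (Set.ncard {s : ℕ | |m s| ≤ (L:ℤ)} : ℝ) := by
  obtain ⟨γ, hγ, L0, hc⟩ := comb hF hd0 hd1 hη
  obtain ⟨G, hG0, hG⟩ := exists_G hγ
  have ht : Tendsto (fun L : ℕ => Real.exp (-(γ * L)) * G) atTop (nhds 0) := by
    have h1 : Tendsto (fun L : ℕ => γ * (L:ℝ)) atTop atTop := tendsto_natCast_atTop_atTop.const_mul_atTop hγ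
    have h2 := (Real.tendsto_exp_neg_atTop_nhds_zero.comp h1).mul_const G
    simpa using h2
  filter_upwards [eventually_ge_atTop L0, eventually_gt_atTop 0, ht.eventually_le_const hη] with L h1 h2 h3
  obtain ⟨p, hp⟩ := hc L h1
  have hmem : ∀ s, s ∈ {s : ℕ | |m s| ≤ (L:ℤ)} ↔ |(m s:ℝ)| ≤ L := by
    intro s
    rw [Set.mem_setOf_eq]
    exact_mod_cast Iff.rfl
  have hup : ∀ S : Finset ℕ, (∀ s ∈ S, |(m s:ℝ)| ≤ L) → (S.card:ℝ) * (1 - η) ≤ 2 * L + d * L + 8 * η * L + 2 :=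
    fun S hS => upper_count hd0 hd1.le hη hη1 hγ hP1 hP2 hG0 hG h3 hp S hS
  have hfin : {s : ℕ | |m s| ≤ (L:ℤ)}.Finite := by
    by_contra hinf
    obtain ⟨N, hN⟩ := exists_nat_gt (2 * (2 * L + d * L + 8 * η * L + 2))
    obtain ⟨S, hS, hcard⟩ := Set.Infinite.exists_subset_card_eq hinf N
    have := hup S fun s hs => (hmem s).1 (hS hs)
    rw [hcard] at this
    have : (N:ℝ) * (1 / 2) ≤ N * (1 - η) := by gcongr; linarith
    linarith
  rw [Set.ncard_eq_toFinset_card _ hfin]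
  refine ⟨hup _ fun s hs => (hmem s).1 (hfin.mem_toFinset.1 hs),
    lower_count hd0 hd1.le hη hη1 hγ h2 hP1 hP2 hG0 hG h3 hp _ fun s => by rw [hfin.mem_toFinset, hmem]⟩

lemma density {F : ℕ → ℤ → ℝ} {m : ℕ → ℤ} {d : ℝ} (hF : LocA F m d) (hd0 : 0 ≤ d) (hd1 : d < 1)
    (hP1 : ∀ n, HasSum (fun s => F s n ^ 2) 1) (hP2 : ∀ s, HasSum (fun n => F s n ^ 2) 1) :
    limsup (fun L : ℕ => (Set.ncard {s : ℕ | |m s| ≤ (L : ℤ)} : ℝ) / (2 * L + 1)) atTop ≤ 1 + d / 2 ∧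
    1 - d / 2 ≤ liminf (fun L : ℕ => (Set.ncard {s : ℕ | |m s| ≤ (L : ℤ)} : ℝ) / (2 * L + 1)) atTop := by
  have key : ∀ ε : ℝ, 0 < ε → ε ≤ 1 → ∀ᶠ L : ℕ in atTop,
      (Set.ncard {s : ℕ | |m s| ≤ (L : ℤ)} : ℝ) / (2 * L + 1) ≤ 1 + d / 2 + ε ∧
      1 - d / 2 - ε ≤ (Set.ncard {s : ℕ | |m s| ≤ (L : ℤ)} : ℝ) / (2 * L + 1) := by
    intro ε hε hε1
    have hη : 0 < ε / 12 := by positivity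
    have ht : Tendsto (fun L : ℕ => ε * (L:ℝ)) atTop atTop := tendsto_natCast_atTop_atTop.const_mul_atTop hε
    filter_upwards [count_core hF hd0 hd1 hP1 hP2 hη (by linarith), ht.eventually_ge_atTop 5] with L h1 h2
    set c := (Set.ncard {s : ℕ | |m s| ≤ (L : ℤ)} : ℝ) with hc
    have hL0 : (0:ℝ) ≤ L := Nat.cast_nonneg _
    obtain ⟨h3, h4⟩ := h1
    have hdε : d * (ε * L) ≤ 1 * (ε * L) := by gcongr
    have hεε : ε * (ε * L) ≤ 1 * (ε * L) := by gcongr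
    have hdε0 : 0 ≤ d * (ε * L) := by positivity
    have hεε0 : 0 ≤ ε * (ε * L) := by positivity
    rw [div_le_iff₀ (by positivity), le_div_iff₀ (by positivity)]
    constructor
    · have h5 : (1 - ε / 12) * c ≤ (1 - ε / 12) * ((2 + d + ε) * L + 4) := by nlinarith
      have h6 := le_of_mul_le_mul_left h5 (by linarith)
      nlinarith
    · nlinarith
  have hb1 : ∀ᶠ L : ℕ in atTop, (0:ℝ) ≤ (Set.ncard {s : ℕ | |m s| ≤ (L : ℤ)} : ℝ) / (2 * L + 1) :=
    Eventually.of_forall fun L => by positivity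
  constructor
  · refine le_of_forall_pos_le_add fun ε hε => ?_
    have := key (min ε 1) (by positivity) (min_le_right _ _)
    refine limsup_le_of_le (isCoboundedUnder_le_of_eventually_le atTop hb1) ?_
    filter_upwards [this] with L hL
    linarith [min_le_left ε 1, hL.1]
  · refine le_of_forall_pos_le_add fun ε hε => ?_
    have := key (min ε 1) (by positivity) (min_le_right _ _)
    rw [← sub_le_iff_le_add]
    have h1 := key 1 one_pos le_rfl
    refine le_liminf_of_le (isCoboundedUnder_ge_of_eventually_le atTop (x := 1 + d / 2 + 1) ?_) ?_
    · filter_upwards [h1] with L hL using hL.1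
    · filter_upwards [this] with L hL
      linarith [min_le_left ε 1, hL.2]

lemma parseval (Φ : HilbertBasis ℕ ℝ (lp (fun _ : ℤ => ℝ) 2)) :
    (∀ n : ℤ, HasSum (fun s => (Φ s n : ℝ) ^ 2) 1) ∧ (∀ s, HasSum (fun n : ℤ => (Φ s n : ℝ) ^ 2) 1) := by
  constructor
  · intro n
    have h := Φ.hasSum_inner_mul_inner (lp.single 2 n (1:ℝ)) (lp.single 2 n (1:ℝ))
    simp only [lp.inner_single_left, lp.inner_single_right] at h
    simpa [sq] using h
  · intro s
    have h := lp.hasSum_inner (𝕜 := ℝ) (Φ s) (Φ s)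
    rw [real_inner_self_eq_norm_sq, Φ.orthonormal.1 s] at h
    simpa [sq] using h

lemma sq_sum_le {φ : ℤ → ℝ} (h : HasSum (fun n => φ n ^ 2) 1) (s : Finset ℤ) : ∑ i ∈ s, φ i ^ 2 ≤ 1 :=
  sum_le_hasSum s (fun i _ => sq_nonneg _) h

lemma tend_zero {φ : ℤ → ℝ} (h : HasSum (fun n => φ n ^ 2) 1) : Tendsto φ cofinite (nhds 0) := by
  have h1 := h.summable.tendsto_cofinite_zero
  have h2 := (Real.continuous_sqrt.tendsto 0).comp h1
  simp only [Real.sqrt_zero] at h2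
  have h3 : (Real.sqrt ∘ fun n => φ n ^ 2) = fun n => |φ n| := by
    ext n; simp [Real.sqrt_sq_eq_abs]
  rw [h3] at h2
  exact (tendsto_zero_iff_abs_tendsto_zero _).2 h2

lemma le_one_of {φ : ℤ → ℝ} (h : HasSum (fun n => φ n ^ 2) 1) (n : ℤ) : |φ n| ≤ 1 := by
  have := sq_sum_le h {n}
  simp at this
  exact this

lemma wronsk {g : ℤ → ℝ} {E : ℝ} {φ : ℤ → ℝ} (he : IsEigenfunction g E φ)
    (hs : HasSum (fun n => φ n ^ 2) 1) (n : ℤ) (t : ℝ) (ht : 0 ≤ t) (hg : ∀ k, |g (n - k) - g k| ≤ t) (c : ℤ) :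
    |φ (c + 1) * φ (n - c) - φ c * φ (n - c - 1)| ≤ t := by
  set W : ℤ → ℝ := fun c => φ (c + 1) * φ (n - c) - φ c * φ (n - c - 1) with hW
  have hstep : ∀ k, W (k + 1) = W k + (g (n - (k + 1)) - g (k + 1)) * (φ (k + 1) * φ (n - (k + 1))) := by
    intro k
    have h1 := he (k + 1)
    have h2 := he (n - (k + 1))
    simp only [hW]
    rw [show n - (k + 1) + 1 = n - k by ring] at h2
    rw [show k + 1 - 1 = k by ring] at h1
    rw [show n - k - 1 = n - (k + 1) by ring]
    linear_combination φ (n - (k + 1)) * h1 - φ (k + 1) * h2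
  have hN : ∀ N : ℕ, |W c - W (c + N)| ≤ t * ∑ j ∈ Finset.range N, |φ (c + j + 1) * φ (n - (c + j + 1))| := by
    intro N
    induction N with
    | zero => simp
    | succ N ih =>
      rw [Finset.sum_range_succ, mul_add]
      have h1 := hstep (c + N)
      have h2 : |(g (n - (c + N + 1)) - g (c + N + 1)) * (φ (c + N + 1) * φ (n - (c + N + 1)))|
          ≤ t * |φ (c + N + 1) * φ (n - (c + N + 1))| := by
        rw [abs_mul]
        exact mul_le_mul_of_nonneg_right (hg _) (abs_nonneg _)
      push_cast
      rw [← add_assoc, h1]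
      have h3 := abs_sub (W c - W (c + N)) ((g (n - (c + N + 1)) - g (c + N + 1)) * (φ (c + N + 1) * φ (n - (c + N + 1))))
      rw [show W c - (W (c + N) + (g (n - (c + N + 1)) - g (c + N + 1)) * (φ (c + N + 1) * φ (n - (c + N + 1))))
        = (W c - W (c + N)) - (g (n - (c + N + 1)) - g (c + N + 1)) * (φ (c + N + 1) * φ (n - (c + N + 1))) by ring]
      linarith
  have hS : ∀ N : ℕ, ∑ j ∈ Finset.range N, |φ (c + j + 1) * φ (n - (c + j + 1))| ≤ 1 := by
    intro N
    have a1 : ∑ j ∈ Finset.range N, φ (c + j + 1) ^ 2 ≤ 1 := by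
      have := sq_sum_le hs ((Finset.range N).map ⟨fun j : ℕ => c + j + 1, fun a b h => by simpa using h⟩)
      rw [Finset.sum_map] at this
      exact this
    have a2 : ∑ j ∈ Finset.range N, φ (n - (c + j + 1)) ^ 2 ≤ 1 := by
      have := sq_sum_le hs ((Finset.range N).map ⟨fun j : ℕ => n - (c + j + 1), fun a b h => by simpa using h⟩)
      rw [Finset.sum_map] at this
      exact this
    have a3 : ∑ j ∈ Finset.range N, |φ (c + j + 1) * φ (n - (c + j + 1))|
        ≤ ∑ j ∈ Finset.range N, (φ (c + j + 1) ^ 2 / 2 + φ (n - (c + j + 1)) ^ 2 / 2) := by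
      refine Finset.sum_le_sum fun j _ => ?_
      rw [abs_mul]
      nlinarith [sq_nonneg (|φ (c + j + 1)| - |φ (n - (c + j + 1))|), sq_abs (φ (c + j + 1)), sq_abs (φ (n - (c + j + 1)))]
    rw [Finset.sum_add_distrib, ← Finset.sum_div, ← Finset.sum_div] at a3
    linarith
  have hT : Tendsto (fun N : ℕ => W (c + N)) atTop (nhds 0) := by
    have i1 : Tendsto (fun N : ℕ => φ (c + N + 1)) atTop (nhds 0) := by
      refine (tend_zero hs).comp ?_
      rw [← Nat.cofinite_eq_atTop]
      exact Function.Injective.tendsto_cofinite fun a b h => by simpa using h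
    have i2 : Tendsto (fun N : ℕ => φ (c + N)) atTop (nhds 0) := by
      refine (tend_zero hs).comp ?_
      rw [← Nat.cofinite_eq_atTop]
      exact Function.Injective.tendsto_cofinite fun a b h => by simpa using h
    have i3 : Tendsto (fun N : ℕ => φ (n - (c + N))) atTop (nhds 0) := by
      refine (tend_zero hs).comp ?_
      rw [← Nat.cofinite_eq_atTop]
      exact Function.Injective.tendsto_cofinite fun a b h => by simpa using h
    have i4 : Tendsto (fun N : ℕ => φ (n - (c + N) - 1)) atTop (nhds 0) := by
      refine (tend_zero hs).comp ?_
      rw [← Nat.cofinite_eq_atTop]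
      exact Function.Injective.tendsto_cofinite fun a b h => by simpa using h
    simpa [hW] using (i1.mul i3).sub (i2.mul i4)
  have hL : Tendsto (fun N : ℕ => |W c - W (c + N)|) atTop (nhds |W c - 0|) :=
    (tendsto_const_nhds.sub hT).abs
  rw [sub_zero] at hL
  refine le_of_tendsto' hL fun N => (hN N).trans ?_
  nlinarith [hS N]

lemma sym_prop {g : ℤ → ℝ} {E : ℝ} {φ : ℤ → ℝ} (he : IsEigenfunction g E φ) {G : ℝ} (hG : ∀ k, |g k| ≤ G)
    (hs : HasSum (fun n => φ n ^ 2) 1) (n : ℤ) (t : ℝ) (hg : ∀ k, |g (n - k) - g k| ≤ t)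
    (σ : ℝ) (hσ : |σ| = 1) (c : ℤ) (A : ℝ) (hA0 : t ≤ A)
    (h0 : |φ c + σ * φ (n - c)| ≤ A) (h1 : |φ (c + 1) + σ * φ (n - (c + 1))| ≤ A) (j : ℕ) :
    |φ (c + j) + σ * φ (n - (c + j))| ≤ (|E| + G + 2) ^ j * A ∧
    |φ (c + j + 1) + σ * φ (n - (c + j + 1))| ≤ (|E| + G + 2) ^ j * A := by
  have hG0 : 0 ≤ G := (abs_nonneg _).trans (hG 0)
  have hB1 : 1 ≤ |E| + G + 2 := by linarith [abs_nonneg E]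
  have ht : 0 ≤ t := (abs_nonneg _).trans (hg 0)
  induction j with
  | zero => simp only [Nat.cast_zero, add_zero, pow_zero, one_mul]; exact ⟨h0, h1⟩
  | succ j ih =>
    set D := (|E| + G + 2) ^ j * A with hD
    have hDA : A ≤ D := by
      have : 1 ≤ (|E| + G + 2) ^ j := one_le_pow₀ hB1
      nlinarith
    have e1 := he (c + j + 1)
    have e2 := he (n - (c + j + 1))
    rw [show c + (j:ℤ) + 1 - 1 = c + j by ring] at e1
    rw [show n - (c + (j:ℤ) + 1) + 1 = n - (c + j) by ring, show n - (c + (j:ℤ) + 1) - 1 = n - (c + j + 1 + 1) by ring] at e2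
    push_cast
    rw [← add_assoc]
    obtain ⟨i0, i1⟩ := ih
    have hpow : (|E| + G + 2) ^ (j + 1) * A = (|E| + G + 2) * D := by rw [hD]; ring
    rw [hpow]
    set p := c + (j:ℤ) + 1 with hp
    have key : φ (p + 1) + σ * φ (n - (p + 1)) = (E - g p) * (φ p + σ * φ (n - p)) - (φ (c + j) + σ * φ (n - (c + j)))
        - σ * ((g (n - p) - g p) * φ (n - p)) := by linear_combination e1 + σ * e2
    refine ⟨i1.trans (by nlinarith), ?_⟩
    rw [key]
    have b1 : |(E - g p) * (φ p + σ * φ (n - p))| ≤ (|E| + G) * D := by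
      rw [abs_mul]
      exact mul_le_mul ((abs_sub _ _).trans (by linarith [hG p])) i1 (abs_nonneg _) (by positivity)
    have b2 : |σ * ((g (n - p) - g p) * φ (n - p))| ≤ t := by
      rw [abs_mul, hσ, one_mul, abs_mul]
      nlinarith [hg p, le_one_of hs (n - p), abs_nonneg (φ (n - p)), abs_nonneg (g (n - p) - g p)]
    have := abs_sub ((E - g p) * (φ p + σ * φ (n - p)) - (φ (c + j) + σ * φ (n - (c + j)))) (σ * ((g (n - p) - g p) * φ (n - p)))
    have := abs_sub ((E - g p) * (φ p + σ * φ (n - p))) (φ (c + j) + σ * φ (n - (c + j)))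
    linarith

lemma prod_small {a b t : ℝ} (ht : 0 ≤ t) (h : |a * b| ≤ t) : |a| ≤ √t ∨ |b| ≤ √t := by
  by_contra hc
  push Not at hc
  have := mul_lt_mul'' hc.1 hc.2 (Real.sqrt_nonneg _) (Real.sqrt_nonneg _)
  rw [Real.mul_self_sqrt ht, ← abs_mul] at this
  linarith

lemma sym_center {g : ℤ → ℝ} {E : ℝ} {φ : ℤ → ℝ} (he : IsEigenfunction g E φ) {G : ℝ} (hG : ∀ k, |g k| ≤ G)
    (hs : HasSum (fun n => φ n ^ 2) 1) (n : ℤ) (t : ℝ) (hg : ∀ k, |g (n - k) - g k| ≤ t) :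
    ∃ σ : ℝ, |σ| = 1 ∧ |φ (n / 2) + σ * φ (n - n / 2)| ≤ (|E| + G + 2) * √t ∧
      |φ (n / 2 + 1) + σ * φ (n - (n / 2 + 1))| ≤ (|E| + G + 2) * √t := by
  have hG0 : 0 ≤ G := (abs_nonneg _).trans (hG 0)
  have ht : 0 ≤ t := (abs_nonneg _).trans (hg 0)
  have hB : 2 ≤ |E| + G + 2 := by linarith [abs_nonneg E]
  have hw := wronsk he hs n t ht hg (n / 2)
  have hq := Real.sqrt_nonneg t
  set c := n / 2 with hc
  rcases Int.emod_two_eq_zero_or_one n with h | h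
  · have hn : n - c = c := by omega
    have hn1 : n - (c + 1) = c - 1 := by omega
    rw [hn, hn1] 
    rw [hn] at hw
    rw [show φ (c + 1) * φ c - φ c * φ (c - 1) = φ c * (φ (c + 1) - φ (c - 1)) by ring] at hw
    rcases prod_small ht hw with h1 | h1
    · refine ⟨1, by simp, ?_, ?_⟩
      · rw [one_mul]
        have := abs_add_le (φ c) (φ c)
        nlinarith
      · have := he c
        rw [show φ (c + 1) + 1 * φ (c - 1) = (E - g c) * φ c by linear_combination this, abs_mul]
        have : |E - g c| ≤ |E| + G + 2 := (abs_sub _ _).trans (by linarith [hG c])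
        exact mul_le_mul this h1 (abs_nonneg _) (by linarith)
    · refine ⟨-1, by simp, ?_, ?_⟩
      · rw [show φ c + -1 * φ c = 0 by ring, abs_zero]
        positivity
      · rw [show φ (c + 1) + -1 * φ (c - 1) = φ (c + 1) - φ (c - 1) by ring]
        nlinarith
  · have hn : n - c = c + 1 := by omega
    have hn1 : n - (c + 1) = c := by omega
    rw [hn, hn1] 
    rw [hn, show c + 1 - 1 = c by ring] at hw
    rw [show φ (c + 1) * φ (c + 1) - φ c * φ c = (φ (c + 1) + φ c) * (φ (c + 1) - φ c) by ring] at hw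
    rcases prod_small ht hw with h1 | h1
    · refine ⟨1, by simp, ?_, ?_⟩
      · rw [one_mul, add_comm]
        nlinarith
      · rw [one_mul]
        nlinarith
    · refine ⟨-1, by simp, ?_, ?_⟩
      · rw [show φ c + -1 * φ (c + 1) = -(φ (c + 1) - φ c) by ring, abs_neg]
        nlinarith
      · rw [show φ (c + 1) + -1 * φ c = φ (c + 1) - φ c by ring]
        nlinarith

lemma sym_flip {φ : ℤ → ℝ} {σ : ℝ} (hσ : |σ| = 1) (a b : ℤ) : |φ a + σ * φ b| = |φ b + σ * φ a| := by
  have h : σ * σ = 1 := by rw [← abs_mul_abs_self, hσ]; norm_num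
  rw [show φ a + σ * φ b = σ * (φ b + σ * φ a) by linear_combination (-φ a) * h, abs_mul, hσ, one_mul]

lemma sym_bound {g : ℤ → ℝ} {E : ℝ} {φ : ℤ → ℝ} (he : IsEigenfunction g E φ) {G : ℝ} (hG : ∀ k, |g k| ≤ G)
    (hs : HasSum (fun n => φ n ^ 2) 1) (n : ℤ) (hn : n ≠ 0) (t : ℝ) (ht1 : t ≤ 1) (hg : ∀ k, |g (n - k) - g k| ≤ t) :
    |φ 0| ≤ |φ n| + (|E| + G + 2) ^ n.natAbs * ((|E| + G + 2) * √t) ∧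
    |φ 1| ≤ |φ (n - 1)| + (|E| + G + 2) ^ n.natAbs * ((|E| + G + 2) * √t) := by
  have hG0 : 0 ≤ G := (abs_nonneg _).trans (hG 0)
  have ht : 0 ≤ t := (abs_nonneg _).trans (hg 0)
  have hB : 2 ≤ |E| + G + 2 := by linarith [abs_nonneg E]
  obtain ⟨σ, hσ, h0, h1⟩ := sym_center he hG hs n t hg
  have hq := Real.sqrt_nonneg t
  have htq : t ≤ √t := by
    nlinarith [Real.sq_sqrt ht, Real.sqrt_le_one.2 ht1]
  have hA0 : t ≤ (|E| + G + 2) * √t := by nlinarith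
  have hpr := sym_prop he hG hs n t hg σ hσ (n / 2) _ hA0 h0 h1
  have hmono : ∀ j : ℕ, j ≤ n.natAbs → (|E| + G + 2) ^ j * ((|E| + G + 2) * √t) ≤ (|E| + G + 2) ^ n.natAbs * ((|E| + G + 2) * √t) := by
    intro j hj
    exact mul_le_mul_of_nonneg_right (pow_le_pow_right₀ (by linarith) hj) (by positivity)
  have hres : |φ 0 + σ * φ n| ≤ (|E| + G + 2) ^ n.natAbs * ((|E| + G + 2) * √t) ∧
      |φ 1 + σ * φ (n - 1)| ≤ (|E| + G + 2) ^ n.natAbs * ((|E| + G + 2) * √t) := by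
    rcases lt_or_gt_of_ne hn with h | h
    · obtain ⟨j, hj⟩ : ∃ j : ℕ, n / 2 + (j:ℤ) = 0 := ⟨(-(n / 2)).toNat, by omega⟩
      have := hpr j
      rw [hj] at this
      simp only [zero_add, sub_zero] at this
      exact ⟨this.1.trans (hmono j (by omega)), this.2.trans (hmono j (by omega))⟩
    · obtain ⟨j, hj⟩ : ∃ j : ℕ, n / 2 + (j:ℤ) = n - 1 := ⟨(n - 1 - n / 2).toNat, by omega⟩
      have := hpr j
      rw [hj] at this
      rw [show n - (n - 1) = 1 by ring, show n - 1 + 1 = n by ring, sub_self] at this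
      rw [sym_flip hσ 0 n, sym_flip hσ 1 (n-1)]
      exact ⟨this.2.trans (hmono j (by omega)), this.1.trans (hmono j (by omega))⟩
  have fin : ∀ a b : ℝ, |a| ≤ |b| + |a + σ * b| := by
    intro a b
    have := abs_sub (a + σ * b) (σ * b)
    rw [abs_mul, hσ, one_mul, show a + σ * b - σ * b = a by ring] at this
    linarith
  exact ⟨(fin (φ 0) (φ n)).trans (by linarith [hres.1]), (fin (φ 1) (φ (n-1))).trans (by linarith [hres.2])⟩

lemma zero_of_two {g : ℤ → ℝ} {E : ℝ} {φ : ℤ → ℝ} (he : IsEigenfunction g E φ) (h0 : φ 0 = 0) (h1 : φ 1 = 0) :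
    ∀ n, φ n = 0 := by
  have hp : ∀ j : ℕ, φ j = 0 ∧ φ (j + 1) = 0 := by
    intro j
    induction j with
    | zero => simpa using ⟨h0, h1⟩
    | succ j ih =>
      push_cast
      have := he (j + 1)
      rw [show (j:ℤ) + 1 - 1 = j by ring, ih.1, ih.2] at this
      exact ⟨ih.2, by linarith⟩
  have hm : ∀ j : ℕ, φ (-j) = 0 ∧ φ (-j + 1) = 0 := by
    intro j
    induction j with
    | zero => simpa using ⟨h0, h1⟩
    | succ j ih =>
      push_cast
      have := he (-j)
      rw [ih.1, ih.2] at this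
      rw [show -((j:ℤ) + 1) + 1 = -j by ring, show -((j:ℤ) + 1) = -j - 1 by ring]
      exact ⟨by linarith, ih.1⟩
  intro n
  rcases Int.eq_nat_or_neg n with ⟨k, rfl | rfl⟩
  · exact (hp k).1
  · exact (hm k).1

lemma amoPot_le {lam : ℝ} (hl : 0 ≤ lam) (α θ : ℝ) (k : ℤ) : |amoPot lam α θ k| ≤ 2 * lam := by
  unfold amoPot
  rw [abs_mul, abs_of_nonneg (by positivity : 0 ≤ 2 * lam)]
  nlinarith [Real.abs_cos_le_one (2 * π * (θ + k * α))]

lemma amoPot_sub {lam : ℝ} (hl : 0 ≤ lam) (α θ : ℝ) (n k : ℤ) :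
    |amoPot lam α θ (n - k) - amoPot lam α θ k| ≤ 2 * lam * sn (2 * θ + n * α) := by
  unfold amoPot sn
  rw [← mul_sub, Real.cos_sub_cos, abs_mul, abs_of_nonneg (by positivity : 0 ≤ 2 * lam)]
  refine mul_le_mul_of_nonneg_left ?_ (by positivity)
  rw [abs_mul]
  have h1 : (2 * π * (θ + ((n - k : ℤ):ℝ) * α) + 2 * π * (θ + k * α)) / 2 = π * (2 * θ + n * α) := by
    push_cast; ring
  rw [h1, neg_mul, abs_neg]
  exact mul_le_of_le_one_right (abs_nonneg _) (Real.abs_sin_le_one _)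

lemma no_junk {lam α θ E : ℝ} (hl : 0 < lam) {φ : ℤ → ℝ} (he : IsEigenfunction (amoPot lam α θ) E φ)
    (hs : HasSum (fun n => φ n ^ 2) 1)
    (hj : ∀ M : ℝ, ∃ᶠ n : ℤ in cofinite, sn (2 * θ + n * α) ≤ 7 * Real.exp (-(M * |(n:ℝ)|))) : False := by
  set B := |E| + 2 * lam + 2 with hBdef
  have hB : 2 ≤ B := by rw [hBdef]; linarith [abs_nonneg E]
  set M := 2 * Real.log B + 2 with hM
  have hlogB : 0 ≤ Real.log B := Real.log_nonneg (by linarith)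
  have habs : Tendsto (fun n : ℤ => |(n:ℝ)|) cofinite atTop := by
    have := Int.tendsto_coe_cofinite
    have h2 := (tendsto_norm_cocompact_atTop (E := ℝ)).comp this
    exact h2
  have hexp : Tendsto (fun n : ℤ => Real.exp (-|(n:ℝ)|)) cofinite (nhds 0) :=
    Real.tendsto_exp_neg_atTop_nhds_zero.comp habs
  have key : ∀ ε : ℝ, 0 < ε → |φ 0| ≤ 2 * ε ∧ |φ 1| ≤ 2 * ε := by
    intro ε hε
    have t0 : ∀ᶠ n : ℤ in cofinite, |φ n| < ε := by
      have := (tend_zero hs).abs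
      rw [abs_zero] at this
      exact this.eventually_lt_const hε
    have t1 : ∀ᶠ n : ℤ in cofinite, |φ (n - 1)| < ε := by
      have := ((tend_zero hs).comp (Function.Injective.tendsto_cofinite (sub_left_injective (b := (1:ℤ))))).abs
      rw [abs_zero] at this
      exact this.eventually_lt_const hε
    have t2 : ∀ᶠ n : ℤ in cofinite, B * √(14 * lam) * Real.exp (-|(n:ℝ)|) < ε := by
      have := hexp.const_mul (B * √(14 * lam))
      rw [mul_zero] at this
      exact this.eventually_lt_const hε
    have t3 : ∀ᶠ n : ℤ in cofinite, 14 * lam * Real.exp (-|(n:ℝ)|) < 1 := by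
      have := hexp.const_mul (14 * lam)
      rw [mul_zero] at this
      exact this.eventually_lt_const one_pos
    have t4 : ∀ᶠ n : ℤ in cofinite, n ≠ 0 := by
      have := (Set.finite_singleton (0:ℤ)).compl_mem_cofinite
      exact this
    obtain ⟨n, hn, h0, h1, h2, h3, h4⟩ := ((hj M).and_eventually (t0.and (t1.and (t2.and (t3.and t4))))).exists
    set t := 14 * lam * Real.exp (-(M * |(n:ℝ)|)) with htd
    have hn0 := abs_nonneg (n:ℝ)
    have ht1 : t ≤ 1 := by
      have : Real.exp (-(M * |(n:ℝ)|)) ≤ Real.exp (-|(n:ℝ)|) := Real.exp_le_exp.2 (by nlinarith)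
      rw [htd]
      nlinarith
    have hg : ∀ k, |amoPot lam α θ (n - k) - amoPot lam α θ k| ≤ t := by
      intro k
      refine (amoPot_sub hl.le α θ n k).trans ?_
      rw [htd]; nlinarith
    have hb := sym_bound he (amoPot_le hl.le α θ) hs n h4 t ht1 hg
    rw [← hBdef] at hb
    have hpow : B ^ n.natAbs = Real.exp (Real.log B * |(n:ℝ)|) := by
      rw [← Real.rpow_natCast, Real.rpow_def_of_pos (by linarith)]
      congr 2
      rw [Nat.cast_natAbs, Int.cast_abs]
    have hsq : √t = √(14 * lam) * Real.exp (-(M * |(n:ℝ)|) / 2) := by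
      rw [htd, Real.sqrt_mul (by positivity), Real.exp_half]
    have hfin : B ^ n.natAbs * (B * √t) = B * √(14 * lam) * Real.exp (-|(n:ℝ)|) := by
      rw [hpow, hsq, show -|(n:ℝ)| = Real.log B * |(n:ℝ)| + -(M * |(n:ℝ)|) / 2 by rw [hM]; ring, Real.exp_add]
      ring
    rw [hfin] at hb
    constructor <;> linarith [hb.1, hb.2]
  have z0 : φ 0 = 0 := by
    by_contra hc
    have hp := abs_pos.2 hc
    have := (key (|φ 0| / 4) (by positivity)).1
    linarith
  have z1 : φ 1 = 0 := by
    by_contra hc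
    have hp := abs_pos.2 hc
    have := (key (|φ 1| / 4) (by positivity)).2
    linarith
  have hz := zero_of_two he z0 z1
  have : (fun n => φ n ^ 2) = fun _ => (0:ℝ) := by ext n; simp [hz n]
  rw [this] at hs
  exact zero_ne_one (hasSum_zero.unique hs)

lemma dist_zero_unique {α κ τ θ : ℝ} (hd : Dio α κ τ) {a b : ℤ} (ha : distToInt (2 * θ + a * α) = 0)
    (hb : distToInt (2 * θ + b * α) = 0) : a = b := by
  by_contra hne
  have h0 : a - b ≠ 0 := sub_ne_zero.2 hne
  have h1 := hd.2.2 (a - b) h0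
  have h2 : 0 < τ / |((a - b : ℤ):ℝ)| ^ κ := by
    have : 0 < |((a - b : ℤ):ℝ)| := abs_pos.2 (by exact_mod_cast h0)
    have := hd.2.1
    positivity
  have h3 : ((a - b : ℤ):ℝ) * α = (2 * θ + a * α) - (2 * θ + b * α) := by push_cast; ring
  rw [h3] at h1
  have h4 := sn_sub_le (2 * θ + a * α) (2 * θ + b * α)
  have h5 := sn_le (2 * θ + a * α)
  have h6 := sn_le (2 * θ + b * α)
  rw [ha] at h5
  rw [hb] at h6
  linarith

lemma f_nonneg (α θ : ℝ) (n : ℤ) : 0 ≤ -Real.log (distToInt (2 * θ + n * α)) / |(n : ℝ)| := by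
  refine div_nonneg ?_ (abs_nonneg _)
  have := Real.log_nonpos (distToInt_nonneg (2 * θ + n * α)) ((distToInt_le_half _).trans (by norm_num))
  linarith

lemma cof_nat {P : ℤ → Prop} (h : ∀ᶠ n in cofinite, P n) : ∃ N : ℕ, ∀ n : ℤ, (N:ℝ) < |(n:ℝ)| → P n := by
  have hf : {n | ¬ P n}.Finite := h
  obtain ⟨N, hN⟩ := (hf.image Int.natAbs).bddAbove
  refine ⟨N, fun n hn => ?_⟩
  by_contra hc
  have := hN ⟨n, hc, rfl⟩
  have h2 : (n.natAbs : ℝ) ≤ N := by exact_mod_cast this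
  rw [Nat.cast_natAbs, Int.cast_abs] at h2
  linarith

lemma phaseB_of {α κ τ θ : ℝ} (hd : Dio α κ τ)
    (hb : IsBoundedUnder (· ≤ ·) cofinite (fun n : ℤ => -Real.log (distToInt (2 * θ + n * α)) / |(n : ℝ)|)) :
    0 ≤ deltaPhase α θ ∧ PhaseB α θ (deltaPhase α θ) := by
  constructor
  · unfold deltaPhase
    exact le_limsup_of_frequently_le (Frequently.of_forall fun n => f_nonneg α θ n) hb
  · intro ε hε
    have h1 : limsup (fun n : ℤ => -Real.log (distToInt (2 * θ + n * α)) / |(n : ℝ)|) cofinite < deltaPhase α θ + ε := by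
      change deltaPhase α θ < _
      linarith
    have h2 := eventually_lt_of_limsup_lt h1 hb
    have h3 : ∀ᶠ n : ℤ in cofinite, distToInt (2 * θ + n * α) ≠ 0 := by
      have : {n : ℤ | distToInt (2 * θ + n * α) = 0}.Subsingleton := fun a ha b hb => dist_zero_unique hd ha hb
      have := this.finite.compl_mem_cofinite
      exact this
    obtain ⟨N, hN⟩ := cof_nat (h2.and h3)
    refine ⟨N, fun n hn => ?_⟩
    obtain ⟨h4, h5⟩ := hN n hn
    have hn0 : 0 < |(n:ℝ)| := lt_of_le_of_lt (Nat.cast_nonneg N) hn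
    rw [div_lt_iff₀ hn0] at h4
    have h6 : 0 < distToInt (2 * θ + n * α) := lt_of_le_of_ne (distToInt_nonneg _) (Ne.symm h5)
    refine le_trans ?_ (sn_ge _)
    rw [← Real.le_log_iff_exp_le h6]
    linarith

lemma junk_freq {α θ : ℝ}
    (hb : ¬ IsBoundedUnder (· ≤ ·) cofinite (fun n : ℤ => -Real.log (distToInt (2 * θ + n * α)) / |(n : ℝ)|)) (M : ℝ) :
    ∃ᶠ n : ℤ in cofinite, sn (2 * θ + n * α) ≤ 7 * Real.exp (-(M * |(n:ℝ)|)) := by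
  intro hev
  apply hb
  refine ⟨max M 0, ?_⟩
  rw [eventually_map]
  have t4 : ∀ᶠ n : ℤ in cofinite, n ≠ 0 := (Set.finite_singleton (0:ℤ)).compl_mem_cofinite
  filter_upwards [hev, t4] with n hn h0
  have hn0 : 0 < |(n:ℝ)| := abs_pos.2 (by exact_mod_cast h0)
  push Not at hn
  have h1 := sn_le (2 * θ + n * α)
  have h2 : Real.exp (-(M * |(n:ℝ)|)) < distToInt (2 * θ + n * α) := by linarith
  have h3 : 0 < distToInt (2 * θ + n * α) := (Real.exp_pos _).trans h2
  have h4 := (Real.lt_log_iff_exp_lt h3).2 h2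
  refine le_trans ?_ (le_max_left M 0)
  rw [div_le_iff₀ hn0]
  linarith

lemma locA_of {lam α κ τ θ δ : ℝ} (hl : 1 < lam) (hd : Dio α κ τ) (hδ : 0 ≤ δ) (hph : PhaseB α θ δ) (K : ℝ) (hK : 0 < K)
    (F : ℕ → ℤ → ℝ) (mt : ℕ → ℤ) (heig : ∀ s, ∃ E, IsEigenfunction (amoPot lam α θ) E (F s))
    (hP : ∀ s, HasSum (fun n => F s n ^ 2) 1) (hmt : ∀ s k, |F s k| ≤ K * |F s (mt s)|) :
    LocA F mt (δ / Real.log lam) := by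
  have hL : 0 < Real.log lam := Real.log_pos hl
  have hpos : ∀ s, 0 < |F s (mt s)| := by
    intro s
    by_contra hc
    have hz : |F s (mt s)| = 0 := le_antisymm (not_lt.1 hc) (abs_nonneg _)
    have : (fun n => F s n ^ 2) = fun _ => (0:ℝ) := by
      ext n
      have := hmt s n
      rw [hz, mul_zero] at this
      simp [abs_nonpos_iff.1 this]
    have h := hP s
    rw [this] at h
    exact zero_ne_one (hasSum_zero.unique h)
  have ham : ∀ s, ∃ E, AMax lam α θ K (2 * K + 2 * lam) E (F s) (mt s) := by
    intro s
    obtain ⟨E, hE⟩ := heig s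
    refine ⟨E, hE, hmt s, hpos s, ?_⟩
    have h1 := hE (mt s)
    have h2 : |E| * |F s (mt s)| ≤ (2 * K + 2 * lam) * |F s (mt s)| := by
      rw [← abs_mul, ← h1]
      have a1 := abs_add_le (F s (mt s + 1) + F s (mt s - 1)) (amoPot lam α θ (mt s) * F s (mt s))
      have a2 := abs_add_le (F s (mt s + 1)) (F s (mt s - 1))
      have a3 := hmt s (mt s + 1)
      have a4 := hmt s (mt s - 1)
      have a5 : |amoPot lam α θ (mt s) * F s (mt s)| ≤ 2 * lam * |F s (mt s)| := by
        rw [abs_mul]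
        exact mul_le_mul_of_nonneg_right (amoPot_le (by linarith) α θ _) (abs_nonneg _)
      linarith
    exact le_of_mul_le_mul_right h2 (hpos s)
  intro ε hε
  obtain ⟨γ, hγ, R0, hR⟩ := localization hl hd hδ hph K (Em := 2 * K + 2 * lam) (by linarith)
    (ε := ε * min 1 (Real.log lam)) (by positivity)
  refine ⟨γ, hγ, R0, fun R hRR => ?_⟩
  obtain ⟨p, hp⟩ := hR R hRR
  refine ⟨p, fun s hs n hn => ?_⟩
  obtain ⟨E, hE⟩ := ham s
  have hR0 : (0:ℝ) ≤ R := Nat.cast_nonneg R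
  have m1 : ε * min 1 (Real.log lam) * R ≤ ε * R := by
    have := min_le_left 1 (Real.log lam)
    have : ε * min 1 (Real.log lam) ≤ ε := by nlinarith
    exact mul_le_mul_of_nonneg_right this hR0
  have m2 : ε * min 1 (Real.log lam) * R ≤ Real.log lam * (ε * R) := by
    have h := min_le_right 1 (Real.log lam)
    have : 0 ≤ ε * R := by positivity
    nlinarith
  have := hp E (F s) (mt s) hE (by exact_mod_cast hs) n (by exact_mod_cast hn)
  push_cast at this
  rcases this with h | ⟨h, h' | h'⟩ | h
  · exact Or.inl (h.trans m1)
  · refine Or.inr (Or.inl ⟨h.trans m1, Or.inl ?_⟩)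
    have e : δ / Real.log lam * |(p:ℝ)| + ε * R = (δ * |(p:ℝ)| + Real.log lam * (ε * R)) / Real.log lam := by
      field_simp
    rw [e, le_div_iff₀ hL]
    linarith
  · exact Or.inr (Or.inl ⟨h.trans m1, Or.inr (h'.trans m1)⟩)
  · exact Or.inr (Or.inr h)

theorem amo_density_bounds_for_almost_maxima
    (lam α θ : ℝ) (hlam : 1 < lam) (hα : IsDiophantine α)
    (hδ : deltaPhase α θ < Real.log lam)
    (Φ : HilbertBasis ℕ ℝ (lp (fun _ : ℤ => ℝ) 2))
    (heig : ∀ s : ℕ, ∃ E : ℝ, IsEigenfunction (amoPot lam α θ) E (fun n => Φ s n))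
    (K : ℝ) (hK : 0 < K)
    (mt : ℕ → ℤ) (hmt : ∀ (s : ℕ) (k : ℤ), |Φ s k| ≤ K * |Φ s (mt s)|) :
    limsup (fun L : ℕ => (Set.ncard {s : ℕ | |mt s| ≤ (L : ℤ)} : ℝ) / (2 * L + 1)) atTop
        ≤ 1 + deltaPhase α θ / (2 * Real.log lam) ∧
    1 - deltaPhase α θ / Real.log lam
        ≤ liminf (fun L : ℕ => (Set.ncard {s : ℕ | |mt s| ≤ (L : ℤ)} : ℝ) / (2 * L + 1)) atTop := by
  obtain ⟨κ, τ, hd⟩ := exists_dio hα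
  have hpar := parseval Φ
  have hL : 0 < Real.log lam := Real.log_pos hlam
  by_cases hb : IsBoundedUnder (· ≤ ·) cofinite (fun n : ℤ => -Real.log (distToInt (2 * θ + n * α)) / |(n : ℝ)|)
  · obtain ⟨h0, hph⟩ := phaseB_of hd hb
    have hloc := locA_of hlam hd h0 hph K hK (fun s n => Φ s n) mt heig hpar.2 hmt
    have hd0 : 0 ≤ deltaPhase α θ / Real.log lam := by positivity
    have hd1 : deltaPhase α θ / Real.log lam < 1 := by rwa [div_lt_one hL]
    have := density hloc hd0 hd1 hpar.1 hpar.2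
    refine ⟨this.1.trans (le_of_eq ?_), le_trans ?_ this.2⟩
    · rw [div_div, mul_comm]
    · linarith
  · exfalso
    obtain ⟨E, hE⟩ := heig 0
    exact no_junk (by linarith) hE (hpar.2 0) (junk_freq hb)
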